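/- arXiv:2508.03880 — 4 statements merged into one kernel-verified Lean document; each statement's English description precedes it below -/
import Mathlib

section
/- Let Ω ⊂ ℝⁿ be an open set, let k ∈ ℕ with k > 1, and let 1 ≤ p < ∞ satisfy (k−1)p < n. Suppose f ∈ W^{k,p}_loc(Ω). Then there exists a sequence of closed sets {C_l}_{l=1}^∞ with C_l ⊂ C_{l+1} ⊂ Ω for every l, such that for each l the restriction of the precise representative f* to C_l is Lipschitz continuous outside a subset of C_l of R_{k−1,p}-capacity zero, and R_{k−1,p}(Ω \ ⋃_{l=1}^∞ C_l) = 0. -/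
open MeasureTheory Filter Metric Set
open scoped ENNReal NNReal Topology

noncomputable section

abbrev Euc (n : ℕ) := EuclideanSpace ℝ (Fin n)

/-- Degree of a multi-index. -/
def mdeg {n : ℕ} (α : Fin n → ℕ) : ℕ := ∑ i, α i

/-- Iterated partial derivative along a list of coordinate directions. -/
def listDeriv {n : ℕ} : List (Fin n) → (Euc n → ℝ) → (Euc n → ℝ)
  | [], η => η
  | i :: l, η => fun x => fderiv ℝ (listDeriv l η) x (EuclideanSpace.single i 1)

/-- The partial derivative `D^α η` associated to a multi-index `α`. -/
def mderiv {n : ℕ} (α : Fin n → ℕ) (η : Euc n → ℝ) : Euc n → ℝ :=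
  listDeriv ((List.finRange n).flatMap fun i => List.replicate (α i) i) η

/-- `g` is the weak derivative `D^α f` on `ℝⁿ`. -/
def IsWeakDeriv {n : ℕ} (α : Fin n → ℕ) (f g : Euc n → ℝ) : Prop :=
  ∀ η : Euc n → ℝ, ContDiff ℝ (⊤ : ℕ∞) η → HasCompactSupport η →
    ∫ x, f x * mderiv α η x = (-1 : ℝ) ^ mdeg α * ∫ x, g x * η x

/-- `g` is the weak derivative `D^α f` on an open set `U`. -/
def IsWeakDerivOn {n : ℕ} (U : Set (Euc n)) (α : Fin n → ℕ) (f g : Euc n → ℝ) : Prop :=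
  ∀ η : Euc n → ℝ, ContDiff ℝ (⊤ : ℕ∞) η → HasCompactSupport η → tsupport η ⊆ U →
    ∫ x in U, f x * mderiv α η x = (-1 : ℝ) ^ mdeg α * ∫ x in U, g x * η x

/-- Membership in the Sobolev space `W^{k,p}(U)`. -/
def MemSobolevOn {n : ℕ} (k : ℕ) (p : ℝ) (U : Set (Euc n)) (f : Euc n → ℝ) : Prop :=
  MemLp f (ENNReal.ofReal p) (volume.restrict U) ∧
  ∀ α : Fin n → ℕ, mdeg α ≤ k → ∃ g : Euc n → ℝ,
    MemLp g (ENNReal.ofReal p) (volume.restrict U) ∧ IsWeakDerivOn U α f g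

/-- Membership in the local Sobolev space `W^{k,p}_loc(Ω)`. -/
def MemSobolevLoc {n : ℕ} (k : ℕ) (p : ℝ) (Ω : Set (Euc n)) (f : Euc n → ℝ) : Prop :=
  ∀ U : Set (Euc n), IsOpen U → Bornology.IsBounded U → closure U ⊆ Ω →
    MemSobolevOn k p U f

/-- The normalizing constant `γ(a)` of the Riesz kernel. -/
def rieszGamma (n : ℕ) (a : ℝ) : ℝ :=
  Real.pi ^ ((n : ℝ) / 2) * (2 : ℝ) ^ a * Real.Gamma (a / 2) / Real.Gamma (((n : ℝ) - a) / 2)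

/-- The Riesz potential `I_a * g`, valued in `ℝ≥0∞`. -/
def rieszPot {n : ℕ} (a : ℝ) (g : Euc n → ℝ) (x : Euc n) : ℝ≥0∞ :=
  (ENNReal.ofReal (rieszGamma n a))⁻¹ *
    ∫⁻ y, ENNReal.ofReal (g y) * ENNReal.ofReal (‖x - y‖ ^ (a - (n : ℝ)))

/-- The Riesz capacity `R_{a,p}`. -/
def rieszCap {n : ℕ} (a p : ℝ) (S : Set (Euc n)) : ℝ≥0∞ :=
  ⨅ (g : Euc n → ℝ) (_ : MemLp g (ENNReal.ofReal p) volume ∧ (∀ x, 0 ≤ g x) ∧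
      ∀ x ∈ S, 1 ≤ rieszPot a g x),
    ∫⁻ y, ENNReal.ofReal (g y) ^ p

/-- The precise representative of a (vector-valued) locally integrable function. -/
def preciseRepV {n : ℕ} {F : Type*} [NormedAddCommGroup F] [NormedSpace ℝ F]
    (f : Euc n → F) (x : Euc n) : F :=
  letI := Classical.propDecidable
  if h : ∃ L : F, Tendsto (fun ε : ℝ => ⨍ y in ball x ε, f y) (𝓝[>] (0:ℝ)) (𝓝 L)
  then h.choose else 0

/-- The precise representative of a real-valued locally integrable function. -/
def preciseRep {n : ℕ} (f : Euc n → ℝ) (x : Euc n) : ℝ := preciseRepV f x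

/-- The Hardy–Littlewood maximal function (of an `ℝ≥0∞`-valued integrand). -/
def maxFn {n : ℕ} (g : Euc n → ℝ≥0∞) (x : Euc n) : ℝ≥0∞ :=
  ⨆ (r : ℝ) (_ : 0 < r), (volume (ball x r))⁻¹ * ∫⁻ y in ball x r, g y

/-- `x` is a density point of `S`. -/
def DensityPt {n : ℕ} (S : Set (Euc n)) (x : Euc n) : Prop :=
  Tendsto (fun r : ℝ => volume (S ∩ ball x r) / volume (ball x r)) (𝓝[>] (0:ℝ)) (𝓝 1)

/-- `L` is the approximate differential of `φ` at `x₀`, relative to the domain `A`. -/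
def HasApproxDerivAt {n : ℕ} (A : Set (Euc n)) (φ : Euc n → Euc n)
    (L : Euc n →L[ℝ] Euc n) (x₀ : Euc n) : Prop :=
  DensityPt A x₀ ∧ ∀ ε : ℝ, 0 < ε →
    DensityPt {x | x ∈ A ∧ ‖φ x - φ x₀ - L (x - x₀)‖ ≤ ε * ‖x - x₀‖} x₀

end

open MeasureTheory Filter Metric Set
open scoped ENNReal NNReal Topology

/-- Riesz kernel without constant. -/
noncomputable def kr {n : ℕ} (a : ℝ) (z : Euc n) : ℝ≥0∞ := ‖z‖ₑ ^ (a - n)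

/-- Potential. -/
noncomputable def pot {n : ℕ} (a : ℝ) (H : Euc n → ℝ≥0∞) (x : Euc n) : ℝ≥0∞ :=
  ∫⁻ y, H y * kr a (x - y)

lemma kr_measurable {n : ℕ} (a : ℝ) : Measurable (kr a : Euc n → ℝ≥0∞) := by
  unfold kr; fun_prop

lemma kr_continuous {n : ℕ} (a : ℝ) : Continuous (kr a : Euc n → ℝ≥0∞) := by
  unfold kr
  exact ENNReal.continuous_rpow_const.comp continuous_enorm

lemma kr_neg {n : ℕ} (a : ℝ) (z : Euc n) : kr a (-z) = kr a z := by simp [kr]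

lemma kr_sub_comm {n : ℕ} (a : ℝ) (z w : Euc n) : kr a (z - w) = kr a (w - z) := by
  rw [← kr_neg, neg_sub]

lemma kr_smul {n : ℕ} (a : ℝ) (t : ℝ) (ht : 0 < t) (z : Euc n) :
    kr a (t • z) = ENNReal.ofReal t ^ (a - n) * kr a z := by
  unfold kr
  rw [enorm_smul, ENNReal.mul_rpow_of_ne_top (by simp) (by simp), Real.enorm_of_nonneg ht.le]

lemma rpow_anti {x y : ℝ≥0∞} (h : x ≤ y) {b : ℝ} (hb : b ≤ 0) : y ^ b ≤ x ^ b := by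
  have := ENNReal.rpow_le_rpow h (neg_nonneg.2 hb)
  rw [ENNReal.rpow_neg, ENNReal.rpow_neg] at this
  exact ENNReal.inv_le_inv.1 this

lemma kr_anti {n : ℕ} {a : ℝ} (ha : a ≤ n) {z w : Euc n} (h : ‖z‖ ≤ ‖w‖) :
    kr a w ≤ kr a z := by
  unfold kr
  exact rpow_anti (enorm_le_iff_norm_le.2 h) (by linarith)

lemma lint_smul {n : ℕ} (g : Euc n → ℝ≥0∞) {r : ℝ} (hr : 0 < r) :
    ∫⁻ z, g (r • z) = (ENNReal.ofReal r ^ n)⁻¹ * ∫⁻ z, g z := by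
  have h1 := Measure.map_addHaar_smul (volume : Measure (Euc n)) hr.ne'
  have h2 : MeasurableEmbedding (fun z : Euc n => r • z) :=
    (Homeomorph.smulOfNeZero r hr.ne').measurableEmbedding
  rw [← h2.lintegral_map g, h1, lintegral_smul_measure]
  congr 1
  rw [abs_of_pos (by positivity), ENNReal.ofReal_inv_of_pos (by positivity), ENNReal.ofReal_pow hr.le]
  simp

lemma kr_int {n : ℕ} (hn : 1 ≤ n) {a : ℝ} (ha : 0 < a) (R : ℝ) :
    ∫⁻ z in ball (0 : Euc n) R, kr a z < ⊤ := by
  have h := integrableOn_ball_of_norm_le_rpow (E := Euc n) (μ := volume) (C := 1) (α := n - a) (r := R)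
    (f := fun z : Euc n => ‖z‖ ^ (a - n)) (by simpa using hn) (by simp [ha])
    (by
      refine Eventually.of_forall fun x => ?_
      rw [Real.norm_of_nonneg (by positivity)]; simp)
    (by
      apply Measurable.aestronglyMeasurable
      fun_prop)
  have h2 := h.2
  refine lt_of_eq_of_lt ?_ h2
  have : Nonempty (Fin n) := ⟨⟨0, by omega⟩⟩
  have h0 : ∀ᵐ z : Euc n ∂(volume.restrict (ball 0 R)), z ≠ 0 := by
    apply ae_restrict_of_ae
    have : Nontrivial (Euc n) := by infer_instance
    exact Measure.ae_ne volume 0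
  refine lintegral_congr_ae ?_
  filter_upwards [h0] with z hz
  unfold kr
  rw [Real.enorm_of_nonneg (by positivity), ← ofReal_norm, ENNReal.ofReal_rpow_of_pos (by simpa using hz)]

lemma kr_A1 {n : ℕ} (hn : 1 ≤ n) {a : ℝ} (ha : 0 < a) (han : a < n) :
    ∃ A : ℝ≥0, ∀ (x : Euc n) (s : ℝ), 0 ≤ s →
      ∫⁻ z in ball (0 : Euc n) 1, kr a (x + s • z) ≤ A * kr a x := by
  set V := volume (ball (0 : Euc n) 1)
  set J := ∫⁻ z in ball (0 : Euc n) 3, kr a z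
  set c : ℝ≥0∞ := ENNReal.ofReal (1/2) ^ (a - n)
  have hc : c ≠ ⊤ := by
    simp only [c]
    rw [ENNReal.ofReal_rpow_of_pos (by norm_num)]; simp
  have hJ : J ≠ ⊤ := (kr_int hn ha 3).ne
  have hV : V ≠ ⊤ := measure_ball_lt_top.ne
  refine ⟨(1 + V * c + c * J).toNNReal, fun x s hs => ?_⟩
  rw [ENNReal.coe_toNNReal (by finiteness)]
  by_cases hx : x = 0
  · have : kr a x = ⊤ := by
      simp only [kr, hx, enorm_zero]
      exact ENNReal.zero_rpow_of_neg (by linarith)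
    rw [this, ENNReal.mul_top]
    · exact le_top
    · simp
  by_cases h : 2 * s ≤ ‖x‖
  · calc ∫⁻ z in ball (0 : Euc n) 1, kr a (x + s • z) ≤ ∫⁻ z in ball (0 : Euc n) 1, c * kr a x := by
          apply setLIntegral_mono' measurableSet_ball
          intro z hz
          rw [← kr_smul a _ (by norm_num)]
          apply kr_anti han.le
          have h1 : ‖s • z‖ ≤ s := by
            rw [norm_smul, Real.norm_of_nonneg hs]
            have : ‖z‖ < 1 := by simpa using hz
            nlinarith
          have h2 : ‖x‖ ≤ ‖x + s • z‖ + ‖s • z‖ := by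
            simpa using norm_sub_le (x + s • z) (s • z)
          rw [norm_smul, Real.norm_of_nonneg (by norm_num)]
          linarith
      _ = V * c * kr a x := by
          rw [setLIntegral_const]; ring
      _ ≤ _ := by
          gcongr
          exact le_add_right le_add_self
  · push Not at h
    have hx' : 0 < ‖x‖ := by simpa using hx
    have hs' : 0 < s := by linarith
    calc ∫⁻ z in ball (0 : Euc n) 1, kr a (x + s • z)
        = ∫⁻ z in ball (0 : Euc n) 1, ENNReal.ofReal s ^ (a - n) * kr a (s⁻¹ • x + z) := by
          congr with z
          rw [← kr_smul a s hs', smul_add, smul_inv_smul₀ hs'.ne']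
      _ = ENNReal.ofReal s ^ (a - n) * ∫⁻ z in ball (0 : Euc n) 1, kr a (s⁻¹ • x + z) := by
          rw [lintegral_const_mul]
          exact (kr_measurable a).comp (by fun_prop)
      _ ≤ (c * kr a x) * J := by
          gcongr
          · rw [← kr_smul a _ (by norm_num)]
            unfold kr
            apply rpow_anti _ (by linarith)
            rw [enorm_smul, Real.enorm_of_nonneg (by norm_num), ← ofReal_norm,
              ← ENNReal.ofReal_mul (by norm_num)]
            apply ENNReal.ofReal_le_ofReal; linarith
          · rw [← lintegral_indicator measurableSet_ball]
            simp only [J]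
            rw [← lintegral_indicator measurableSet_ball, ← lintegral_add_left_eq_self ((ball (0 : Euc n) 3).indicator (kr a)) (s⁻¹ • x)]
            apply lintegral_mono
            intro z
            simp only [indicator]
            split_ifs with h1 h2
            · exact le_rfl
            · exfalso; apply h2
              have : ‖z‖ < 1 := by simpa using h1
              have h3 : ‖s⁻¹ • x‖ < 2 := by
                rw [norm_smul, Real.norm_of_nonneg (by positivity), inv_mul_lt_iff₀ hs']; linarith
              have := norm_add_le (s⁻¹ • x) z
              simp only [mem_ball_zero_iff]; linarith
            · exact zero_le
            · exact le_rfl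
      _ = (c * J) * kr a x := by ring
      _ ≤ _ := by
          gcongr
          exact le_add_self

lemma pot_measurable {n : ℕ} (a : ℝ) {H : Euc n → ℝ≥0∞} (hH : Measurable H) :
    Measurable (pot a H) := by
  unfold pot
  apply Measurable.lintegral_prod_right' (f := fun q : Euc n × Euc n => H q.2 * kr a (q.1 - q.2))
  exact (hH.comp measurable_snd).mul ((kr_measurable a).comp (by fun_prop))

lemma pot_A1 {n : ℕ} (hn : 1 ≤ n) {a : ℝ} (ha : 0 < a) (han : a < n) :
    ∃ A : ℝ≥0, ∀ (H : Euc n → ℝ≥0∞), Measurable H → ∀ (x : Euc n) (s : ℝ), 0 ≤ s →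
      ∫⁻ z in ball (0 : Euc n) 1, pot a H (x + s • z) ≤ A * pot a H x := by
  obtain ⟨A, hA⟩ := kr_A1 hn ha han
  refine ⟨A, fun H hH x s hs => ?_⟩
  unfold pot
  rw [lintegral_lintegral_swap]
  · rw [← lintegral_const_mul' _ _ (by simp)]
    apply lintegral_mono
    intro y
    simp only
    rw [lintegral_const_mul]
    · calc _ = H y * ∫⁻ z in ball (0 : Euc n) 1, kr a ((x - y) + s • z) := by
            congr! 3 with z
            abel_nf
        _ ≤ H y * (A * kr a (x - y)) := by
            gcongr; exact hA _ _ hs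
        _ = _ := by ring
    · exact (kr_measurable a).comp (by fun_prop)
  · apply Measurable.aemeasurable
    exact (hH.comp measurable_snd).mul ((kr_measurable a).comp (by fun_prop))

lemma ball_lint {n : ℕ} (g : Euc n → ℝ≥0∞) (x : Euc n) {r : ℝ} (hr : 0 < r) :
    ∫⁻ y in ball x r, g y = ENNReal.ofReal r ^ n * ∫⁻ z in ball (0 : Euc n) 1, g (x + r • z) := by
  have h := lint_smul (fun z => (ball x r).indicator g (x + z)) hr
  rw [lintegral_add_left_eq_self (fun z => (ball x r).indicator g z) x,
    lintegral_indicator measurableSet_ball] at h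
  rw [← lintegral_indicator measurableSet_ball (fun z => g (x + r • z))]
  have h2 : ∀ z, (ball (0 : Euc n) 1).indicator (fun z => g (x + r • z)) z
      = (ball x r).indicator g (x + r • z) := by
    intro z
    have : z ∈ ball (0 : Euc n) 1 ↔ x + r • z ∈ ball x r := by
      simp [norm_smul, abs_of_pos hr, hr]
    by_cases hz : z ∈ ball (0 : Euc n) 1
    · rw [indicator_of_mem hz, indicator_of_mem (this.1 hz)]
    · rw [indicator_of_notMem hz, indicator_of_notMem (fun h => hz (this.2 h))]
  rw [lintegral_congr h2, h, ← mul_assoc, ENNReal.mul_inv_cancel, one_mul]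
  · simp [hr]
  · finiteness

lemma pot_avg {n : ℕ} (hn : 1 ≤ n) {a : ℝ} (ha : 0 < a) (han : a < n) :
    ∃ A : ℝ≥0, ∀ (H : Euc n → ℝ≥0∞), Measurable H → ∀ (x : Euc n) (r : ℝ), 0 < r →
      ∫⁻ y in ball x r, pot a H y ≤ A * volume (ball x r) * pot a H x := by
  obtain ⟨A, hA⟩ := pot_A1 hn ha han
  have hV : volume (ball (0 : Euc n) 1) ≠ ⊤ := measure_ball_lt_top.ne
  have hV0 : volume (ball (0 : Euc n) 1) ≠ 0 := (measure_ball_pos _ _ one_pos).ne'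
  refine ⟨(A * (volume (ball (0 : Euc n) 1))⁻¹).toNNReal, fun H hH x r hr => ?_⟩
  rw [ENNReal.coe_toNNReal (by finiteness), ball_lint _ _ hr]
  have : volume (ball x r) = ENNReal.ofReal r ^ n * volume (ball (0 : Euc n) 1) := by
    have := ball_lint (fun _ : Euc n => 1) x hr
    simpa using this
  rw [this]
  calc _ ≤ ENNReal.ofReal r ^ n * (A * pot a H x) := by
        gcongr; exact hA H hH x r hr.le
    _ = ENNReal.ofReal r ^ n * A * ((volume (ball (0 : Euc n) 1))⁻¹ * volume (ball (0 : Euc n) 1)) * pot a H x := by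
        rw [ENNReal.inv_mul_cancel hV0 hV]; ring
    _ = _ := by ring

/-- mollification -/
lemma pot_moll {n : ℕ} (hn : 1 ≤ n) {a : ℝ} (ha : 0 < a) (han : a < n) :
    ∃ A : ℝ≥0, ∀ (H : Euc n → ℝ≥0∞), Measurable H → ∀ (x : Euc n) (s : ℝ), 0 ≤ s →
      pot a (fun y => ∫⁻ z in ball (0 : Euc n) 1, H (y + s • z)) x ≤ A * pot a H x := by
  obtain ⟨A, hA⟩ := pot_A1 hn ha han
  refine ⟨A, fun H hH x s hs => le_trans (le_of_eq ?_) (hA H hH x s hs)⟩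
  unfold pot
  have hm : Measurable fun q : Euc n × Euc n => H (q.1 + s • q.2) := hH.comp (by fun_prop)
  calc _ = ∫⁻ y, ∫⁻ z in ball (0 : Euc n) 1, H (y + s • z) * kr a (x - y) := by
        congr with y
        rw [lintegral_mul_const]
        exact hH.comp (by fun_prop)
    _ = ∫⁻ z in ball (0 : Euc n) 1, ∫⁻ y, H (y + s • z) * kr a (x - y) := by
        rw [lintegral_lintegral_swap]
        exact (hm.mul ((kr_measurable a).comp (by fun_prop))).aemeasurable
    _ = _ := by
        congr with z
        rw [← lintegral_add_right_eq_self (fun y => H y * kr a (x + s • z - y)) (s • z)]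
        congr with y
        congr 2
        abel

lemma pot_closed {n : ℕ} (a : ℝ) {H : Euc n → ℝ≥0∞} (hH : Measurable H) (hHf : ∀ y, H y ≠ ⊤)
    (c : ℝ≥0∞) :
    IsClosed {x | pot a H x ≤ c} := by
  apply IsSeqClosed.isClosed
  intro u x hu hx
  simp only [mem_ofPred_eq, pot] at hu ⊢
  calc ∫⁻ y, H y * kr a (x - y) = ∫⁻ y, liminf (fun j => H y * kr a (u j - y)) atTop := by
          apply lintegral_congr_ae
          refine Eventually.of_forall fun y => ?_
          have hy := hHf y
          symm
          apply Tendsto.liminf_eq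
          apply ENNReal.Tendsto.const_mul _ (Or.inr hy)
          exact ((kr_continuous a).tendsto _).comp (hx.sub_const y)
      _ ≤ liminf (fun j => ∫⁻ y, H y * kr a (u j - y)) atTop := by
          apply lintegral_liminf_le
          intro j
          exact hH.mul ((kr_measurable a).comp (by fun_prop))
      _ ≤ c := by
          apply liminf_le_of_le
          · isBoundedDefault
          · intro b hb
            obtain ⟨j, hj⟩ := hb.exists
            exact hj.trans (hu j)

open MeasureTheory Filter Metric Set
open scoped ENNReal NNReal Topology

lemma pot_eq {n : ℕ} (a : ℝ) (H : Euc n → ℝ≥0∞) (x : Euc n) :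
    pot a H x = ∫⁻ w, H (x + w) * kr a w := by
  unfold pot
  rw [← lintegral_add_left_eq_self _ x]
  congr with w
  rw [← kr_neg]; congr 2; abel

lemma ray {n : ℕ} {G : Type*} [NormedAddCommGroup G] [NormedSpace ℝ G] {F : Euc n → G}
    (hF : ContDiff ℝ 1 F) (hc : HasCompactSupport F) (x w : Euc n) (hw : w ≠ 0) (s : ℝ) :
    ‖F (x + s • w)‖ₑ ≤ ∫⁻ t in Ioi s, ‖fderiv ℝ F (x + t • w)‖ₑ * ‖w‖ₑ := by
  have hg : ContDiff ℝ 1 (fun t : ℝ => F (x - t • w)) := by fun_prop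
  have hgc : HasCompactSupport (fun t : ℝ => F (x - t • w)) := by
    apply hc.comp_isClosedEmbedding (g := fun t : ℝ => x - t • w)
    have h1 := isClosedEmbedding_smul_left (𝕜 := ℝ) hw
    exact (Homeomorph.subLeft x).isClosedEmbedding.comp h1
  have h := hgc.enorm_le_lintegral_Ici_deriv hg (-s)
  simp only [neg_smul, sub_neg_eq_add] at h
  refine h.trans ?_
  rw [← lintegral_indicator measurableSet_Iic, ← lintegral_neg_eq_self,
    restrict_Ioi_eq_restrict_Ici, ← lintegral_indicator measurableSet_Ici]
  apply lintegral_mono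
  intro t
  simp only [indicator, mem_Iic, neg_le_neg_iff, mem_Ici]
  split_ifs
  · have : HasDerivAt (fun t : ℝ => F (x - t • w)) (fderiv ℝ F (x - (-t) • w) (-w)) (-t) := by
      have h1 : HasFDerivAt F (fderiv ℝ F (x - (-t) • w)) (x - (-t) • w) :=
        (hF.differentiable one_ne_zero _).hasFDerivAt
      have h2 : HasDerivAt (fun t : ℝ => x - t • w) (-w) (-t) := by
        simpa using ((hasDerivAt_id (-t)).smul_const w).const_sub x
      exact h1.comp_hasDerivAt _ h2
    rw [this.deriv]
    refine (ContinuousLinearMap.le_opNorm_enorm _ _).trans ?_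
    simp
  · exact le_rfl

lemma rpow_tail {c b : ℝ} (hc : 0 < c) (hb : 1 < b) :
    ∫⁻ t in Ioi c, ENNReal.ofReal t ^ (-b) = ENNReal.ofReal (c ^ (1 - b) / (b - 1)) := by
  have h1 := integral_Ioi_rpow_of_lt (a := -b) (by linarith) hc
  have h2 := integrableOn_Ioi_rpow_of_lt (a := -b) (by linarith) hc
  have h3 : ∫ t in Ioi c, t ^ (-b) = c ^ (1 - b) / (b - 1) := by
    rw [h1, show -b + 1 = -(b - 1) by ring, show 1 - b = - (b - 1) by ring]
    field_simp
  rw [← h3, ofReal_integral_eq_lintegral_ofReal h2]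
  · apply setLIntegral_congr_fun measurableSet_Ioi
    intro t ht
    exact ENNReal.ofReal_rpow_of_pos (hc.trans ht)
  · filter_upwards [self_mem_ae_restrict measurableSet_Ioi] with t ht
    exact Real.rpow_nonneg (hc.trans ht).le _

lemma ae_ne0 {n : ℕ} (hn : 1 ≤ n) : ∀ᵐ z : Euc n, z ≠ 0 := by
  have : Nonempty (Fin n) := ⟨⟨0, by omega⟩⟩
  have : Nontrivial (Euc n) := by infer_instance
  exact Measure.ae_ne volume 0

lemma meas_fd {n : ℕ} {G : Type*} [NormedAddCommGroup G] [NormedSpace ℝ G] {F : Euc n → G}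
    (hF : ContDiff ℝ 1 F) : Measurable (fun x => ‖fderiv ℝ F x‖ₑ) :=
  ((hF.continuous_fderiv one_ne_zero).enorm).measurable

lemma kr_succ {n : ℕ} (a : ℝ) {w : Euc n} (hw : w ≠ 0) : kr a w * ‖w‖ₑ = kr (a + 1) w := by
  unfold kr
  rw [show a + 1 - (n : ℝ) = (a - n) + 1 by ring, ENNReal.rpow_add _ _ (by simpa using hw) (by simp)]
  simp

lemma ofReal_rpow_cancel {t : ℝ} (ht : 0 < t) (b : ℝ) (n : ℕ) :
    ENNReal.ofReal t ^ (-b) * (ENNReal.ofReal t ^ n)⁻¹ = ENNReal.ofReal t ^ (-(b + n)) := by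
  rw [← ENNReal.rpow_natCast, ← ENNReal.rpow_neg, ← ENNReal.rpow_add _ _ (by simpa using ht) (by simp)]
  congr 1; ring

lemma hardy {n : ℕ} (hn : 1 ≤ n) {a : ℝ} (ha : 0 < a) : ∃ C : ℝ≥0,
    ∀ (G : Type) [NormedAddCommGroup G] [NormedSpace ℝ G] (F : Euc n → G),
    ContDiff ℝ 1 F → HasCompactSupport F → ∀ x,
    pot a (fun y => ‖F y‖ₑ) x ≤ C * pot (a + 1) (fun y => ‖fderiv ℝ F y‖ₑ) x := by
  have hT := rpow_tail one_pos (b := a + 1) (by linarith)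
  refine ⟨((1 : ℝ) ^ (1 - (a + 1)) / ((a + 1) - 1)).toNNReal, ?_⟩
  intro G _ _ F hF hc x
  rw [pot_eq, pot_eq]
  change _ ≤ ENNReal.ofReal _ * _
  rw [← hT]
  have hm := meas_fd hF
  calc ∫⁻ w, ‖F (x + w)‖ₑ * kr a w
      ≤ ∫⁻ w, ∫⁻ t in Ioi (1 : ℝ), ‖fderiv ℝ F (x + t • w)‖ₑ * kr (a + 1) w := by
        apply lintegral_mono_ae
        filter_upwards [ae_ne0 hn] with w hw
        have := ray hF hc x w hw 1
        rw [one_smul] at this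
        refine (mul_le_mul_left this _).trans (le_of_eq ?_)
        rw [← kr_succ a hw, ← lintegral_mul_const]
        · congr with t
          ring
        · exact (hm.comp (by fun_prop)).mul_const _
    _ = ∫⁻ t in Ioi (1 : ℝ), ∫⁻ w, ‖fderiv ℝ F (x + t • w)‖ₑ * kr (a + 1) w := by
        rw [lintegral_lintegral_swap]
        apply Measurable.aemeasurable
        exact (hm.comp (g := fun x => ‖fderiv ℝ F x‖ₑ) (f := fun q : Euc n × ℝ => x + q.2 • q.1)
          (by fun_prop)).mul ((kr_measurable _).comp measurable_fst)
    _ = ∫⁻ t in Ioi (1 : ℝ), ENNReal.ofReal t ^ (-(a + 1)) *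
          ∫⁻ w, ‖fderiv ℝ F (x + w)‖ₑ * kr (a + 1) w := by
        apply setLIntegral_congr_fun measurableSet_Ioi
        intro t ht
        have ht0 : (0 : ℝ) < t := zero_lt_one.trans ht
        have h1 := lint_smul (fun w => ‖fderiv ℝ F (x + w)‖ₑ * kr (a + 1) w) ht0
        simp only
        have h2 : ∀ w, ‖fderiv ℝ F (x + t • w)‖ₑ * kr (a + 1) w =
            ENNReal.ofReal t ^ (-(a + 1 - n)) *
              (‖fderiv ℝ F (x + t • w)‖ₑ * kr (a + 1) (t • w)) := by
          intro w
          rw [kr_smul _ _ ht0]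
          have : ENNReal.ofReal t ^ (-(a + 1 - n)) * ENNReal.ofReal t ^ (a + 1 - n) = 1 := by
            rw [← ENNReal.rpow_add _ _ (by simpa using ht0) (by simp)]; simp
          calc _ = 1 * (‖fderiv ℝ F (x + t • w)‖ₑ * kr (a + 1) w) := by rw [one_mul]
            _ = _ := by rw [← this]; ring
        rw [lintegral_congr h2, lintegral_const_mul, h1, ← mul_assoc, ofReal_rpow_cancel ht0]
        · congr 3; ring
        · exact (hm.comp (by fun_prop)).mul ((kr_measurable _).comp (by fun_prop))
    _ = _ := by
        rw [lintegral_mul_const]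
        fun_prop

lemma hardy0 {n : ℕ} (hn : 1 ≤ n) : ∃ C : ℝ≥0,
    ∀ (G : Type) [NormedAddCommGroup G] [NormedSpace ℝ G] (F : Euc n → G),
    ContDiff ℝ 1 F → HasCompactSupport F → ∀ x,
    ‖F x‖ₑ ≤ C * pot 1 (fun y => ‖fderiv ℝ F y‖ₑ) x := by
  have hn' : (1 : ℝ) ≤ n := by exact_mod_cast hn
  set V := volume (ball (0 : Euc n) 1) with hVdef
  have hV : V ≠ ⊤ := measure_ball_lt_top.ne
  have hV0 : V ≠ 0 := (measure_ball_pos _ _ one_pos).ne'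
  refine ⟨(V⁻¹).toNNReal, ?_⟩
  intro G _ _ F hF hc x
  rw [ENNReal.coe_toNNReal (by finiteness)]
  suffices h : V * ‖F x‖ₑ ≤ pot 1 (fun y => ‖fderiv ℝ F y‖ₑ) x by
    calc ‖F x‖ₑ = V⁻¹ * (V * ‖F x‖ₑ) := by rw [← mul_assoc, ENNReal.inv_mul_cancel hV0 hV, one_mul]
      _ ≤ _ := by gcongr
  have hm := meas_fd hF
  rw [pot_eq]
  calc V * ‖F x‖ₑ = ∫⁻ w in ball (0 : Euc n) 1, ‖F x‖ₑ := by rw [setLIntegral_const, mul_comm]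
    _ = ∫⁻ w, (ball (0 : Euc n) 1).indicator (fun _ => ‖F x‖ₑ) w := by
        rw [lintegral_indicator measurableSet_ball]
    _ ≤ ∫⁻ w, ∫⁻ t in Ioi (0 : ℝ), (ball (0 : Euc n) 1).indicator
          (fun w => ‖fderiv ℝ F (x + t • w)‖ₑ * ‖w‖ₑ) w := by
        apply lintegral_mono_ae
        filter_upwards [ae_ne0 hn] with w hw
        by_cases hwb : w ∈ ball (0 : Euc n) 1
        · simp only [indicator_of_mem hwb]
          have := ray hF hc x w hw 0
          rwa [zero_smul, add_zero] at this
        · simp [indicator_of_notMem hwb]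
    _ = ∫⁻ t in Ioi (0 : ℝ), ∫⁻ w, (ball (0 : Euc n) 1).indicator
          (fun w => ‖fderiv ℝ F (x + t • w)‖ₑ * ‖w‖ₑ) w := by
        rw [lintegral_lintegral_swap]
        apply Measurable.aemeasurable
        have : Measurable (fun q : Euc n × ℝ => ‖fderiv ℝ F (x + q.2 • q.1)‖ₑ * ‖q.1‖ₑ) :=
          (hm.comp (g := fun x => ‖fderiv ℝ F x‖ₑ) (f := fun q : Euc n × ℝ => x + q.2 • q.1)
          (by fun_prop)).mul (by fun_prop)
        exact this.indicator (s := Prod.fst ⁻¹' ball (0 : Euc n) 1)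
          (measurable_fst measurableSet_ball)
    _ = ∫⁻ t in Ioi (0 : ℝ), ∫⁻ w, (Ioi ‖w‖).indicator (fun t => ENNReal.ofReal t ^ (-((1 : ℝ) + n))) t
          * (‖fderiv ℝ F (x + w)‖ₑ * ‖w‖ₑ) := by
        apply setLIntegral_congr_fun measurableSet_Ioi
        intro t ht
        have ht0 : (0 : ℝ) < t := ht
        simp only
        have h1 := lint_smul (fun w => (Ioi ‖w‖).indicator (fun t => ENNReal.ofReal t ^ (-(1:ℝ))) t
          * (‖fderiv ℝ F (x + w)‖ₑ * ‖w‖ₑ)) ht0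
        have h2 : ∀ w : Euc n, (ball (0 : Euc n) 1).indicator
            (fun w => ‖fderiv ℝ F (x + t • w)‖ₑ * ‖w‖ₑ) w =
            (Ioi ‖t • w‖).indicator (fun t => ENNReal.ofReal t ^ (-(1:ℝ))) t
          * (‖fderiv ℝ F (x + t • w)‖ₑ * ‖t • w‖ₑ) := by
          intro w
          have : w ∈ ball (0 : Euc n) 1 ↔ t ∈ Ioi ‖t • w‖ := by
            simp [norm_smul, abs_of_pos ht0, ht0]
          by_cases hw : w ∈ ball (0 : Euc n) 1
          · rw [indicator_of_mem hw, indicator_of_mem (this.1 hw), enorm_smul,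
              Real.enorm_of_nonneg ht0.le, ENNReal.rpow_neg_one]
            have h3 : (ENNReal.ofReal t)⁻¹ * ENNReal.ofReal t = 1 :=
              ENNReal.inv_mul_cancel (by simpa using ht0) (by simp)
            calc _ = 1 * (‖fderiv ℝ F (x + t • w)‖ₑ * ‖w‖ₑ) := by rw [one_mul]
              _ = _ := by rw [← h3]; ring
          · rw [indicator_of_notMem hw, indicator_of_notMem (fun h => hw (this.2 h)), zero_mul]
        rw [lintegral_congr h2, h1, ← lintegral_const_mul' _ _ (by simp [ht0])]
        congr with w
        rw [← mul_assoc]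
        congr 1
        by_cases hw : t ∈ Ioi ‖w‖
        · rw [indicator_of_mem hw, indicator_of_mem hw, mul_comm, ofReal_rpow_cancel ht0]
        · rw [indicator_of_notMem hw, indicator_of_notMem hw, mul_zero]
    _ = ∫⁻ w, ∫⁻ t in Ioi (0 : ℝ), (Ioi ‖w‖).indicator (fun t => ENNReal.ofReal t ^ (-((1 : ℝ) + n))) t
          * (‖fderiv ℝ F (x + w)‖ₑ * ‖w‖ₑ) := by
        rw [lintegral_lintegral_swap]
        apply Measurable.aemeasurable
        apply Measurable.mul
        · have : Measurable (fun q : ℝ × Euc n => ENNReal.ofReal q.1 ^ (-((1 : ℝ) + n))) := by fun_prop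
          exact this.indicator (s := {q : ℝ × Euc n | ‖q.2‖ < q.1})
            (measurableSet_lt (by fun_prop) (by fun_prop))
        · exact (hm.comp (g := fun x => ‖fderiv ℝ F x‖ₑ) (f := fun q : ℝ × Euc n => x + q.2)
            (by fun_prop)).mul (by fun_prop)
    _ ≤ _ := by
        apply lintegral_mono_ae
        filter_upwards [ae_ne0 hn] with w hw
        have hw' : 0 < ‖w‖ := by simpa using hw
        rw [lintegral_mul_const]
        · have h4 : ∫⁻ t in Ioi (0 : ℝ), (Ioi ‖w‖).indicator
              (fun t => ENNReal.ofReal t ^ (-((1 : ℝ) + n))) t ≤ kr 0 w := by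
            refine (setLIntegral_le_lintegral _ _).trans ?_
            rw [lintegral_indicator measurableSet_Ioi, rpow_tail hw' (by linarith)]
            unfold kr
            rw [← ofReal_norm, ENNReal.ofReal_rpow_of_pos hw']
            apply ENNReal.ofReal_le_ofReal
            rw [show (1 : ℝ) - (1 + n) = 0 - n by ring]
            apply div_le_self (by positivity); linarith
          refine (mul_le_mul_left h4 _).trans (le_of_eq ?_)
          have := kr_succ 0 hw
          rw [zero_add] at this
          rw [← this]; ring
        · exact Measurable.indicator (by fun_prop) measurableSet_Ioi

lemma grad_pot {n : ℕ} (hn : 1 ≤ n) (m : ℕ) : ∃ C : ℝ≥0,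
    ∀ u : Euc n → ℝ, ContDiff ℝ (⊤ : ℕ∞) u → HasCompactSupport u → ∀ x,
    ‖fderiv ℝ u x‖ₑ ≤ C * pot ((m : ℝ) + 1) (fun y => ‖iteratedFDeriv ℝ (m + 2) u y‖ₑ) x := by
  have key : ∀ (j : ℕ) (u : Euc n → ℝ) (y : Euc n), ‖fderiv ℝ (iteratedFDeriv ℝ j u) y‖ₑ
      = ‖iteratedFDeriv ℝ (j + 1) u y‖ₑ := by
    intro j u y
    rw [← ofReal_norm, ← ofReal_norm, norm_fderiv_iteratedFDeriv]
  have hsm : ∀ (j : ℕ) (u : Euc n → ℝ), ContDiff ℝ (⊤ : ℕ∞) u → ContDiff ℝ 1 (iteratedFDeriv ℝ j u) := by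
    intro j u hu
    apply hu.iteratedFDeriv_right (m := 1)
    exact_mod_cast le_top
  induction m with
  | zero =>
    obtain ⟨C, hC⟩ := hardy0 hn
    refine ⟨C, fun u hu hc x => ?_⟩
    have := hC _ (iteratedFDeriv ℝ 1 u) (hsm 1 u hu) (hc.iteratedFDeriv 1) x
    simp only [key] at this
    rw [← ofReal_norm, norm_iteratedFDeriv_one, ofReal_norm] at this
    simpa using this
  | succ m ih =>
    obtain ⟨C, hC⟩ := ih
    obtain ⟨D, hD⟩ := hardy hn (a := (m : ℝ) + 1) (by positivity)
    refine ⟨C * D, fun u hu hc x => ?_⟩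
    have h1 := hC u hu hc x
    have h2 := hD _ (iteratedFDeriv ℝ (m + 2) u) (hsm _ u hu) (hc.iteratedFDeriv _) x
    simp only [key] at h2
    refine h1.trans ?_
    push_cast
    rw [mul_assoc]
    gcongr

open MeasureTheory Filter Metric Set
open scoped ENNReal NNReal Topology

lemma seg {n : ℕ} {u : Euc n → ℝ} (hu : ContDiff ℝ 1 u) (x v : Euc n) :
    ‖u (x + v) - u x‖ₑ ≤ ∫⁻ t in Ioc (0 : ℝ) 1, ‖fderiv ℝ u (x + t • v)‖ₑ * ‖v‖ₑ := by
  have hd : ∀ t : ℝ, HasDerivAt (fun t : ℝ => u (x + t • v)) (fderiv ℝ u (x + t • v) v) t := by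
    intro t
    have h1 : HasFDerivAt u (fderiv ℝ u (x + t • v)) (x + t • v) :=
        (hu.differentiable one_ne_zero _).hasFDerivAt
    have h2 : HasDerivAt (fun t : ℝ => x + t • v) v t := by
      simpa using ((hasDerivAt_id t).smul_const v).const_add x
    exact h1.comp_hasDerivAt _ h2
  have hcont : Continuous (fun t : ℝ => fderiv ℝ u (x + t • v) v) := by
    have := hu.continuous_fderiv one_ne_zero
    exact (this.comp (by fun_prop : Continuous fun t : ℝ => x + t • v)).clm_apply continuous_const
  have h := intervalIntegral.integral_eq_sub_of_hasDerivAt (a := 0) (b := 1) (fun t _ => hd t)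
    (hcont.intervalIntegrable _ _)
  simp only [one_smul, zero_smul, add_zero] at h
  rw [← h, intervalIntegral.integral_of_le zero_le_one]
  refine (enorm_integral_le_lintegral_enorm _).trans ?_
  apply lintegral_mono
  intro t
  exact ContinuousLinearMap.le_opENorm _ _

lemma smooth_lip {n : ℕ} (hn : 1 ≤ n) {a : ℝ} (ha : 0 < a) (han : a < n) : ∃ C : ℝ≥0,
    ∀ u : Euc n → ℝ, ContDiff ℝ 1 u → ∀ H : Euc n → ℝ≥0∞, Measurable H → ∀ M : ℝ≥0,
    (∀ x, ‖fderiv ℝ u x‖ₑ ≤ M * pot a H x) → ∀ x y,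
    ‖u x - u y‖ₑ ≤ C * M * ‖x - y‖ₑ * (pot a H x + pot a H y) := by
  obtain ⟨A, hA⟩ := pot_A1 hn ha han
  set V := volume (ball (0 : Euc n) (1/2)) with hVdef
  have hV : V ≠ ⊤ := measure_ball_lt_top.ne
  have hV0 : V ≠ 0 := (measure_ball_pos _ _ (by norm_num)).ne'
  refine ⟨(V⁻¹ * A).toNNReal, fun u hu H hH M hM x y => ?_⟩
  rw [ENNReal.coe_toNNReal (by finiteness)]
  have hm := meas_fd hu
  have sub : ∀ (x : Euc n) (r : ℝ), 0 ≤ r → ∫⁻ z in ball (0 : Euc n) 1, ‖u (x + r • z) - u x‖ₑ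
      ≤ ENNReal.ofReal r * M * A * pot a H x := by
    intro x r hr
    have hmm : Measurable (fun q : Euc n × ℝ => ‖fderiv ℝ u (x + (q.2 * r) • q.1)‖ₑ) :=
      hm.comp (g := fun x => ‖fderiv ℝ u x‖ₑ) (f := fun q : Euc n × ℝ => x + (q.2 * r) • q.1)
          (by fun_prop)
    calc _ ≤ ∫⁻ z in ball (0 : Euc n) 1, ∫⁻ t in Ioc (0 : ℝ) 1,
            ‖fderiv ℝ u (x + (t * r) • z)‖ₑ * ENNReal.ofReal r := by
          apply setLIntegral_mono' measurableSet_ball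
          intro z hz
          refine (seg hu x (r • z)).trans ?_
          apply lintegral_mono
          intro t
          simp only [smul_smul]
          gcongr
          rw [enorm_smul, Real.enorm_of_nonneg hr]
          have : ‖z‖ₑ ≤ 1 := by
            rw [← ofReal_norm]
            have : ‖z‖ < 1 := by simpa using hz
            exact ENNReal.ofReal_le_one.2 this.le
          calc _ ≤ ENNReal.ofReal r * 1 := by gcongr
            _ = _ := mul_one _
      _ = ∫⁻ t in Ioc (0 : ℝ) 1, ∫⁻ z in ball (0 : Euc n) 1,
            ‖fderiv ℝ u (x + (t * r) • z)‖ₑ * ENNReal.ofReal r := by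
          rw [lintegral_lintegral_swap]
          exact (hmm.mul_const _).aemeasurable
      _ ≤ ∫⁻ t in Ioc (0 : ℝ) 1, ENNReal.ofReal r * M * A * pot a H x := by
          apply setLIntegral_mono' measurableSet_Ioc
          intro t ht
          calc _ ≤ ∫⁻ z in ball (0 : Euc n) 1, (ENNReal.ofReal r * M) * pot a H (x + (t * r) • z) := by
                apply lintegral_mono
                intro z
                simp only
                rw [mul_comm, mul_assoc]
                gcongr
                exact hM _
            _ = (ENNReal.ofReal r * M) * ∫⁻ z in ball (0 : Euc n) 1, pot a H (x + (t * r) • z) := by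
                rw [lintegral_const_mul]
                exact (pot_measurable a hH).comp (by fun_prop)
            _ ≤ (ENNReal.ofReal r * M) * (A * pot a H x) := by
                gcongr
                exact hA H hH x _ (mul_nonneg ht.1.le hr)
            _ = _ := by ring
      _ = _ := by simp
  by_cases hxy : x = y
  · simp [hxy]
  set r := ‖x - y‖ with hr
  have hr0 : 0 < r := by rw [hr, norm_pos_iff, sub_ne_zero]; exact hxy
  set e := r⁻¹ • (y - x) with he
  have hre : r • e = y - x := by rw [he, smul_inv_smul₀ hr0.ne']
  have hne : ‖e‖ = 1 := by
    rw [he, norm_smul, norm_sub_rev, ← hr, Real.norm_of_nonneg (by positivity), inv_mul_cancel₀ hr0.ne']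
  set B := ball ((1/2 : ℝ) • e) (1/2) with hB
  have hBV : volume B = V := by
    rw [hB, hVdef, Measure.addHaar_ball_center]
  have hucont := hu.continuous
  have hhalf : ‖(1/2 : ℝ) • e‖ = 1/2 := by rw [norm_smul, hne]; norm_num
  have hB1 : B ⊆ ball 0 1 := by
    intro z hz
    rw [hB, mem_ball, dist_eq_norm] at hz
    rw [mem_ball_zero_iff]
    have := norm_add_le (z - (1/2 : ℝ) • e) ((1/2 : ℝ) • e)
    rw [sub_add_cancel] at this
    linarith
  have hB2 : ∀ z ∈ B, z - e ∈ ball (0 : Euc n) 1 := by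
    intro z hz
    rw [hB, mem_ball, dist_eq_norm] at hz
    rw [mem_ball_zero_iff]
    have := norm_sub_le (z - (1/2 : ℝ) • e) ((1/2 : ℝ) • e)
    have h3 : z - (1/2 : ℝ) • e - (1/2 : ℝ) • e = z - e := by
      rw [sub_sub, ← add_smul]; norm_num
    rw [h3] at this
    linarith
  have main : V * ‖u x - u y‖ₑ ≤ ENNReal.ofReal r * M * A * (pot a H x + pot a H y) := by
    calc V * ‖u x - u y‖ₑ = ∫⁻ z in B, ‖u x - u y‖ₑ := by rw [setLIntegral_const, hBV, mul_comm]
      _ ≤ ∫⁻ z in B, (‖u (x + r • z) - u x‖ₑ + ‖u (y + r • (z - e)) - u y‖ₑ) := by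
          apply lintegral_mono
          intro z
          have : y + r • (z - e) = x + r • z := by
            rw [smul_sub, hre]; abel
          simp only [this]
          have h := enorm_sub_le (a := u (x + r • z) - u y) (b := u (x + r • z) - u x)
          rw [sub_sub_sub_cancel_left] at h
          rwa [add_comm]
      _ = (∫⁻ z in B, ‖u (x + r • z) - u x‖ₑ) + ∫⁻ z in B, ‖u (y + r • (z - e)) - u y‖ₑ := by
          rw [lintegral_add_left]
          exact Continuous.measurable (by fun_prop)
      _ ≤ (∫⁻ z in ball (0 : Euc n) 1, ‖u (x + r • z) - u x‖ₑ)
            + ∫⁻ z in ball (0 : Euc n) 1, ‖u (y + r • z) - u y‖ₑ := by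
          refine add_le_add ?_ ?_
          · exact lintegral_mono_set hB1
          · rw [← lintegral_indicator measurableSet_ball, ← lintegral_indicator measurableSet_ball,
              ← lintegral_sub_right_eq_self ((ball (0 : Euc n) 1).indicator _) e]
            apply lintegral_mono
            intro z
            by_cases hz : z ∈ B
            · simp only
              rw [indicator_of_mem hz, indicator_of_mem (hB2 z hz)]
            · simp only
              rw [indicator_of_notMem hz]
              exact zero_le
      _ ≤ ENNReal.ofReal r * M * A * pot a H x + ENNReal.ofReal r * M * A * pot a H y := by
          gcongr
          · exact sub x r hr0.le
          · exact sub y r hr0.le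
      _ = _ := by ring
  rw [← ofReal_norm (x - y), ← hr]
  calc ‖u x - u y‖ₑ = V⁻¹ * (V * ‖u x - u y‖ₑ) := by
        rw [← mul_assoc, ENNReal.inv_mul_cancel hV0 hV, one_mul]
    _ ≤ V⁻¹ * (ENNReal.ofReal r * M * A * (pot a H x + pot a H y)) := by gcongr
    _ = _ := by ring

open MeasureTheory Filter Metric Set
open scoped ENNReal NNReal Topology

lemma avg_sub_le {n : ℕ} {f : Euc n → ℝ} {x : Euc n} {r : ℝ} (hr : 0 < r)
    (hf : IntegrableOn f (ball x r)) (c : ℝ) :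
    ‖(⨍ y in ball x r, f y) - c‖ₑ ≤ (volume (ball x r))⁻¹ * ∫⁻ y in ball x r, ‖f y - c‖ₑ := by
  have hV : volume (ball x r) ≠ ⊤ := measure_ball_lt_top.ne
  have hV0 : volume (ball x r) ≠ 0 := (measure_ball_pos _ _ hr).ne'
  have hVr : 0 < volume.real (ball x r) := ENNReal.toReal_pos hV0 hV
  have : (⨍ y in ball x r, f y) - c = (volume.real (ball x r))⁻¹ • ∫ y in ball x r, (f y - c) := by
    rw [setAverage_eq, integral_sub hf (integrableOn_const hV), setIntegral_const, smul_sub, smul_smul,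
      inv_mul_cancel₀ hVr.ne', one_smul]
  rw [this, enorm_smul]
  gcongr
  · rw [Real.enorm_of_nonneg (by positivity), ENNReal.ofReal_inv_of_pos hVr, Measure.real,
      ENNReal.ofReal_toReal hV]
  · exact enorm_integral_le_lintegral_enorm _

lemma avg_diff {n : ℕ} (hn : 1 ≤ n) {a : ℝ} (ha : 0 < a) (han : a < n) : ∃ A : ℝ≥0,
    ∀ (f : Euc n → ℝ) (H : Euc n → ℝ≥0∞), Measurable H → ∀ (C : ℝ≥0) (S : Set (Euc n)),
    (∀ y ∈ S, ∀ z ∈ S, ‖f y - f z‖ₑ ≤ C * ‖y - z‖ₑ * (pot a H y + pot a H z)) →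
    ∀ (x x' : Euc n) (r r' : ℝ), 0 < r → 0 < r' → IntegrableOn f (ball x r) →
    IntegrableOn f (ball x' r') → (∀ᵐ y, y ∈ ball x r → y ∈ S) → (∀ᵐ y, y ∈ ball x' r' → y ∈ S) →
    ‖(⨍ y in ball x r, f y) - (⨍ y in ball x' r', f y)‖ₑ ≤
      A * C * ENNReal.ofReal (‖x - x'‖ + r + r') * (pot a H x + pot a H x') := by
  obtain ⟨A, hA⟩ := pot_avg hn ha han
  refine ⟨A, fun f H hH C S hS x x' r r' hr hr' hfx hfx' hax hax' => ?_⟩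
  have hpm := pot_measurable a hH
  set D := ENNReal.ofReal (‖x - x'‖ + r + r') with hD
  have hDt : D ≠ ⊤ := ENNReal.ofReal_ne_top
  have avgc : ∀ (x : Euc n) (r : ℝ), 0 < r → ∀ c : ℝ≥0∞, c ≠ ⊤ → ∀ b,
      (volume (ball x r))⁻¹ * ∫⁻ y in ball x r, c * (b + pot a H y) ≤ c * (b + A * pot a H x) := by
    intro x r hr c hc b
    have hV : volume (ball x r) ≠ ⊤ := measure_ball_lt_top.ne
    have hV0 : volume (ball x r) ≠ 0 := (measure_ball_pos _ _ hr).ne'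
    rw [lintegral_const_mul' _ _ hc, lintegral_add_left measurable_const, setLIntegral_const]
    calc _ ≤ (volume (ball x r))⁻¹ * (c * (b * volume (ball x r) + A * volume (ball x r) * pot a H x)) := by
          gcongr; exact hA H hH x r hr
      _ = ((volume (ball x r))⁻¹ * volume (ball x r)) * (c * (b + A * pot a H x)) := by ring
      _ = _ := by rw [ENNReal.inv_mul_cancel hV0 hV, one_mul]
  have inner : ∀ y ∈ S, y ∈ ball x r → ‖f y - ⨍ z in ball x' r', f z‖ₑ
      ≤ (C * D) * (A * pot a H x' + pot a H y) := by
    intro y hy hyb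
    rw [enorm_sub_rev]
    refine (avg_sub_le hr' hfx' (f y)).trans ?_
    rw [add_comm]
    refine le_trans ?_ (avgc x' r' hr' (C * D) (by finiteness) _)
    gcongr (volume (ball x' r'))⁻¹ * ?_
    apply lintegral_mono_ae
    filter_upwards [ae_restrict_of_ae hax', self_mem_ae_restrict measurableSet_ball] with z hz hzb
    rw [add_comm]
    refine (hS z (hz hzb) y hy).trans ?_
    gcongr
    rw [← ofReal_norm]
    apply ENNReal.ofReal_le_ofReal
    rw [mem_ball, dist_eq_norm] at hyb hzb
    have e1 : z - y = (z - x') - (y - x) - (x - x') := by abel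
    rw [e1]
    have h1 := norm_sub_le ((z - x') - (y - x)) (x - x')
    have h2 := norm_sub_le (z - x') (y - x)
    linarith
  refine (avg_sub_le hr hfx _).trans ?_
  calc _ ≤ (volume (ball x r))⁻¹ * ∫⁻ y in ball x r, (C * D) * (A * pot a H x' + pot a H y) := by
        gcongr (volume (ball x r))⁻¹ * ?_
        apply lintegral_mono_ae
        filter_upwards [ae_restrict_of_ae hax, self_mem_ae_restrict measurableSet_ball] with y hy hyb
        exact inner y (hy hyb) hyb
    _ ≤ _ := avgc x r hr _ (by finiteness) _
    _ = _ := by ring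

lemma rep_lip {n : ℕ} (hn : 1 ≤ n) {a : ℝ} (ha : 0 < a) (han : a < n)
    (f : Euc n → ℝ) (H : Euc n → ℝ≥0∞) (hH : Measurable H) (C : ℝ≥0) (S : Set (Euc n))
    (hS : ∀ y ∈ S, ∀ z ∈ S, ‖f y - f z‖ₑ ≤ C * ‖y - z‖ₑ * (pot a H y + pot a H z))
    (K : Set (Euc n)) (δ : ℝ) (hδ : 0 < δ) (hfi : ∀ x ∈ K, IntegrableOn f (ball x δ))
    (hKS : ∀ᵐ y, y ∈ thickening δ K → y ∈ S) (N : ℝ≥0) :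
    ∃ L : ℝ≥0, LipschitzOnWith L (preciseRep f) (K ∩ {x | pot a H x ≤ N}) := by
  obtain ⟨A, hA⟩ := avg_diff hn ha han
  set M : ℝ := A * C * (N + N) with hM
  have key : ∀ x ∈ K ∩ {x | pot a H x ≤ N}, ∀ x' ∈ K ∩ {x | pot a H x ≤ N}, ∀ r ∈ Ioo 0 δ, ∀ r' ∈ Ioo 0 δ,
      ‖(⨍ y in ball x r, f y) - (⨍ y in ball x' r', f y)‖ ≤ M * (‖x - x'‖ + r + r') := by
    intro x hx x' hx' r hr r' hr'
    have hb : ∀ x ∈ K, ∀ r < δ, ∀ᵐ y, y ∈ ball x r → y ∈ S := by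
      intro x hx r hr
      filter_upwards [hKS] with y hy hyb
      exact hy (mem_thickening_iff.2 ⟨x, hx, lt_trans hyb hr⟩)
    have h := hA f H hH C S hS x x' r r' hr.1 hr'.1
      ((hfi x hx.1).mono_set (ball_subset_ball hr.2.le))
      ((hfi x' hx'.1).mono_set (ball_subset_ball hr'.2.le)) (hb x hx.1 r hr.2) (hb x' hx'.1 r' hr'.2)
    have h2 : ‖(⨍ y in ball x r, f y) - (⨍ y in ball x' r', f y)‖ₑ ≤
        ENNReal.ofReal (M * (‖x - x'‖ + r + r')) := by
      have hp : 0 ≤ ‖x - x'‖ + r + r' := by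
        have := hr.1; have := hr'.1; positivity
      rw [ENNReal.ofReal_mul (by positivity)]
      refine h.trans ?_
      have : ENNReal.ofReal M = A * C * (N + N) := by
        rw [hM]
        have : (A : ℝ) * C * (N + N) = ((A * C * (N + N) : ℝ≥0) : ℝ) := by push_cast; ring
        rw [this, ENNReal.ofReal_coe_nnreal]; push_cast; ring
      rw [this]
      calc _ ≤ A * C * ENNReal.ofReal (‖x - x'‖ + r + r') * (N + N) := by
            gcongr
            · exact hx.2
            · exact hx'.2
        _ = _ := by ring
    rw [← ofReal_norm] at h2
    exact (ENNReal.ofReal_le_ofReal_iff (by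
      have := hr.1; have := hr'.1; positivity)).1 h2
  have hev : ∀ᶠ r in 𝓝[>] (0 : ℝ), r ∈ Ioo 0 δ := Ioo_mem_nhdsGT hδ
  have hlim : ∀ x ∈ K ∩ {x | pot a H x ≤ N},
      Tendsto (fun ε : ℝ => ⨍ y in ball x ε, f y) (𝓝[>] (0:ℝ)) (𝓝 (preciseRep f x)) := by
    intro x hx
    have hex : ∃ L : ℝ, Tendsto (fun ε : ℝ => ⨍ y in ball x ε, f y) (𝓝[>] (0:ℝ)) (𝓝 L) := by
      apply cauchy_map_iff_exists_tendsto.1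
      rw [Metric.cauchy_iff]
      refine ⟨inferInstance, fun ε hε => ?_⟩
      have hM0 : 0 ≤ M := by positivity
      set δ' := min δ (ε / (2 * (M + 1))) with hδ'
      have hδ'0 : 0 < δ' := lt_min hδ (by positivity)
      refine ⟨_, image_mem_map (Ioo_mem_nhdsGT hδ'0), ?_⟩
      rintro _ ⟨r, hr, rfl⟩ _ ⟨r', hr', rfl⟩
      rw [dist_eq_norm]
      have h1 := key x hx x hx r ⟨hr.1, hr.2.trans_le (min_le_left _ _)⟩ r'
        ⟨hr'.1, hr'.2.trans_le (min_le_left _ _)⟩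
      refine h1.trans_lt ?_
      have h2 := hr.2.trans_le (min_le_right _ _)
      have h3 := hr'.2.trans_le (min_le_right _ _)
      rw [lt_div_iff₀ (by positivity)] at h2 h3
      have := hr.1
      have := hr'.1
      simp only [sub_self, norm_zero, zero_add]
      nlinarith
    unfold preciseRep preciseRepV
    rw [dif_pos hex]
    exact hex.choose_spec
  refine ⟨M.toNNReal, LipschitzOnWith.of_dist_le_mul fun x hx x' hx' => ?_⟩
  rw [dist_eq_norm, dist_eq_norm, Real.coe_toNNReal _ (by positivity)]
  have h1 := ((hlim x hx).sub (hlim x' hx')).norm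
  have h2 : Tendsto (fun r : ℝ => M * (‖x - x'‖ + r + r)) (𝓝[>] 0) (𝓝 (M * (‖x - x'‖ + 0 + 0))) := by
    apply tendsto_nhdsWithin_of_tendsto_nhds
    apply Continuous.tendsto'
    · fun_prop
    · simp
  simp only [add_zero] at h2
  apply le_of_tendsto_of_tendsto h1 h2
  filter_upwards [hev] with r hr
  exact key x hx x' hx' r hr r hr

open MeasureTheory Filter Metric Set
open scoped ENNReal NNReal Topology Convolution

lemma ld_smooth {n : ℕ} (L : List (Fin n)) {u : Euc n → ℝ} (hu : ContDiff ℝ (⊤ : ℕ∞) u) :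
    ContDiff ℝ (⊤ : ℕ∞) (listDeriv L u) := by
  induction L with
  | nil => exact hu
  | cons i L ih =>
    simp only [listDeriv]
    have : ContDiff ℝ (⊤ : ℕ∞) (fderiv ℝ (listDeriv L u)) :=
      ih.fderiv_right (by exact_mod_cast le_top)
    exact this.clm_apply contDiff_const

lemma ld_supp {n : ℕ} (L : List (Fin n)) {u : Euc n → ℝ} (hu : HasCompactSupport u) :
    HasCompactSupport (listDeriv L u) := by
  induction L with
  | nil => exact hu
  | cons i L ih =>
    simp only [listDeriv]
    exact ih.fderiv_apply ℝ _

lemma ld_perm {n : ℕ} {L L' : List (Fin n)} (h : L.Perm L') {u : Euc n → ℝ}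
    (hu : ContDiff ℝ (⊤ : ℕ∞) u) : listDeriv L u = listDeriv L' u := by
  induction h with
  | nil => rfl
  | cons i _ ih => simp only [listDeriv, ih]
  | swap i j L =>
    simp only [listDeriv]
    ext x
    have hs := ld_smooth L hu
    have hd : DifferentiableAt ℝ (fderiv ℝ (listDeriv L u)) x := by
      have : ContDiff ℝ (⊤ : ℕ∞) (fderiv ℝ (listDeriv L u)) :=
        hs.fderiv_right (by exact_mod_cast le_top)
      exact this.differentiable (by simp) x
    have hsym : IsSymmSndFDerivAt ℝ (listDeriv L u) x := by
      apply ContDiffAt.isSymmSndFDerivAt hs.contDiffAt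
      simp only [minSmoothness_of_isRCLikeNormedField]
      exact WithTop.coe_le_coe.2 (le_top : (2 : ℕ∞) ≤ ⊤)
    rw [fderiv_clm_apply hd (by fun_prop), fderiv_clm_apply hd (by fun_prop)]
    simp [hsym.eq]
  | trans _ _ ih1 ih2 => rw [ih1, ih2]

lemma ld_iter {n : ℕ} (j : ℕ) (r : Fin j → Fin n) {u : Euc n → ℝ}
    (hu : ContDiff ℝ (⊤ : ℕ∞) u) (x : Euc n) :
    listDeriv (List.ofFn r) u x = iteratedFDeriv ℝ j u x (fun i => EuclideanSpace.single (r i) 1) := by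
  induction j generalizing x with
  | zero => simp [listDeriv]
  | succ j ih =>
    rw [List.ofFn_succ]
    simp only [listDeriv]
    rw [iteratedFDeriv_succ_apply_left]
    have : listDeriv (List.ofFn fun i => r i.succ) u = fun y => iteratedFDeriv ℝ j u y
        (fun i => EuclideanSpace.single (r i.succ) 1) := by
      ext y; exact ih _ y
    rw [this]
    have hd : DifferentiableAt ℝ (iteratedFDeriv ℝ j u) x := by
      have : ContDiff ℝ 1 (iteratedFDeriv ℝ j u) := by
        apply hu.iteratedFDeriv_right (m := 1)
        exact_mod_cast le_top
      exact this.differentiable one_ne_zero x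
    rw [fderiv_continuousMultilinear_apply_const_apply hd]
    rfl

lemma iter_bound {n : ℕ} (j : ℕ) {u : Euc n → ℝ}
    (hu : ContDiff ℝ (⊤ : ℕ∞) u) (x : Euc n) :
    ‖iteratedFDeriv ℝ j u x‖ ≤ ∑ r : Fin j → Fin n, |listDeriv (List.ofFn r) u x| := by
  apply ContinuousMultilinearMap.opNorm_le_bound
  · positivity
  intro m
  have hm : m = fun i => ∑ k, (m i k) • EuclideanSpace.single k (1 : ℝ) := by
    ext i k
    simp [Pi.single_apply]
  have h1 : iteratedFDeriv ℝ j u x m = ∑ r : Fin j → Fin n, (∏ i, m i (r i)) *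
      listDeriv (List.ofFn r) u x := by
    conv_lhs => rw [hm]
    rw [ContinuousMultilinearMap.map_sum]
    apply Finset.sum_congr rfl
    intro r _
    rw [ContinuousMultilinearMap.map_smul_univ, ld_iter j r hu, smul_eq_mul]
  rw [h1, Finset.sum_mul]
  refine (norm_sum_le _ _).trans (Finset.sum_le_sum fun r _ => ?_)
  rw [norm_mul, mul_comm, Real.norm_eq_abs (listDeriv _ _ _), norm_prod]
  gcongr with i
  exact PiLp.norm_apply_le (m i) (r i)

lemma ld_mderiv {n : ℕ} (L : List (Fin n)) {u : Euc n → ℝ} (hu : ContDiff ℝ (⊤ : ℕ∞) u) :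
    mderiv (fun i => L.count i) u = listDeriv L u := by
  unfold mderiv
  apply ld_perm _ hu
  rw [List.perm_iff_count]
  intro i
  rw [List.count_flatMap]
  simp only [Function.comp_def, List.count_replicate]
  rw [← List.ofFn_eq_map, List.sum_ofFn]
  simp

lemma mdeg_count {n : ℕ} (L : List (Fin n)) : mdeg (fun i => L.count i) = L.length := by
  unfold mdeg
  rw [← List.sum_toFinset_count_eq_length]
  symm
  apply Finset.sum_subset (Finset.subset_univ _)
  intro i _ hi
  exact List.count_eq_zero.2 (by simpa using hi)

lemma ld_conv {n : ℕ} (L : List (Fin n)) {F ρ : Euc n → ℝ} (hF : LocallyIntegrable F)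
    (hρ : ContDiff ℝ (⊤ : ℕ∞) ρ) (hc : HasCompactSupport ρ) :
    listDeriv L (F ⋆[ContinuousLinearMap.mul ℝ ℝ] ρ) = F ⋆[ContinuousLinearMap.mul ℝ ℝ] (listDeriv L ρ) := by
  induction L with
  | nil => rfl
  | cons i L ih =>
    simp only [listDeriv, ih]
    ext x
    have hs := ld_smooth L hρ
    have hcs := ld_supp L hc
    have h := hcs.hasFDerivAt_convolution_right (ContinuousLinearMap.mul ℝ ℝ) hF
      (hs.of_le (by exact_mod_cast le_top)) x
    rw [h.fderiv, convolution_precompR_apply _ hF (hcs.fderiv ℝ)]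
    exact hs.continuous_fderiv (by simp)

lemma ld_refl {n : ℕ} (L : List (Fin n)) {ρ : Euc n → ℝ}
    (hρ : ContDiff ℝ (⊤ : ℕ∞) ρ) (x : Euc n) :
    listDeriv L (fun y => ρ (x - y)) = fun y => (-1) ^ L.length * listDeriv L ρ (x - y) := by
  induction L with
  | nil => simp [listDeriv]
  | cons i L ih =>
    simp only [listDeriv, ih]
    ext y
    have hs := ld_smooth L hρ
    have h1 : HasFDerivAt (listDeriv L ρ) (fderiv ℝ (listDeriv L ρ) (x - y)) (x - y) :=
      (hs.differentiable (by simp) _).hasFDerivAt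
    have h2 : HasFDerivAt (fun y => x - y) (-(ContinuousLinearMap.id ℝ (Euc n))) y :=
      (hasFDerivAt_id y).const_sub x
    have h3 := (h1.comp y h2).const_mul ((-1) ^ L.length)
    have h4 : (fun y => (-1) ^ L.length * listDeriv L ρ (x - y)) =
      (fun y => (-1) ^ L.length * (listDeriv L ρ ∘ (fun y => x - y)) y) := rfl
    rw [h4, h3.fderiv]
    simp [pow_succ]

lemma ld_weak {n : ℕ} (L : List (Fin n)) {U : Set (Euc n)} (hU : MeasurableSet U) {f g ρ : Euc n → ℝ}
    (hf : IntegrableOn f U) (hw : IsWeakDerivOn U (fun i => L.count i) f g)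
    (hρ : ContDiff ℝ (⊤ : ℕ∞) ρ) (hc : HasCompactSupport ρ) (x : Euc n)
    (hx : ∀ y, x - y ∈ tsupport ρ → y ∈ U) :
    listDeriv L (U.indicator f ⋆[ContinuousLinearMap.mul ℝ ℝ] ρ) x = ∫ y in U, g y * ρ (x - y) := by
  have hF : LocallyIntegrable (U.indicator f) := by
    rw [← integrable_indicator_iff hU] at hf
    exact hf.locallyIntegrable
  rw [ld_conv L hF hρ hc]
  have hη : ContDiff ℝ (⊤ : ℕ∞) (fun y => ρ (x - y)) := by fun_prop
  have hηc : HasCompactSupport (fun y => ρ (x - y)) :=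
    hc.comp_homeomorph (Homeomorph.subLeft x)
  have hηs : tsupport (fun y => ρ (x - y)) ⊆ U := by
    intro y hy
    apply hx
    have := tsupport_comp_subset_preimage ρ (f := fun y => x - y) (by fun_prop) hy
    exact this
  have h := hw _ hη hηc hηs
  rw [ld_mderiv L hη, ld_refl L hρ, mdeg_count] at h
  have h2 : ((-1 : ℝ) ^ L.length) * ∫ y in U, f y * listDeriv L ρ (x - y)
      = (-1) ^ L.length * ∫ y in U, g y * ρ (x - y) := by
    rw [← h, ← integral_const_mul]
    congr with y
    ring
  have h3 := mul_left_cancel₀ (pow_ne_zero _ (by norm_num : (-1:ℝ) ≠ 0)) h2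
  rw [← h3, ← integral_indicator hU]
  unfold convolution
  congr with y
  by_cases hy : y ∈ U <;> simp [hy]

open MeasureTheory Filter Metric Set
open scoped ENNReal NNReal Topology Convolution Manifold

lemma bump_bound {n : ℕ} : ∃ B : ℝ≥0, ∀ (φ : ContDiffBump (0 : Euc n)), φ.rOut ≤ 2 * φ.rIn →
    ∀ (U : Set (Euc n)) (g : Euc n → ℝ) (G : Euc n → ℝ≥0∞), MeasurableSet U →
    (∀ᵐ y, y ∈ U → ‖g y‖ₑ ≤ G y) → ∀ x : Euc n,
    ‖∫ y in U, g y * φ.normed volume (x - y)‖ₑ ≤ B * ∫⁻ z in ball 0 1, G (x + φ.rOut • z) := by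
  refine ⟨Real.toNNReal (2 ^ n / volume.real (closedBall (0 : Euc n) 1)), ?_⟩
  intro φ hφ U g G hU hg x
  have hr := φ.rOut_pos
  set c : ℝ≥0∞ := ENNReal.ofReal (2 ^ n / volume.real (closedBall (0 : Euc n) φ.rOut)) with hc
  have h1 : ‖∫ y in U, g y * φ.normed volume (x - y)‖ₑ ≤ ∫⁻ y in ball x φ.rOut, c * G y := by
    refine (enorm_integral_le_lintegral_enorm _).trans ?_
    rw [← lintegral_indicator hU, ← lintegral_indicator measurableSet_ball]
    apply lintegral_mono_ae
    filter_upwards [hg] with y hy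
    by_cases hyU : y ∈ U
    · rw [indicator_of_mem hyU]
      by_cases hyb : y ∈ ball x φ.rOut
      · rw [indicator_of_mem hyb, enorm_mul, mul_comm]
        gcongr
        · rw [Real.enorm_of_nonneg (φ.nonneg_normed _)]
          apply ENNReal.ofReal_le_ofReal
          simpa using φ.normed_le_div_measure_closedBall_rOut volume 2 hφ (x - y)
        · exact hy hyU
      · rw [indicator_of_notMem hyb]
        have : φ.normed volume (x - y) = 0 := by
          rw [← Function.notMem_support, φ.support_normed_eq]
          rw [mem_ball, dist_eq_norm] at hyb
          simpa [norm_sub_rev] using hyb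
        simp [this]
    · rw [indicator_of_notMem hyU]; exact zero_le
  refine h1.trans ?_
  rw [lintegral_const_mul' _ _ (by simp [hc]), ball_lint G x hr, ← mul_assoc]
  gcongr
  rw [hc, ENNReal.ofNNReal_toNNReal, ← ENNReal.ofReal_pow hr.le, ← ENNReal.ofReal_mul (by positivity)]
  apply ENNReal.ofReal_le_ofReal
  have hv : volume.real (closedBall (0 : Euc n) φ.rOut) = φ.rOut ^ n * volume.real (closedBall (0 : Euc n) 1) := by
    rw [Measure.real, Measure.addHaar_closedBall' _ _ hr.le, ENNReal.toReal_mul, ENNReal.toReal_ofReal (by positivity)]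
    simp [Measure.real]
  have hv1 : 0 < volume.real (closedBall (0 : Euc n) 1) :=
    ENNReal.toReal_pos (measure_closedBall_pos _ _ one_pos).ne' measure_closedBall_lt_top.ne
  rw [hv]
  apply le_of_eq
  field_simp

lemma leib {n : ℕ} (k : ℕ) {ζ : Euc n → ℝ} (hζ : ContDiff ℝ (⊤ : ℕ∞) ζ) (hc : HasCompactSupport ζ) :
    ∃ B : ℝ≥0, ∀ u : Euc n → ℝ, ContDiff ℝ (⊤ : ℕ∞) u → ∀ x,
      ‖iteratedFDeriv ℝ k (fun y => ζ y * u y) x‖ₑ ≤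
        B * ∑ j ∈ Finset.range (k + 1), ‖iteratedFDeriv ℝ j u x‖ₑ := by
  have hb : ∀ i : ℕ, ∃ b : ℝ≥0, ∀ x, ‖iteratedFDeriv ℝ i ζ x‖ₑ ≤ b := by
    intro i
    obtain ⟨b, hb⟩ := (hc.iteratedFDeriv (𝕜 := ℝ) i).exists_bound_of_continuous
      (hζ.continuous_iteratedFDeriv (m := i) (by exact_mod_cast le_top))
    refine ⟨b.toNNReal, fun x => ?_⟩
    rw [← ofReal_norm]
    exact ENNReal.ofReal_le_ofReal (hb x)
  choose b hb using hb
  refine ⟨∑ i ∈ Finset.range (k + 1), (k.choose i : ℝ≥0) * b i, fun u hu x => ?_⟩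
  have h1 := norm_iteratedFDeriv_mul_le hζ hu x (n := k) (by exact_mod_cast le_top)
  have h2 : ‖iteratedFDeriv ℝ k (fun y => ζ y * u y) x‖ₑ ≤ ∑ i ∈ Finset.range (k + 1),
      (k.choose i : ℝ≥0∞) * ‖iteratedFDeriv ℝ i ζ x‖ₑ * ‖iteratedFDeriv ℝ (k - i) u x‖ₑ := by
    rw [← ofReal_norm]
    refine (ENNReal.ofReal_le_ofReal h1).trans ?_
    rw [ENNReal.ofReal_sum_of_nonneg (fun i _ => by positivity)]
    apply le_of_eq
    apply Finset.sum_congr rfl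
    intro i _
    rw [ENNReal.ofReal_mul (by positivity), ENNReal.ofReal_mul (by positivity), ofReal_norm,
      ofReal_norm, ENNReal.ofReal_natCast]
  refine h2.trans ?_
  push_cast
  rw [Finset.sum_mul]
  apply Finset.sum_le_sum
  intro i hi
  gcongr
  · exact hb i x
  · apply Finset.single_le_sum (f := fun j => ‖iteratedFDeriv ℝ j u x‖ₑ) (fun _ _ => zero_le)
    simp

lemma pot_mono_ae {n : ℕ} (a : ℝ) {G H : Euc n → ℝ≥0∞} (h : ∀ᵐ y, G y ≤ H y) (x : Euc n) :
    pot a G x ≤ pot a H x := by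
  unfold pot
  apply lintegral_mono_ae
  filter_upwards [h] with y hy
  gcongr

lemma pot_const {n : ℕ} (a : ℝ) (G : Euc n → ℝ≥0∞) (c : ℝ≥0) (x : Euc n) :
    pot a (fun y => c * G y) x = c * pot a G x := by
  unfold pot
  simp_rw [mul_assoc]
  rw [lintegral_const_mul' _ _ (by simp)]

lemma iter_zero_off {n : ℕ} (k : ℕ) {ζ u : Euc n → ℝ} {x : Euc n} (hx : x ∉ tsupport ζ) :
    iteratedFDeriv ℝ k (fun y => ζ y * u y) x = 0 := by
  by_contra h
  have h1 : x ∈ tsupport (fun y => ζ y * u y) :=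
    tsupport_iteratedFDeriv_subset (𝕜 := ℝ) k (subset_tsupport _ h)
  exact hx (closure_mono (Function.support_mul_subset_left ζ u) h1)

open MeasureTheory Filter Metric Set
open scoped ENNReal NNReal Topology Convolution Manifold

lemma moll_bound {n : ℕ} (hn : 1 ≤ n) (m : ℕ) (han : (m : ℝ) + 1 < n) {U : Set (Euc n)} (hU : MeasurableSet U)
    {f : Euc n → ℝ} (hf : IntegrableOn f U) {H : Euc n → ℝ≥0∞} (hH : Measurable H)
    (hw : ∀ L : List (Fin n), L.length ≤ m + 2 → ∃ g : Euc n → ℝ,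
      IsWeakDerivOn U (fun i => L.count i) f g ∧ ∀ᵐ y, y ∈ U → ‖g y‖ₑ ≤ H y)
    {ζ : Euc n → ℝ} (hζ : ContDiff ℝ (⊤ : ℕ∞) ζ) (hc : HasCompactSupport ζ) :
    ∃ M : ℝ≥0, ∀ φ : ContDiffBump (0 : Euc n), φ.rOut ≤ 2 * φ.rIn →
      (∀ x ∈ tsupport ζ, ∀ y, x - y ∈ closedBall (0 : Euc n) φ.rOut → y ∈ U) → ∀ y z,
      ‖ζ y * (U.indicator f ⋆[ContinuousLinearMap.mul ℝ ℝ] (φ.normed volume)) y -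
        ζ z * (U.indicator f ⋆[ContinuousLinearMap.mul ℝ ℝ] (φ.normed volume)) z‖ₑ ≤
        M * ‖y - z‖ₑ * (pot ((m : ℝ) + 1) H y + pot ((m : ℝ) + 1) H z) := by
  have ha : (0 : ℝ) < (m : ℝ) + 1 := by positivity
  obtain ⟨B, hB⟩ := bump_bound (n := n)
  obtain ⟨B', hB'⟩ := leib (m + 2) hζ hc
  obtain ⟨Cg, hCg⟩ := grad_pot hn m
  obtain ⟨A, hA⟩ := pot_moll hn ha han
  obtain ⟨Cl, hCl⟩ := smooth_lip hn ha han
  set D : ℝ≥0 := B' * ∑ j ∈ Finset.range (m + 2 + 1), ∑ r : Fin j → Fin n, B with hD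
  refine ⟨Cl * (Cg * (D * A)), fun φ hφ hsub y z => ?_⟩
  set F := U.indicator f ⋆[ContinuousLinearMap.mul ℝ ℝ] (φ.normed volume) with hF
  have hloc : LocallyIntegrable (U.indicator f) := by
    rw [← integrable_indicator_iff hU] at hf
    exact hf.locallyIntegrable
  have hρs : ContDiff ℝ (⊤ : ℕ∞) (φ.normed volume) := φ.contDiff_normed
  have hρc : HasCompactSupport (φ.normed volume) := φ.hasCompactSupport_normed
  have hFs : ContDiff ℝ (⊤ : ℕ∞) F := hρc.contDiff_convolution_right _ hloc hρs
  have hus : ContDiff ℝ (⊤ : ℕ∞) (fun y => ζ y * F y) := hζ.mul hFs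
  have huc : HasCompactSupport (fun y => ζ y * F y) := hc.mul_right
  have hk : ∀ x, ‖iteratedFDeriv ℝ (m + 2) (fun y => ζ y * F y) x‖ₑ ≤
      D * ∫⁻ z in ball 0 1, H (x + φ.rOut • z) := by
    intro x
    by_cases hx : x ∈ tsupport ζ
    · refine (hB' F hFs x).trans ?_
      rw [hD]
      push_cast
      rw [mul_assoc]
      gcongr
      rw [Finset.sum_mul]
      apply Finset.sum_le_sum
      intro j hj
      rw [Finset.sum_mul]
      have h1 := iter_bound j hFs x
      have h2 : ‖iteratedFDeriv ℝ j F x‖ₑ ≤ ∑ r : Fin j → Fin n, ‖listDeriv (List.ofFn r) F x‖ₑ := by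
        rw [← ofReal_norm]
        refine (ENNReal.ofReal_le_ofReal h1).trans ?_
        rw [ENNReal.ofReal_sum_of_nonneg (fun i _ => by positivity)]
        apply le_of_eq
        apply Finset.sum_congr rfl
        intro i _
        rw [← Real.norm_eq_abs, ofReal_norm]
      refine h2.trans (Finset.sum_le_sum fun r _ => ?_)
      obtain ⟨g, hg, hgH⟩ := hw (List.ofFn r) (by
        have := Finset.mem_range.1 hj
        simp; omega)
      rw [ld_weak (List.ofFn r) hU hf hg hρs hρc x (by
        intro y hy
        rw [φ.tsupport_normed_eq] at hy
        exact hsub x hx y hy)]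
      exact hB φ hφ U g H hU hgH x
    · rw [iter_zero_off _ hx]; simp
  have hgrad : ∀ x, ‖fderiv ℝ (fun y => ζ y * F y) x‖ₑ ≤
      (Cg * (D * A) : ℝ≥0) * pot ((m : ℝ) + 1) H x := by
    intro x
    refine (hCg _ hus huc x).trans ?_
    push_cast
    rw [mul_assoc, mul_assoc]
    gcongr
    refine (pot_mono_ae _ (Eventually.of_forall hk) x).trans ?_
    rw [pot_const]
    gcongr
    exact hA H hH x _ φ.rOut_pos.le
  have := hCl _ (hus.of_le (by exact_mod_cast le_top)) H hH _ hgrad y z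
  exact_mod_cast this

lemma local_lip {n : ℕ} (hn : 1 ≤ n) (m : ℕ) (han : (m : ℝ) + 1 < n) {p : ℝ} (hp : 1 ≤ p)
    {Ω : Set (Euc n)} (hΩ : IsOpen Ω) {f : Euc n → ℝ} (hf : MemSobolevLoc (m + 2) p Ω f)
    {K : Set (Euc n)} (hK : IsCompact K) (hKΩ : K ⊆ Ω) :
    ∃ H : Euc n → ℝ, MemLp H (ENNReal.ofReal p) volume ∧ Measurable H ∧ (∀ x, 0 ≤ H x) ∧
      ∀ N : ℝ≥0, ∃ L : ℝ≥0, LipschitzOnWith L (preciseRep f)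
        (K ∩ {x | pot ((m : ℝ) + 1) (fun y => ENNReal.ofReal (H y)) x ≤ N}) := by
  have ha : (0 : ℝ) < (m : ℝ) + 1 := by positivity
  obtain ⟨d, hd, hdΩ⟩ := hK.exists_cthickening_subset_open hΩ hKΩ
  set δ := d / 3 with hδdef
  have hδ : 0 < δ := by positivity
  set U := thickening (3 * δ) K with hUdef
  have hUo : IsOpen U := isOpen_thickening
  have hUb : Bornology.IsBounded U := hK.isBounded.thickening
  have hUcl : closure U ⊆ Ω := by
    refine (closure_thickening_subset_cthickening _ _).trans ?_
    rwa [show 3 * δ = d by rw [hδdef]; ring]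
  obtain ⟨hfp, hw⟩ := hf U hUo hUb hUcl
  have hp1 : (1 : ℝ≥0∞) ≤ ENNReal.ofReal p := by simpa using hp
  have hfin : IsFiniteMeasure (volume.restrict U) := ⟨by simpa using hUb.measure_lt_top⟩
  have hfi : IntegrableOn f U := hfp.integrable hp1
  have hw' : ∀ L : List (Fin n), ∃ g : Euc n → ℝ, L.length ≤ m + 2 →
      MemLp g (ENNReal.ofReal p) (volume.restrict U) ∧ IsWeakDerivOn U (fun i => L.count i) f g := by
    intro L
    by_cases hL : L.length ≤ m + 2
    · obtain ⟨g, hg⟩ := hw (fun i => L.count i) (by rw [mdeg_count]; exact hL)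
      exact ⟨g, fun _ => hg⟩
    · exact ⟨0, fun h => absurd h hL⟩
  choose g hg using hw'
  set H0 : Euc n → ℝ := fun y => ∑ j ∈ Finset.range (m + 2 + 1), ∑ r : Fin j → Fin n, |g (List.ofFn r) y| with hH0
  have hH0m : MemLp H0 (ENNReal.ofReal p) (volume.restrict U) := by
    apply memLp_finsetSum
    intro j hj
    apply memLp_finsetSum
    intro r _
    exact (hg (List.ofFn r) (by have := Finset.mem_range.1 hj; simp; omega)).1.norm
  have hH1 : MemLp (U.indicator H0) (ENNReal.ofReal p) volume :=
    (memLp_indicator_iff_restrict hUo.measurableSet).2 hH0m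
  set H2 := hH1.1.mk _ with hH2
  have hH2e : U.indicator H0 =ᵐ[volume] H2 := hH1.1.ae_eq_mk
  have hH2m : MemLp H2 (ENNReal.ofReal p) volume := hH1.ae_eq hH2e
  have hH2meas : Measurable H2 := hH1.1.stronglyMeasurable_mk.measurable
  refine ⟨fun y => |H2 y|, hH2m.norm, hH2meas.norm, fun x => abs_nonneg _, ?_⟩
  set H : Euc n → ℝ≥0∞ := fun y => ENNReal.ofReal |H2 y| with hHdef
  have hHmeas : Measurable H := hH2meas.norm.ennreal_ofReal
  have hdom : ∀ L : List (Fin n), L.length ≤ m + 2 → ∃ g : Euc n → ℝ,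
      IsWeakDerivOn U (fun i => L.count i) f g ∧ ∀ᵐ y, y ∈ U → ‖g y‖ₑ ≤ H y := by
    intro L hL
    refine ⟨g L, (hg L hL).2, ?_⟩
    filter_upwards [hH2e] with y hy hyU
    rw [indicator_of_mem hyU] at hy
    rw [hHdef, ← ofReal_norm, Real.norm_eq_abs]
    apply ENNReal.ofReal_le_ofReal
    rw [← hy]
    refine le_trans ?_ (le_abs_self _)
    rw [hH0]
    have h1 : |g L y| ≤ ∑ r : Fin L.length → Fin n, |g (List.ofFn r) y| := by
      have := Finset.single_le_sum (f := fun r : Fin L.length → Fin n => |g (List.ofFn r) y|)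
        (fun _ _ => abs_nonneg _) (Finset.mem_univ L.get)
      simpa using this
    refine h1.trans ?_
    exact Finset.single_le_sum (f := fun j => ∑ r : Fin j → Fin n, |g (List.ofFn r) y|)
      (fun _ _ => Finset.sum_nonneg fun _ _ => abs_nonneg _) (Finset.mem_range.2 (by omega))
  -- cutoff
  obtain ⟨ζ, hζs, -, hζsupp, hζ1⟩ := exists_contMDiff_support_eq_eq_one_iff (n := (⊤ : ℕ∞)) 𝓘(ℝ, Euc n)
    (s := thickening (2 * δ) K) (t := cthickening δ K) isOpen_thickening isClosed_cthickening
    (cthickening_subset_thickening' (by positivity) (by linarith) K)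
  have hζs' : ContDiff ℝ (⊤ : ℕ∞) ζ := hζs.contDiff
  have hζt : tsupport ζ ⊆ cthickening (2 * δ) K := by
    rw [tsupport, hζsupp]; exact closure_thickening_subset_cthickening _ _
  have hζc : HasCompactSupport ζ :=
    HasCompactSupport.of_support_subset_isCompact (hK.cthickening (r := 2 * δ))
      ((subset_tsupport _).trans hζt)
  obtain ⟨M, hM⟩ := moll_bound hn m han hUo.measurableSet hfi hHmeas hdom hζs' hζc
  have hloc : LocallyIntegrable (U.indicator f) := by
    have := hfi
    rw [← integrable_indicator_iff hUo.measurableSet] at this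
    exact this.locallyIntegrable
  -- bump sequence
  let φ : ℕ → ContDiffBump (0 : Euc n) := fun i =>
    ⟨δ / (i + 2) / 2, δ / (i + 2), by positivity, by
      have : 0 < δ / ((i : ℝ) + 2) := by positivity
      linarith⟩
  have hφr : ∀ i, (φ i).rOut = δ / ((i : ℝ) + 2) := fun i => rfl
  have hφi : ∀ i, (φ i).rOut ≤ 2 * (φ i).rIn := fun i => by
    change δ / ((i : ℝ) + 2) ≤ 2 * (δ / ((i : ℝ) + 2) / 2)
    linarith
  have hφδ : ∀ i, (φ i).rOut < δ := fun i => by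
    rw [hφr]
    apply div_lt_self hδ
    have : (0 : ℝ) ≤ i := by positivity
    linarith
  have hφ0 : Tendsto (fun i => (φ i).rOut) atTop (𝓝 0) := by
    simp_rw [hφr]
    apply Tendsto.div_atTop tendsto_const_nhds
    exact tendsto_atTop_add_const_right _ _ tendsto_natCast_atTop_atTop
  have hsub : ∀ i, ∀ x ∈ tsupport ζ, ∀ y, x - y ∈ closedBall (0 : Euc n) (φ i).rOut → y ∈ U := by
    intro i x hx y hy
    have h1 : y ∈ cthickening (φ i).rOut (cthickening (2 * δ) K) := by
      apply mem_cthickening_of_dist_le y x _ _ (hζt hx)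
      rw [dist_comm, dist_eq_norm]; simpa using hy
    have h2 := cthickening_cthickening_subset (φ i).rOut_pos.le (by positivity) K h1
    exact cthickening_subset_thickening' (by positivity) (by linarith [hφδ i]) K h2
  have hconv := ContDiffBump.ae_convolution_tendsto_right_of_locallyIntegrable (μ := volume) hφ0
    (Eventually.of_forall hφi) hloc
  set S : Set (Euc n) := {y | y ∈ thickening δ K ∧ Tendsto (fun i => (U.indicator f ⋆[ContinuousLinearMap.mul ℝ ℝ]
    ((φ i).normed volume)) y) atTop (𝓝 (U.indicator f y))} with hS
  have hKU : thickening δ K ⊆ U := thickening_mono (by linarith) K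
  intro N
  apply rep_lip hn ha han f H hHmeas M S ?_ K δ hδ ?_ ?_ N
  · intro y hy z hz
    have hy1 : ζ y = 1 := (hζ1 y).1 (thickening_subset_cthickening _ _ hy.1)
    have hz1 : ζ z = 1 := (hζ1 z).1 (thickening_subset_cthickening _ _ hz.1)
    have ht : Tendsto (fun i => ‖(U.indicator f ⋆[ContinuousLinearMap.mul ℝ ℝ] ((φ i).normed volume)) y -
      (U.indicator f ⋆[ContinuousLinearMap.mul ℝ ℝ] ((φ i).normed volume)) z‖ₑ) atTop
        (𝓝 ‖U.indicator f y - U.indicator f z‖ₑ) := (hy.2.sub hz.2).enorm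
    rw [indicator_of_mem (hKU hy.1), indicator_of_mem (hKU hz.1)] at ht
    refine le_of_tendsto' ht fun i => ?_
    have := hM (φ i) (hφi i) (hsub i) y z
    simpa [hy1, hz1] using this
  · intro x hx
    exact hfi.mono_set ((ball_subset_thickening hx δ).trans hKU)
  · filter_upwards [hconv] with y hy hyK
    refine ⟨hyK, ?_⟩
    convert hy using 2 with i
    rw [convolution_eq_swap, convolution_def]
    simp only [ContinuousLinearMap.mul_apply', ContinuousLinearMap.lsmul_apply, smul_eq_mul]
    congr with t
    ring

open MeasureTheory Filter Metric Set
open scoped ENNReal NNReal Topology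

lemma cap_zero {n : ℕ} (hn : 1 ≤ n) (a : ℝ) {p : ℝ} (hp : 1 ≤ p) {φ : Euc n → ℝ}
    (hφ : MemLp φ (ENNReal.ofReal p) volume) (hφ0 : ∀ x, 0 ≤ φ x) {S : Set (Euc n)}
    (hS : ∀ x ∈ S, pot a (fun y => ENNReal.ofReal (φ y)) x = ⊤) : rieszCap a p S = 0 := by
  have hp0 : 0 < p := by linarith
  have hJ : ∫⁻ y, ENNReal.ofReal (φ y) ^ p ≠ ⊤ := by
    have := lintegral_rpow_enorm_lt_top_of_eLpNorm_lt_top (by simpa using hp0) (by simp) hφ.2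
    rw [ENNReal.toReal_ofReal hp0.le] at this
    simpa [Real.enorm_of_nonneg (hφ0 _)] using this.ne
  have hle : ∀ i : ℕ, rieszCap a p S ≤ ENNReal.ofReal (1 / ((i : ℝ) + 1)) * ∫⁻ y, ENNReal.ofReal (φ y) ^ p := by
    intro i
    set ε : ℝ := 1 / ((i : ℝ) + 1) with hε
    have hε0 : 0 < ε := by positivity
    have hε1 : ε ≤ 1 := by
      rw [hε, div_le_one (by positivity)]
      have : (0 : ℝ) ≤ i := by positivity
      linarith
    unfold rieszCap
    have hadm : MemLp (fun y => ε * φ y) (ENNReal.ofReal p) volume ∧ (∀ x, 0 ≤ (fun y => ε * φ y) x) ∧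
        ∀ x ∈ S, 1 ≤ rieszPot a (fun y => ε * φ y) x := by
      refine ⟨hφ.const_mul ε, fun x => mul_nonneg hε0.le (hφ0 x), ?_⟩
      intro x hx
      have h1 : ∫⁻ y, ENNReal.ofReal (ε * φ y) * ENNReal.ofReal (‖x - y‖ ^ (a - (n : ℝ))) = ⊤ := by
        have h2 : ∫⁻ y, ENNReal.ofReal (ε * φ y) * ENNReal.ofReal (‖x - y‖ ^ (a - (n : ℝ)))
            = ∫⁻ y, ENNReal.ofReal ε * (ENNReal.ofReal (φ y) * kr a (x - y)) := by
          apply lintegral_congr_ae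
          have hne : ∀ᵐ y : Euc n, x - y ≠ 0 :=
            (Measure.measurePreserving_sub_left volume x).quasiMeasurePreserving.ae (ae_ne0 hn)
          filter_upwards [hne] with y hy
          rw [ENNReal.ofReal_mul hε0.le, mul_assoc]
          congr 2
          unfold kr
          rw [← ofReal_norm, ENNReal.ofReal_rpow_of_pos (norm_pos_iff.2 hy)]
        rw [h2, lintegral_const_mul' _ _ (by simp)]
        have := hS x hx
        unfold pot at this
        rw [this, ENNReal.mul_top (by simpa using hε0)]
      unfold rieszPot
      rw [h1, ENNReal.mul_top (by simp)]
      exact le_top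
    refine (iInf₂_le (fun y => ε * φ y) hadm).trans ?_
    · have h3 : ∀ y, ENNReal.ofReal (ε * φ y) ^ p = ENNReal.ofReal ε ^ p * ENNReal.ofReal (φ y) ^ p := by
        intro y
        rw [ENNReal.ofReal_mul hε0.le, ENNReal.mul_rpow_of_nonneg _ _ hp0.le]
      simp_rw [h3]
      rw [lintegral_const_mul' _ _ (ENNReal.rpow_ne_top_of_nonneg hp0.le (by simp))]
      gcongr
      have := ENNReal.rpow_le_rpow_of_exponent_ge (x := ENNReal.ofReal ε) (by simpa using hε1) hp
      simpa using this
  have ht : Tendsto (fun i : ℕ => ENNReal.ofReal (1 / ((i : ℝ) + 1)) * ∫⁻ y, ENNReal.ofReal (φ y) ^ p) atTop (𝓝 0) := by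
    have h0 : Tendsto (fun i : ℕ => ENNReal.ofReal (1 / ((i : ℝ) + 1))) atTop (𝓝 0) := by
      have := ENNReal.tendsto_ofReal (tendsto_one_div_add_atTop_nhds_zero_nat (𝕜 := ℝ))
      simpa using this
    have := ENNReal.Tendsto.mul_const h0 (Or.inr hJ)
    simpa using this
  exact le_antisymm (ge_of_tendsto' ht hle) zero_le

lemma lp_sum {n : ℕ} {p : ℝ} (hp : 1 ≤ p) (H : ℕ → Euc n → ℝ)
    (hH : ∀ l, MemLp (H l) (ENNReal.ofReal p) volume) (hH0 : ∀ l x, 0 ≤ H l x) :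
    ∃ φ : Euc n → ℝ, MemLp φ (ENNReal.ofReal p) volume ∧ Measurable φ ∧ (∀ x, 0 ≤ φ x) ∧
      ∀ l, ∃ c : ℝ≥0, ∀ᵐ y, H l y ≤ c * φ y := by
  have : Fact (1 ≤ ENNReal.ofReal p) := ⟨by simpa using hp⟩
  set h : ℕ → Lp ℝ (ENNReal.ofReal p) (volume : Measure (Euc n)) := fun l => (hH l).toLp _ with hh
  have hnn : ∀ l, 0 ≤ h l := by
    intro l
    rw [← Lp.coeFn_nonneg]
    filter_upwards [(hH l).coeFn_toLp] with y hy
    rw [hh]; simp only [hy]; exact hH0 l y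
  set c : ℕ → ℝ := fun l => (1 / 2) ^ l / (1 + ‖h l‖) with hc
  have hcpos : ∀ l, 0 < c l := fun l => by rw [hc]; positivity
  have hsum : Summable (fun l => c l • h l) := by
    apply Summable.of_norm_bounded (summable_geometric_two)
    intro l
    rw [norm_smul, Real.norm_of_nonneg (hcpos l).le, hc]
    have : 0 ≤ ‖h l‖ := norm_nonneg _
    rw [div_mul_eq_mul_div, div_le_iff₀ (by positivity)]
    have h2 : (0 : ℝ) < (1 / 2) ^ l := by positivity
    nlinarith
  set Φ := ∑' l, c l • h l with hΦ
  have hsnn : ∀ l, 0 ≤ c l • h l := by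
    intro l
    rw [← Lp.coeFn_nonneg]
    filter_upwards [Lp.coeFn_smul (c l) (h l), (Lp.coeFn_nonneg _).2 (hnn l)] with y hy hy2
    rw [hy]
    exact mul_nonneg (hcpos l).le hy2
  refine ⟨fun y => |Φ y|, (Lp.memLp Φ).norm, (Lp.stronglyMeasurable Φ).measurable.norm, fun _ => abs_nonneg _, ?_⟩
  intro l
  refine ⟨⟨(c l)⁻¹, (inv_pos.2 (hcpos l)).le⟩, ?_⟩
  have hle : c l • h l ≤ Φ := hsum.le_tsum l (fun j _ => hsnn j)
  rw [← Lp.coeFn_le] at hle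
  filter_upwards [hle, Lp.coeFn_smul (c l) (h l), (hH l).coeFn_toLp] with y h1 h2 h3
  rw [h2] at h1
  simp only [Pi.smul_apply, smul_eq_mul] at h1
  rw [hh] at h1
  simp only at h1
  rw [h3] at h1
  change H l y ≤ (c l)⁻¹ * |Φ y|
  rw [inv_mul_eq_div, le_div_iff₀ (hcpos l), mul_comm]
  exact h1.trans (le_abs_self _)

/-- Theorem 1.3, Lipschitz approximation up to sets of small Riesz capacity. -/
theorem lipschitz_approximation_riesz {n k : ℕ} {p : ℝ}
    (hk : 1 < k) (hp : 1 ≤ p) (hkpn : ((k : ℝ) - 1) * p < n)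
    (Ω : Set (Euc n)) (hΩ : IsOpen Ω)
    (f : Euc n → ℝ) (hf : MemSobolevLoc k p Ω f) :
    ∃ C : ℕ → Set (Euc n),
      (∀ l, IsClosed (C l)) ∧ (∀ l, C l ⊆ C (l + 1)) ∧ (∀ l, C l ⊆ Ω) ∧
      (∀ l, ∃ Θ ⊆ C l, rieszCap ((k : ℝ) - 1) p Θ = 0 ∧
        ∃ K : ℝ≥0, LipschitzOnWith K (preciseRep f) (C l \ Θ)) ∧
      rieszCap ((k : ℝ) - 1) p (Ω \ ⋃ l, C l) = 0 := by
  obtain ⟨m, rfl⟩ : ∃ m, k = m + 2 := ⟨k - 2, by omega⟩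
  have hka : (((m + 2 : ℕ) : ℝ) - 1) = (m : ℝ) + 1 := by push_cast; ring
  rw [hka] at hkpn ⊢
  have ha : (0 : ℝ) < (m : ℝ) + 1 := by positivity
  have han : (m : ℝ) + 1 < n := by nlinarith
  have hn : 1 ≤ n := by
    have : (0 : ℝ) < n := ha.trans han
    exact_mod_cast this
  obtain ⟨F, hFc, hFΩ, hFu, hFm⟩ := hΩ.exists_iUnion_isClosed
  set K : ℕ → Set (Euc n) := fun l => closedBall 0 l ∩ F l with hKdef
  have hKc : ∀ l, IsCompact (K l) := fun l => (isCompact_closedBall _ _).inter_right (hFc l)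
  have hKΩ : ∀ l, K l ⊆ Ω := fun l => inter_subset_right.trans (hFΩ l)
  have hKm : Monotone K := fun i j hij =>
    inter_subset_inter (closedBall_subset_closedBall (by exact_mod_cast hij)) (hFm hij)
  choose H hHp hHm hH0 hHL using fun l => local_lip hn m han hp hΩ hf (hKc l) (hKΩ l)
  obtain ⟨φ, hφp, hφm, hφ0, hφH⟩ := lp_sum hp H hHp hH0
  set P := pot ((m : ℝ) + 1) (fun y => ENNReal.ofReal (φ y)) with hP
  refine ⟨fun l => K l ∩ {x | P x ≤ (l : ℝ≥0∞)}, ?_, ?_, ?_, ?_, ?_⟩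
  · intro l
    exact (hKc l).isClosed.inter (pot_closed _ hφm.ennreal_ofReal (fun _ => by simp) _)
  · intro l
    refine inter_subset_inter (hKm (Nat.le_succ l)) fun x hx => ?_
    have hx' : P x ≤ (l : ℝ≥0∞) := hx
    exact hx'.trans (by exact_mod_cast Nat.le_succ l)
  · exact fun l => inter_subset_left.trans (hKΩ l)
  · intro l
    refine ⟨∅, empty_subset _, cap_zero hn _ hp hφp hφ0 (by simp), ?_⟩
    obtain ⟨c, hc⟩ := hφH l
    obtain ⟨L, hL⟩ := hHL l (c * l)
    refine ⟨L, hL.mono ?_⟩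
    rw [sdiff_empty]
    refine inter_subset_inter_right _ fun x hx => ?_
    have h1 : ∀ᵐ y, ENNReal.ofReal (H l y) ≤ c * ENNReal.ofReal (φ y) := by
      filter_upwards [hc] with y hy
      refine (ENNReal.ofReal_le_ofReal hy).trans ?_
      rw [ENNReal.ofReal_mul c.coe_nonneg]
      simp
    have h2 := pot_mono_ae ((m : ℝ) + 1) h1 x
    rw [pot_const] at h2
    refine h2.trans ?_
    push_cast
    gcongr
    exact hx
  · apply cap_zero hn _ hp hφp hφ0
    intro x hx
    by_contra hne
    apply hx.2
    have hxF : x ∈ ⋃ l, F l := by rw [hFu]; exact hx.1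
    obtain ⟨i, hi⟩ := mem_iUnion.1 hxF
    obtain ⟨j, hj⟩ := exists_nat_ge ‖x‖
    obtain ⟨N, hN⟩ := ENNReal.exists_nat_gt hne
    refine mem_iUnion.2 ⟨max (max i j) N, ⟨?_, hFm ((le_max_left i j).trans (le_max_left _ _)) hi⟩, ?_⟩
    · rw [mem_closedBall_zero_iff]
      refine hj.trans ?_
      exact_mod_cast (le_max_right i j).trans (le_max_left _ _)
    · refine hN.le.trans ?_
      exact_mod_cast le_max_right (max i j) N
end

section
/- Let 1 ≤ p < ∞ and let k be a positive integer with kp < n, and let f ∈ W^{k,p}(ℝⁿ). Define g(y) := ∑_{|α| = k} |D^α f(y)| and E := { x ∈ ℝⁿ : (I_k * g)(x) = ∞ }. Then R_{k,p}(E) = 0, and for every x ∈ ℝⁿ \ E the limit lim_{δ→0⁺} ⨍_{B(x,δ)} f(y) dy exists and is a real number. -/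
open MeasureTheory Filter Metric Set
open scoped ENNReal NNReal Topology

theorem taylor_seq (H : ℕ → ℝ → ℝ) (hH : ∀ j t, HasDerivAt (H j) (H (j+1) t) t) (m : ℕ) :
    ∃ P : Polynomial ℝ, P.degree < ((m+1 : ℕ) : WithBot ℕ) ∧ ∀ δ : ℝ,
      H 0 δ = P.eval δ + ∫ t in (1:ℝ)..δ, (δ - t)^m / (m.factorial : ℝ) * H (m+1) t := by
  have hc : ∀ j, Continuous (H j) := fun j =>
    continuous_iff_continuousAt.2 fun t => (hH j t).continuousAt
  induction m with
  | zero =>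
    refine ⟨Polynomial.C (H 0 1), ?_, fun δ => ?_⟩
    · exact lt_of_le_of_lt Polynomial.degree_C_le (by norm_num)
    · have := intervalIntegral.integral_eq_sub_of_hasDerivAt (a := 1) (b := δ)
        (fun t _ => hH 0 t) ((hc 1).intervalIntegrable _ _)
      simp only [zero_add] at this ⊢
      simp [this]
  | succ m ih =>
    obtain ⟨P, hP, hE⟩ := ih
    refine ⟨P + Polynomial.C (H (m+1) 1 / ((m+1).factorial : ℝ)) *
      (Polynomial.X - Polynomial.C 1)^(m+1), ?_, fun δ => ?_⟩
    · refine lt_of_le_of_lt (Polynomial.degree_add_le _ _) (max_lt (hP.trans ?_) ?_)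
      · exact_mod_cast Nat.lt_succ_self _
      · rw [← Polynomial.smul_eq_C_mul]
        refine lt_of_le_of_lt (Polynomial.degree_smul_le _ _) ?_
        rw [Polynomial.degree_pow, Polynomial.degree_X_sub_C]
        simp only [nsmul_eq_mul, mul_one]
        exact_mod_cast Nat.lt_succ_self _
    · have hu : ∀ t ∈ uIcc (1:ℝ) δ, HasDerivAt
          (fun t : ℝ => -((δ - t)^(m+1) / ((m+1).factorial : ℝ))) ((δ - t)^m / (m.factorial : ℝ)) t := by
        intro t _
        have h1 : HasDerivAt (fun t : ℝ => (δ - t)) (-1) t := by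
          simpa using (hasDerivAt_id t).const_sub δ
        have := ((h1.pow (m+1)).div_const ((m+1).factorial : ℝ)).neg
        refine HasDerivAt.congr_deriv this ?_
        have : ((m+1).factorial : ℝ) = (m+1) * m.factorial := by
          push_cast [Nat.factorial_succ]; ring
        have h0 : (m.factorial : ℝ) ≠ 0 := by positivity
        have h2 : (m + 1 : ℝ) ≠ 0 := by positivity
        rw [this]; simp; field_simp
      have := intervalIntegral.integral_deriv_mul_eq_sub hu (fun t _ => hH (m+1) t)
        (Continuous.intervalIntegrable (by fun_prop) _ _) ((hc (m+2)).intervalIntegrable _ _)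
      rw [intervalIntegral.integral_add] at this
      · rw [hE δ]
        simp only [Polynomial.eval_add, Polynomial.eval_mul, Polynomial.eval_C, Polynomial.eval_pow,
          Polynomial.eval_sub, Polynomial.eval_X]
        simp only [neg_mul, intervalIntegral.integral_neg] at this
        simp only [sub_self, ne_eq, Nat.add_eq_zero_iff, one_ne_zero, and_false, not_false_eq_true, zero_pow,
           zero_div, zero_mul] at this
        have e : m + 1 + 1 = m + 2 := rfl
        rw [e] at *
        linear_combination this
      · exact Continuous.intervalIntegrable (by have := hc (m+1); fun_prop) _ _
      · exact Continuous.intervalIntegrable (by have := hc (m+2); fun_prop) _ _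

theorem listDeriv_contDiff {n : ℕ} (l : List (Fin n)) {η : Euc n → ℝ}
    (h : ContDiff ℝ (⊤ : ℕ∞) η) : ContDiff ℝ (⊤ : ℕ∞) (listDeriv l η) := by
  induction l with
  | nil => exact h
  | cons i l ih =>
    simp only [listDeriv]
    exact (ih.fderiv_right (by simp)).clm_apply contDiff_const

theorem listDeriv_supp {n : ℕ} (l : List (Fin n)) {η : Euc n → ℝ}
    (h : HasCompactSupport η) : HasCompactSupport (listDeriv l η) := by
  induction l with
  | nil => exact h
  | cons i l ih =>
    simp only [listDeriv]
    exact ih.fderiv_apply (𝕜 := ℝ) _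

theorem listDeriv_perm {n : ℕ} {l l' : List (Fin n)} (hl : l.Perm l') {η : Euc n → ℝ}
    (h : ContDiff ℝ (⊤ : ℕ∞) η) : listDeriv l η = listDeriv l' η := by
  induction hl with
  | nil => rfl
  | cons i _ ih => simp only [listDeriv, ih]
  | swap i j l =>
    have hc := listDeriv_contDiff l h
    set u := listDeriv l η
    funext x
    have hd : DifferentiableAt ℝ (fderiv ℝ u) x :=
      ((hc.fderiv_right (m := (⊤ : ℕ∞)) (by simp)).differentiable (by simp)).differentiableAt
    have key : ∀ a b : Euc n, fderiv ℝ (fun y => fderiv ℝ u y a) x b =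
        fderiv ℝ (fderiv ℝ u) x b a := by
      intro a b
      rw [fderiv_clm_apply hd (differentiableAt_const _)]
      simp
    have hs : IsSymmSndFDerivAt ℝ u x :=
      hc.contDiffAt.isSymmSndFDerivAt (by simp; exact WithTop.coe_le_coe.2 (le_top : (2:ℕ∞) ≤ ⊤))
    show fderiv ℝ (fun y => fderiv ℝ u y _) x _ = fderiv ℝ (fun y => fderiv ℝ u y _) x _
    rw [key, key, hs.eq]
  | trans _ _ h1 h2 => exact h1.trans h2

theorem listDeriv_translate {n : ℕ} (l : List (Fin n)) (η : Euc n → ℝ) (u : Euc n) :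
    listDeriv l (fun w => η (w - u)) = fun w => listDeriv l η (w - u) := by
  induction l with
  | nil => rfl
  | cons i l ih =>
    simp only [listDeriv, ih]
    funext w
    rw [fderiv_comp_sub (𝕜 := ℝ) (f := listDeriv l η) u]

/-- counting multi-index of a sequence -/
def cnt {n k : ℕ} (s : Fin k → Fin n) : Fin n → ℕ := fun i => (List.ofFn s).count i

theorem mderiv_cnt {n k : ℕ} (s : Fin k → Fin n) {η : Euc n → ℝ}
    (h : ContDiff ℝ (⊤ : ℕ∞) η) : mderiv (cnt s) η = listDeriv (List.ofFn s) η := by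
  unfold mderiv
  apply listDeriv_perm _ h
  rw [List.perm_iff_count]
  intro a
  rw [List.count_flatMap]
  simp only [Function.comp_def, List.count_replicate, cnt]
  rw [← List.ofFn_eq_map, List.sum_ofFn]
  simp

theorem mdeg_cnt {n k : ℕ} (s : Fin k → Fin n) : mdeg (cnt s) = k := by
  unfold mdeg cnt
  have := Multiset.sum_count_eq_card (s := Finset.univ) (m := ((List.ofFn s : List (Fin n)) : Multiset (Fin n))) (by simp)
  simpa using this

theorem cnt_le {n k : ℕ} (s : Fin k → Fin n) (i : Fin n) : cnt s i ≤ k := by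
  have := List.count_le_length (a := i) (l := List.ofFn s)
  simpa [cnt] using this

theorem hasDerivAt_seq {n : ℕ} {η : Euc n → ℝ} (h : ContDiff ℝ (⊤ : ℕ∞) η) (z y : Euc n)
    (j : ℕ) (t : ℝ) :
    HasDerivAt (fun t : ℝ => (-1)^j * ∑ s : Fin j → Fin n, (∏ i, y (s i)) * listDeriv (List.ofFn s) η (z - t • y))
      ((-1)^(j+1) * ∑ s : Fin (j+1) → Fin n, (∏ i, y (s i)) * listDeriv (List.ofFn s) η (z - t • y)) t := by
  have h1 : ∀ s : Fin j → Fin n, HasDerivAt (fun t : ℝ => listDeriv (List.ofFn s) η (z - t • y))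
      (-∑ a : Fin n, y a * listDeriv (a :: List.ofFn s) η (z - t • y)) t := by
    intro s
    have hd : HasFDerivAt (listDeriv (List.ofFn s) η) _ (z - t • y) :=
      ((listDeriv_contDiff (List.ofFn s) h).differentiable (by simp)).differentiableAt.hasFDerivAt
    have hl : HasDerivAt (fun t : ℝ => z - t • y) (-y) t := by
      simpa using ((hasDerivAt_id t).smul_const y).const_sub z
    have := hd.comp_hasDerivAt t hl
    refine HasDerivAt.congr_deriv this ?_
    rw [map_neg]
    congr 1
    symm
    have hy : y = ∑ a : Fin n, y a • EuclideanSpace.single a (1:ℝ) := by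
      ext b; simp [Finset.sum_apply, Pi.single_apply]
    conv_rhs => rw [hy]
    simp only [map_sum, map_smul, smul_eq_mul, listDeriv]
    refine Finset.sum_congr rfl fun a _ => ?_
    rw [← hy]
  have h2 := (HasDerivAt.fun_sum (u := Finset.univ) fun s _ => (h1 s).const_mul (∏ i, y (s i))).const_mul ((-1:ℝ)^j)
  refine HasDerivAt.congr_deriv h2 (Eq.symm ?_)
  rw [← (Fin.consEquiv (fun _ => Fin n)).sum_comp, Fintype.sum_prod_type, Finset.sum_comm, pow_succ, mul_assoc]
  congr 1
  rw [neg_one_mul, ← Finset.sum_neg_distrib]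
  refine Finset.sum_congr rfl fun s _ => ?_
  rw [mul_neg, Finset.mul_sum]
  congr 1
  refine Finset.sum_congr rfl fun a _ => ?_
  simp [Fin.consEquiv, Fin.prod_univ_succ, List.ofFn_succ]
  ring

/-- bounded measurable compactly supported kernels -/
structure Ker {n : ℕ} (K : Euc n → ℝ) : Prop where
  meas : Measurable K
  bdd : ∃ C, ∀ u, |K u| ≤ C
  supp : ∃ R, ∀ u, R < ‖u‖ → K u = 0

theorem Ker.of_cont {n : ℕ} {K : Euc n → ℝ} (hc : Continuous K) (hs : HasCompactSupport K) :
    Ker K := by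
  refine ⟨hc.measurable, ?_, ?_⟩
  · obtain ⟨C, hC⟩ := hc.bounded_above_of_compact_support hs
    exact ⟨C, hC⟩
  · obtain ⟨R, hR⟩ := hs.isCompact.isBounded.subset_closedBall 0
    refine ⟨R, fun u hu => ?_⟩
    by_contra h
    have := hR (subset_tsupport _ h)
    simp at this
    linarith

theorem Ker.integrable {n : ℕ} {K : Euc n → ℝ} (hK : Ker K) : Integrable K := by
  obtain ⟨C, hC⟩ := hK.bdd
  obtain ⟨R, hR⟩ := hK.supp
  have h1 : IntegrableOn K (closedBall 0 R) :=
    Measure.integrableOn_of_bounded (M := C) (isCompact_closedBall _ _).measure_lt_top.ne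
      hK.meas.aestronglyMeasurable (Eventually.of_forall hC)
  refine (integrableOn_iff_integrable_of_support_subset fun u hu => ?_).1 h1
  by_contra h
  simp at h
  exact hu (hR u h)

theorem Ker.prod {n : ℕ} {K L G : Euc n → ℝ} (hK : Ker K) (hL : Ker L)
    (hG : LocallyIntegrable G) :
    Integrable (fun q : Euc n × Euc n => G q.1 * (K q.2 * L (q.1 - q.2)))
      (volume.prod volume) := by
  obtain ⟨C, hC⟩ := hL.bdd
  obtain ⟨R, hR⟩ := hK.supp
  obtain ⟨S, hS⟩ := hL.supp
  have h1 : Integrable ((closedBall (0 : Euc n) (R + S)).indicator G) :=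
    (integrable_indicator_iff isClosed_closedBall.measurableSet).2
      (hG.integrableOn_isCompact (isCompact_closedBall _ _))
  have h2 := (h1.mul_prod hK.integrable).bdd_mul (c := C)
    (f := fun q : Euc n × Euc n => L (q.1 - q.2)) (hL.meas.comp (by fun_prop)).aestronglyMeasurable
    (Eventually.of_forall fun q => hC _)
  refine h2.congr (Eventually.of_forall fun q => ?_)
  by_cases hq : ‖q.1‖ ≤ R + S
  · have : q.1 ∈ closedBall (0 : Euc n) (R + S) := by simpa using hq
    simp only [indicator_of_mem this]; ring
  · have h3 : K q.2 * L (q.1 - q.2) = 0 := by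
      by_cases h4 : R < ‖q.2‖
      · rw [hR _ h4, zero_mul]
      · rw [hS, mul_zero]
        have := norm_sub_norm_le q.1 q.2
        linarith
    have : q.1 ∉ closedBall (0 : Euc n) (R + S) := by simpa using hq
    simp only [indicator_of_notMem this, h3]; ring

theorem Ker.swap2 {n : ℕ} {K L G : Euc n → ℝ} (hK : Ker K) (hL : Ker L)
    (hG : LocallyIntegrable G) :
    ∫ w, G w * ∫ u, K u * L (w - u) = ∫ u, K u * ∫ w, G w * L (w - u) := by
  have := integral_integral_swap (f := fun w u => G w * (K u * L (w - u))) (hK.prod hL hG)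
  simp only [integral_const_mul] at this
  rw [this]
  congr 1; funext u
  rw [← integral_const_mul]
  congr 1; funext w
  ring

theorem Ker.swap1 {n : ℕ} {K L G : Euc n → ℝ} (hK : Ker K) (hL : Ker L)
    (hG : LocallyIntegrable G) :
    ∫ x, L x * ∫ u, K u * G (x + u) = ∫ w, G w * ∫ u, K u * L (w - u) := by
  have h1 : ∀ x, ∫ u, K u * G (x + u) = ∫ w, G w * K (w - x) := by
    intro x
    rw [← integral_add_left_eq_self (fun w => G w * K (w - x)) x]
    congr 1; funext u
    rw [add_sub_cancel_left, mul_comm]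
  have h2 : ∀ w, ∫ u, K u * L (w - u) = ∫ x, L x * K (w - x) := by
    intro w
    rw [← integral_sub_left_eq_self _ _ w]
    congr 1; funext u
    rw [sub_sub_cancel, mul_comm]
  simp only [h1, h2]
  exact (hL.swap2 hK hG).symm

theorem Ker.continuous {n : ℕ} {K G : Euc n → ℝ} (hK : Ker K) (hc : ∀ᵐ u, ContinuousAt K u)
    (hG : LocallyIntegrable G) : Continuous fun x => ∫ u, K u * G (x + u) := by
  have h1 : ∀ x, ∫ u, K u * G (x + u) = ∫ w, G w * K (w - x) := by
    intro x
    rw [← integral_add_left_eq_self (fun w => G w * K (w - x)) x]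
    congr 1; funext u
    rw [add_sub_cancel_left, mul_comm]
  simp only [h1]
  obtain ⟨C, hC⟩ := hK.bdd
  obtain ⟨R, hR⟩ := hK.supp
  have hC0 : 0 ≤ C := (abs_nonneg _).trans (hC 0)
  rw [continuous_iff_continuousAt]
  intro x0
  have hi : Integrable ((closedBall x0 (R + 1)).indicator G) :=
    (integrable_indicator_iff isClosed_closedBall.measurableSet).2
      (hG.integrableOn_isCompact (isCompact_closedBall _ _))
  refine continuousAt_of_dominated (bound := fun w => ‖(closedBall x0 (R + 1)).indicator G w‖ * C)
    (Eventually.of_forall fun x => ?_) ?_ (hi.norm.mul_const C) ?_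
  · exact hG.aestronglyMeasurable.mul (hK.meas.comp (by fun_prop)).aestronglyMeasurable
  · filter_upwards [ball_mem_nhds x0 one_pos] with x hx
    refine Eventually.of_forall fun w => ?_
    by_cases hw : w ∈ closedBall x0 (R + 1)
    · rw [indicator_of_mem hw, norm_mul]
      exact mul_le_mul_of_nonneg_left (hC _) (norm_nonneg _)
    · rw [hR]
      · simp; positivity
      · simp only [mem_closedBall, not_le, dist_eq_norm] at hw
        simp only [mem_ball, dist_eq_norm] at hx
        have := norm_sub_le_norm_sub_add_norm_sub w x x0
        linarith
  · have := (measurePreserving_sub_right (volume : Measure (Euc n)) x0).quasiMeasurePreserving.ae hc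
    filter_upwards [this] with w hw
    refine continuousAt_const.mul ?_
    exact ContinuousAt.comp (f := fun x => w - x) (g := K) hw (by fun_prop)

/-- Taylor weight -/
noncomputable def Wk (n k : ℕ) (δ t : ℝ) : ℝ :=
  if δ < t ∧ t ≤ 1 then (t - δ) ^ (k - 1) / ((k - 1).factorial : ℝ) / t ^ (n + k) else 0

/-- radial kernel -/
noncomputable def qk (n k : ℕ) (δ r : ℝ) : ℝ := ∫ t, if r < t then Wk n k δ t else 0

/-- remainder kernel -/
noncomputable def kap {n k : ℕ} (s : Fin k → Fin n) (δ : ℝ) (u : Euc n) : ℝ :=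
  (∏ i, u (s i)) * qk n k δ ‖u‖

/-- averaging kernel -/
noncomputable def ak (n : ℕ) (δ : ℝ) (u : Euc n) : ℝ := if ‖u‖ < δ then (δ ^ n)⁻¹ else 0

theorem Wk_meas (n k : ℕ) (δ : ℝ) : Measurable (Wk n k δ) := by
  unfold Wk
  refine Measurable.ite ?_ (by fun_prop) measurable_const
  exact measurableSet_Ioc

theorem Wk_nonneg (n k : ℕ) {δ : ℝ} (hδ : 0 ≤ δ) (t : ℝ) : 0 ≤ Wk n k δ t := by
  unfold Wk
  split_ifs with h
  · have : 0 ≤ t - δ := by linarith [h.1]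
    have : 0 ≤ t := by linarith [h.1]
    positivity
  · exact le_rfl

theorem Wk_le (n k : ℕ) (hk : 0 < k) {δ : ℝ} (hδ : 0 ≤ δ) {t : ℝ} (ht : 0 < t) :
    Wk n k δ t ≤ (t ^ (n + 1))⁻¹ := by
  unfold Wk
  split_ifs with h
  · have h0 : 0 ≤ t - δ := by linarith [h.1]
    have h1 : (t - δ) ^ (k - 1) ≤ t ^ (k - 1) := pow_le_pow_left₀ h0 (by linarith) _
    have h2 : (1:ℝ) ≤ ((k - 1).factorial : ℝ) := by exact_mod_cast Nat.one_le_iff_ne_zero.2 (Nat.factorial_ne_zero _)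
    have h3 : (t - δ) ^ (k - 1) / ((k - 1).factorial : ℝ) ≤ t ^ (k - 1) :=
      (div_le_self (by positivity) h2).trans h1
    calc _ ≤ t ^ (k - 1) / t ^ (n + k) := by gcongr
      _ = (t ^ (n + 1))⁻¹ := by
        have : n + k = (k - 1) + (n + 1) := by omega
        rw [this, pow_add]; field_simp
  · positivity

theorem qint (n : ℕ) {r : ℝ} (hr : 0 < r) (h : n ≠ 0) :
    IntegrableOn (fun t : ℝ => (t ^ (n + 1))⁻¹) (Ioi r) ∧
      ∫ t in Ioi r, (t ^ (n + 1))⁻¹ = (r ^ n)⁻¹ / n := by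
  have hn : (-((n:ℝ) + 1)) < -1 := by
    have : (0:ℝ) < n := by positivity
    linarith
  have e : EqOn (fun t : ℝ => t ^ (-((n:ℝ) + 1))) (fun t : ℝ => (t ^ (n + 1))⁻¹) (Ioi r) := by
    intro t ht
    have : 0 < t := hr.trans ht
    simp only
    rw [Real.rpow_neg this.le]
    congr 1
    exact_mod_cast Real.rpow_natCast t (n+1)
  refine ⟨(integrableOn_Ioi_rpow_of_lt hn hr).congr_fun e measurableSet_Ioi, ?_⟩
  rw [← setIntegral_congr_fun measurableSet_Ioi e, integral_Ioi_rpow_of_lt hn hr]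
  have : -((n:ℝ) + 1) + 1 = -n := by ring
  rw [this, Real.rpow_neg hr.le, Real.rpow_natCast, neg_div_neg_eq]

theorem qk_nonneg (n k : ℕ) {δ : ℝ} (hδ : 0 ≤ δ) (r : ℝ) : 0 ≤ qk n k δ r := by
  refine integral_nonneg fun t => ?_
  show 0 ≤ ite _ _ _
  split_ifs
  · exact Wk_nonneg n k hδ t
  · exact le_rfl

theorem qk_dom (n k : ℕ) (hk : 0 < k) {δ r : ℝ} (hδ : 0 ≤ δ) (hr : 0 < r) (t : ℝ) :
    (if r < t then Wk n k δ t else 0) ≤ (Ioi r).indicator (fun t : ℝ => (t ^ (n + 1))⁻¹) t := by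
  by_cases h : r < t
  · rw [if_pos h, indicator_of_mem (show t ∈ Ioi r from h)]
    exact Wk_le n k hk hδ (hr.trans h)
  · rw [if_neg h, indicator_of_notMem (show t ∉ Ioi r from h)]

theorem qk_le (n k : ℕ) (hk : 0 < k) {δ r : ℝ} (hδ : 0 ≤ δ) (hr : 0 < r) (h : n ≠ 0) :
    qk n k δ r ≤ (r ^ n)⁻¹ / n := by
  obtain ⟨h1, h2⟩ := qint n hr h
  rw [← h2, ← integral_indicator measurableSet_Ioi]
  refine integral_mono_of_nonneg (Eventually.of_forall fun t => ?_)
    ((integrable_indicator_iff measurableSet_Ioi).2 h1)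
    (Eventually.of_forall fun t => qk_dom n k hk hδ hr t)
  show 0 ≤ ite _ _ _
  split_ifs
  · exact Wk_nonneg n k hδ t
  · exact le_rfl

theorem qk_meas_aux (n k : ℕ) (δ r : ℝ) : Measurable fun t => if r < t then Wk n k δ t else 0 :=
  Measurable.ite measurableSet_Ioi (Wk_meas n k δ) measurable_const

theorem qk_tendsto (n k : ℕ) (hk : 0 < k) {r : ℝ} (hr : 0 < r) (h : n ≠ 0) :
    Tendsto (fun δ => qk n k δ r) (𝓝[>] 0) (𝓝 (qk n k 0 r)) := by
  obtain ⟨h1, -⟩ := qint n hr h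
  refine tendsto_integral_filter_of_dominated_convergence _
    (Eventually.of_forall fun δ => (qk_meas_aux n k δ r).aestronglyMeasurable) ?_
    ((integrable_indicator_iff measurableSet_Ioi).2 h1) ?_
  · filter_upwards [self_mem_nhdsWithin] with δ hδ
    refine Eventually.of_forall fun t => ?_
    rw [Real.norm_of_nonneg]
    · exact qk_dom n k hk (le_of_lt hδ) hr t
    · split_ifs
      · exact Wk_nonneg n k (le_of_lt hδ) t
      · exact le_rfl
  · refine Eventually.of_forall fun t => ?_
    by_cases ht : r < t
    · simp only [ht, if_true]
      have ht0 : 0 < t := hr.trans ht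
      by_cases h1 : t ≤ 1
      · have : ContinuousAt (fun δ : ℝ => (t - δ) ^ (k - 1) / ((k - 1).factorial : ℝ) / t ^ (n + k)) 0 := by
          fun_prop
        have h2 : Wk n k 0 t = (t - 0) ^ (k - 1) / ((k - 1).factorial : ℝ) / t ^ (n + k) := by
          simp only [Wk, ht0, h1, and_self, if_true]
        rw [h2]
        refine (this.tendsto.mono_left nhdsWithin_le_nhds).congr' ?_
        filter_upwards [Ioo_mem_nhdsGT ht0] with δ hδ
        simp only [Wk, hδ.2, h1, and_self, if_true]
      · simp only [Wk, h1, and_false, if_false]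
        exact tendsto_const_nhds
    · simp only [ht, if_false]
      exact tendsto_const_nhds

theorem Wk_bound (n k : ℕ) (hk : 0 < k) {δ : ℝ} (hδ : 0 < δ) (t : ℝ) :
    ‖Wk n k δ t‖ ≤ (Ioc δ 1).indicator (fun _ => (δ ^ (n + 1))⁻¹) t := by
  rw [Real.norm_of_nonneg (Wk_nonneg n k hδ.le t)]
  by_cases h : t ∈ Ioc δ 1
  · rw [indicator_of_mem h]
    refine (Wk_le n k hk hδ.le (hδ.trans h.1)).trans ?_
    have := h.1
    gcongr
  · rw [indicator_of_notMem h]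
    unfold Wk
    rw [if_neg (show ¬(δ < t ∧ t ≤ 1) from h)]

theorem qk_continuous (n k : ℕ) (hk : 0 < k) {δ : ℝ} (hδ : 0 < δ) :
    Continuous (qk n k δ) := by
  rw [continuous_iff_continuousAt]
  intro r0
  refine continuousAt_of_dominated (bound := (Ioc δ 1).indicator (fun _ => (δ ^ (n + 1))⁻¹))
    (Eventually.of_forall fun r => (qk_meas_aux n k δ r).aestronglyMeasurable)
    (Eventually.of_forall fun r => Eventually.of_forall fun t => ?_) ?_ ?_
  · refine le_trans ?_ (Wk_bound n k hk hδ t)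
    split_ifs
    · exact le_rfl
    · simp
  · refine (integrable_indicator_iff measurableSet_Ioc).2 ?_
    exact integrableOn_const (by simp)
  · have : ∀ᵐ t : ℝ, t ≠ r0 := by
      rw [ae_iff]; simp
    filter_upwards [this] with t ht
    rcases lt_or_gt_of_ne ht with h | h
    · refine (continuousAt_const (y := (0:ℝ))).congr ?_
      filter_upwards [lt_mem_nhds h] with r hr
      rw [if_neg (not_lt.2 hr.le)]
    · refine (continuousAt_const (y := Wk n k δ t)).congr ?_
      filter_upwards [gt_mem_nhds h] with r hr
      rw [if_pos hr]

theorem qk_zero (n k : ℕ) (δ : ℝ) {r : ℝ} (hr : 1 ≤ r) : qk n k δ r = 0 := by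
  unfold qk
  rw [integral_eq_zero_of_ae]
  refine Eventually.of_forall fun t => ?_
  by_cases h : r < t
  · have : ¬ t ≤ 1 := by linarith
    simp [Wk, this]
  · simp [h]

theorem kap_continuous {n k : ℕ} (hk : 0 < k) (s : Fin k → Fin n) {δ : ℝ} (hδ : 0 < δ) :
    Continuous (kap s δ) := by
  unfold kap
  have := qk_continuous n k hk hδ
  fun_prop

theorem kap_ker {n k : ℕ} (hk : 0 < k) (s : Fin k → Fin n) {δ : ℝ} (hδ : 0 < δ) :
    Ker (kap s δ) := by
  refine Ker.of_cont (kap_continuous hk s hδ) ?_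
  refine HasCompactSupport.of_support_subset_isCompact (isCompact_closedBall 0 1) fun u hu => ?_
  by_contra h
  simp at h
  exact hu (by simp [kap, qk_zero n k δ h.le])

theorem ak_ker (n : ℕ) {δ : ℝ} (hδ : 0 < δ) : Ker (ak n δ) := by
  refine ⟨?_, ⟨(δ ^ n)⁻¹, fun u => ?_⟩, ⟨δ, fun u hu => ?_⟩⟩
  · exact Measurable.ite (measurableSet_lt measurable_norm measurable_const) measurable_const measurable_const
  · unfold ak
    split_ifs
    · rw [abs_of_pos (by positivity)]
    · simp; positivity
  · simp [ak, hu.le]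

theorem ak_cont (n : ℕ) {δ : ℝ} (hδ : 0 < δ) : ∀ᵐ u, ContinuousAt (ak n δ) u := by
  have : ∀ᵐ u : Euc n, u ∉ sphere (0 : Euc n) δ :=
    measure_eq_zero_iff_ae_notMem.1 (Measure.addHaar_sphere_of_ne_zero _ _ hδ.ne')
  filter_upwards [this] with u hu
  have hu : ‖u‖ ≠ δ := by simpa using hu
  rcases lt_or_gt_of_ne hu with h | h
  · refine (continuousAt_const (y := (δ ^ n)⁻¹)).congr ?_
    filter_upwards [continuous_norm.continuousAt.eventually (gt_mem_nhds h)] with r hr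
    simp only [ak, hr, if_true]
  · refine (continuousAt_const (y := (0:ℝ))).congr ?_
    filter_upwards [continuous_norm.continuousAt.eventually (lt_mem_nhds h)] with r hr
    simp only [ak, not_lt.2 hr.le, if_false]

theorem coord_prod_le {n k : ℕ} (s : Fin k → Fin n) (u : Euc n) :
    |∏ i, u (s i)| ≤ ‖u‖ ^ k := by
  rw [Finset.abs_prod]
  refine (Finset.prod_le_prod (g := fun _ => ‖u‖) (fun i _ => abs_nonneg _) fun i _ => ?_).trans (by simp)
  simpa using PiLp.norm_apply_le u (s i)

theorem kap_le {n k : ℕ} (hk : 0 < k) (s : Fin k → Fin n) {δ : ℝ} (hδ : 0 < δ) (h : n ≠ 0)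
    {u : Euc n} (hu : u ≠ 0) :
    |kap s δ u| ≤ ‖u‖ ^ ((k:ℝ) - n) := by
  have h0 : 0 < ‖u‖ := norm_pos_iff.2 hu
  unfold kap
  rw [abs_mul, abs_of_nonneg (qk_nonneg n k hδ.le _)]
  have h1 := qk_le n k hk hδ.le h0 h
  have h2 : (‖u‖ ^ n)⁻¹ / (n:ℝ) ≤ (‖u‖ ^ n)⁻¹ := by
    refine div_le_self (by positivity) ?_
    exact_mod_cast Nat.one_le_iff_ne_zero.2 h
  rw [Real.rpow_sub h0, Real.rpow_natCast, Real.rpow_natCast, div_eq_mul_inv]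
  exact mul_le_mul (coord_prod_le s u) (h1.trans h2) (qk_nonneg n k hδ.le _) (by positivity)

theorem kap_tendsto {n k : ℕ} (hk : 0 < k) (s : Fin k → Fin n) (h : n ≠ 0)
    {u : Euc n} (hu : u ≠ 0) :
    Tendsto (fun δ => kap s δ u) (𝓝[>] 0) (𝓝 (kap s 0 u)) :=
  (qk_tendsto n k hk (norm_pos_iff.2 hu) h).const_mul _

theorem ak_integral {n : ℕ} {δ : ℝ} (hδ : 0 < δ) (θ : Euc n → ℝ) :
    ∫ u, ak n δ u * θ u = ∫ y in ball (0 : Euc n) 1, θ (δ • y) := by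
  rw [Measure.setIntegral_comp_smul_of_pos volume θ _ hδ, smul_unitBall_of_pos hδ]
  rw [← integral_indicator measurableSet_ball, finrank_euclideanSpace_fin, smul_eq_mul,
    ← integral_const_mul]
  congr 1; funext u
  by_cases h : ‖u‖ < δ
  · rw [indicator_of_mem (by simpa using h)]
    simp [ak, h]
  · rw [indicator_of_notMem (by simpa using h)]
    simp [ak, h]

theorem kap_fubini {n k : ℕ} (hk : 0 < k) (s : Fin k → Fin n) {δ : ℝ} (hδ : 0 < δ)
    {θ : Euc n → ℝ} (hθ : Continuous θ) :
    IntegrableOn (fun y : Euc n => (∏ i, y (s i)) *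
      ∫ t in Ioc δ 1, (t - δ) ^ (k - 1) / ((k - 1).factorial : ℝ) * θ (t • y)) (ball 0 1) ∧
    ∫ u, kap s δ u * θ u = ∫ y in ball (0 : Euc n) 1, (∏ i, y (s i)) *
      ∫ t in Ioc δ 1, (t - δ) ^ (k - 1) / ((k - 1).factorial : ℝ) * θ (t • y) := by
  -- integrability of the rescaled integrand
  have hI2 : Integrable (fun q : Euc n × ℝ => (∏ i, q.1 (s i)) *
      ((q.2 - δ) ^ (k - 1) / ((k - 1).factorial : ℝ) * θ (q.2 • q.1)))
      ((volume.restrict (ball (0 : Euc n) 1)).prod (volume.restrict (Ioc δ 1))) := by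
    rw [Measure.prod_restrict]
    have hc : Continuous (fun q : Euc n × ℝ => (∏ i, q.1 (s i)) *
      ((q.2 - δ) ^ (k - 1) / ((k - 1).factorial : ℝ) * θ (q.2 • q.1))) := by fun_prop
    refine IntegrableOn.mono_set (hc.continuousOn.integrableOn_compact
      ((isCompact_closedBall (0 : Euc n) 1).prod (isCompact_Icc (a := δ) (b := (1:ℝ))))) ?_
    exact prod_mono ball_subset_closedBall Ioc_subset_Icc_self
  constructor
  · have := hI2.integral_prod_left
    simp only [integral_const_mul] at this
    exact this
  -- left side
  obtain ⟨C, hC⟩ := (isCompact_closedBall (0 : Euc n) 1).exists_bound_of_continuousOn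
    (f := fun u : Euc n => (∏ i, u (s i)) * θ u) (by fun_prop)
  have hI1 : Integrable (fun q : Euc n × ℝ => (if ‖q.1‖ < q.2 then Wk n k δ q.2 else 0) *
      ((∏ i, q.1 (s i)) * θ q.1)) (volume.prod volume) := by
    have hm : Measurable (fun q : Euc n × ℝ => (if ‖q.1‖ < q.2 then Wk n k δ q.2 else 0) *
      ((∏ i, q.1 (s i)) * θ q.1)) := by
      refine Measurable.mul (Measurable.ite (measurableSet_lt (by fun_prop) (by fun_prop))
        ((Wk_meas n k δ).comp measurable_snd) measurable_const) ?_
      exact Continuous.measurable (by fun_prop)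
    have hS : IntegrableOn (fun q : Euc n × ℝ => (if ‖q.1‖ < q.2 then Wk n k δ q.2 else 0) *
      ((∏ i, q.1 (s i)) * θ q.1)) (closedBall 0 1 ×ˢ Icc δ 1) (volume.prod volume) := by
      refine Measure.integrableOn_of_bounded (M := (δ ^ (n + 1))⁻¹ * C) ?_ hm.aestronglyMeasurable ?_
      · exact ((isCompact_closedBall (0 : Euc n) 1).prod
          (isCompact_Icc (a := δ) (b := (1:ℝ)))).measure_lt_top.ne
      · refine ae_restrict_of_forall_mem (measurableSet_closedBall.prod measurableSet_Icc) ?_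
        intro q hq
        rw [norm_mul]
        refine mul_le_mul ?_ (hC _ hq.1) (norm_nonneg _) (by positivity)
        split_ifs
        · refine (Wk_bound n k hk hδ q.2).trans ?_
          refine indicator_le_self' (fun _ _ => by positivity) _
        · simp; positivity
    refine (integrableOn_iff_integrable_of_support_subset fun q hq => ?_).1 hS
    have h1 : ‖q.1‖ < q.2 := by
      by_contra h; exact hq (by simp [h])
    have h2 : δ < q.2 ∧ q.2 ≤ 1 := by
      by_contra h; exact hq (by simp only [Wk, if_neg h]; simp)
    refine ⟨?_, h2.1.le, h2.2⟩
    simp; linarith [h2.2]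
  have e1 : ∫ u, kap s δ u * θ u = ∫ u : Euc n, ∫ t : ℝ, (if ‖u‖ < t then Wk n k δ t else 0) *
      ((∏ i, u (s i)) * θ u) := by
    congr 1; funext u
    rw [integral_mul_const]
    unfold kap qk
    ring
  rw [e1, integral_integral_swap hI1]
  have e2 : ∫ y in ball (0 : Euc n) 1, (∏ i, y (s i)) *
      ∫ t in Ioc δ 1, (t - δ) ^ (k - 1) / ((k - 1).factorial : ℝ) * θ (t • y)
      = ∫ y in ball (0 : Euc n) 1, ∫ t in Ioc δ 1, (∏ i, y (s i)) *
       ((t - δ) ^ (k - 1) / ((k - 1).factorial : ℝ) * θ (t • y)) := by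
    simp only [integral_const_mul]
  rw [e2, integral_integral_swap (f := fun (y : Euc n) (t : ℝ) => (∏ i, y (s i)) *
       ((t - δ) ^ (k - 1) / ((k - 1).factorial : ℝ) * θ (t • y))) hI2]
  rw [← integral_indicator measurableSet_Ioc]
  congr 1; funext t
  by_cases ht : t ∈ Ioc δ 1
  · rw [indicator_of_mem ht]
    have ht0 : 0 < t := hδ.trans ht.1
    have h1 := ak_integral (n := n) ht0 (fun u => (∏ i, u (s i)) * θ u)
    have hW : Wk n k δ t = (t - δ) ^ (k - 1) / ((k - 1).factorial : ℝ) / t ^ (n + k) := by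
      unfold Wk; rw [if_pos (show δ < t ∧ t ≤ 1 from ht)]
    have l1 : ∀ u : Euc n, (if ‖u‖ < t then Wk n k δ t else 0) * ((∏ i, u (s i)) * θ u)
        = ((t - δ) ^ (k - 1) / ((k - 1).factorial : ℝ) / t ^ k) *
          (ak n t u * ((∏ i, u (s i)) * θ u)) := by
      intro u
      unfold ak
      split_ifs
      · rw [hW, pow_add]; field_simp
      · simp
    have l2 : ∀ y : Euc n, (∏ i, y (s i)) * ((t - δ) ^ (k - 1) / ((k - 1).factorial : ℝ) * θ (t • y))
       = ((t - δ) ^ (k - 1) / ((k - 1).factorial : ℝ) / t ^ k) *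
         ((∏ i, (t • y) (s i)) * θ (t • y)) := by
      intro y
      simp only [PiLp.smul_apply, smul_eq_mul, Finset.prod_mul_distrib, Finset.prod_const,
        Finset.card_univ, Fintype.card_fin]
      field_simp
    simp only [l1, l2, integral_const_mul, h1]
  · rw [indicator_of_notMem ht]
    have : Wk n k δ t = 0 := by unfold Wk; rw [if_neg (show ¬ (δ < t ∧ t ≤ 1) from ht)]
    simp [this]

/-- interpolation nodes -/
noncomputable def nd (i : ℕ) : ℝ := ((i : ℝ) + 1)⁻¹

theorem nd_pos (i : ℕ) : 0 < nd i := by unfold nd; positivity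
theorem nd_le (i : ℕ) : nd i ≤ 1 := by
  unfold nd; exact inv_le_one_of_one_le₀ (by linarith [Nat.cast_nonneg (α := ℝ) i])
theorem nd_inj : Function.Injective nd := by
  intro i j h
  unfold nd at h
  have := inv_injective h
  exact_mod_cast (add_right_cancel this)

/-- Lagrange coefficients -/
noncomputable def lag (k i : ℕ) (δ : ℝ) : ℝ := (Lagrange.basis (Finset.range k) nd i).eval δ

theorem lag_interp {k : ℕ} {P : Polynomial ℝ} (hP : P.degree < (k : WithBot ℕ)) (δ : ℝ) :
    P.eval δ = ∑ i ∈ Finset.range k, lag k i δ * P.eval (nd i) := by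
  have h := Lagrange.eq_interpolate (s := Finset.range k) (v := nd) nd_inj.injOn
    (by simpa using hP : P.degree < (Finset.range k).card)
  conv_lhs => rw [h]
  rw [Lagrange.interpolate_apply, Polynomial.eval_finsetSum]
  refine Finset.sum_congr rfl fun i _ => ?_
  simp [lag, mul_comm]

/-- smooth defect -/
noncomputable def Phi {n : ℕ} (k : ℕ) (η : Euc n → ℝ) (z : Euc n) (δ : ℝ) : ℝ :=
  (∫ u, ak n δ u * η (z - u)) -
    ∑ s : Fin k → Fin n, ∫ u, kap s δ u * listDeriv (List.ofFn s) η (z - u)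

theorem Phi_interp {n k : ℕ} (hk : 0 < k) {η : Euc n → ℝ} (h : ContDiff ℝ (⊤ : ℕ∞) η)
    (z : Euc n) {δ : ℝ} (hδ : 0 < δ) (hδ1 : δ ≤ 1) :
    Phi k η z δ = ∑ i ∈ Finset.range k, lag k i δ * Phi k η z (nd i) := by
  set F : ℝ → Euc n → ℝ := fun δ y => η (z - δ • y) - ∑ s : Fin k → Fin n, (∏ i, y (s i)) *
      ∫ t in Ioc δ 1, (t - δ) ^ (k - 1) / ((k - 1).factorial : ℝ) *
        listDeriv (List.ofFn s) η (z - t • y) with hF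
  have hcs : ∀ s : Fin k → Fin n, Continuous (fun u => listDeriv (List.ofFn s) η (z - u)) := fun s =>
    (listDeriv_contDiff _ h).continuous.comp (by fun_prop)
  have hη : Continuous η := h.continuous
  have hI0 : ∀ δ : ℝ, IntegrableOn (fun y : Euc n => η (z - δ • y)) (ball 0 1) := by
    intro δ
    refine IntegrableOn.mono_set ?_ ball_subset_closedBall
    exact ContinuousOn.integrableOn_compact (isCompact_closedBall _ _) (by fun_prop)
  have hI : ∀ δ, 0 < δ → IntegrableOn (F δ) (ball 0 1) := by
    intro δ hδ
    refine (hI0 δ).sub (integrable_finsetSum _ fun s _ => ?_)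
    exact (kap_fubini hk s hδ (hcs s)).1
  have hPhi : ∀ δ, 0 < δ → Phi k η z δ = ∫ y in ball 0 1, F δ y := by
    intro δ hδ
    unfold Phi
    rw [ak_integral hδ (fun u => η (z - u))]
    simp only [hF]
    rw [integral_sub (hI0 δ) (integrable_finsetSum _ fun s _ => (kap_fubini hk s hδ (hcs s)).1),
      integral_finsetSum _ fun s _ => (kap_fubini hk s hδ (hcs s)).1]
    congr 1
    exact Finset.sum_congr rfl fun s _ => (kap_fubini hk s hδ (hcs s)).2
  have hpoly : ∀ y, ∃ P : Polynomial ℝ, P.degree < (k : WithBot ℕ) ∧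
      ∀ δ, 0 < δ → δ ≤ 1 → F δ y = P.eval δ := by
    intro y
    obtain ⟨m, rfl⟩ : ∃ m, k = m + 1 := ⟨k - 1, by omega⟩
    obtain ⟨P, hP, hE⟩ := taylor_seq _ (hasDerivAt_seq h z y) m
    refine ⟨P, hP, fun δ hδ hδ1 => ?_⟩
    have := hE δ
    simp only [pow_zero, one_mul, Finset.univ_unique, Finset.sum_singleton] at this
    simp only [hF]
    have e0 : η (z - δ • y) = listDeriv (List.ofFn (default : Fin 0 → Fin n)) η (z - δ • y) := by
      simp [listDeriv]
    simp only [Finset.univ_eq_empty, Finset.prod_empty, one_mul] at this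
    rw [e0, this, add_sub_assoc]
    simp only [add_eq_left, sub_eq_zero]
    rw [intervalIntegral.integral_symm, intervalIntegral.integral_of_le hδ1, ← integral_neg]
    have e1 : ∀ t : ℝ, -((δ - t) ^ m / (m.factorial : ℝ) * ((-1) ^ (m + 1) *
        ∑ s : Fin (m+1) → Fin n, (∏ i, y (s i)) * listDeriv (List.ofFn s) η (z - t • y)))
        = ∑ s : Fin (m+1) → Fin n, (∏ i, y (s i)) * ((t - δ) ^ m / (m.factorial : ℝ) *
          listDeriv (List.ofFn s) η (z - t • y)) := by
      intro t
      have : (δ - t) ^ m = (-1) ^ m * (t - δ) ^ m := by rw [← mul_pow]; ring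
      rw [this, Finset.mul_sum, Finset.mul_sum, ← Finset.sum_neg_distrib]
      refine Finset.sum_congr rfl fun s _ => ?_
      have h2 : ((-1:ℝ)) ^ m * (-1) ^ m = 1 := by rw [← mul_pow]; simp
      rw [pow_succ]
      linear_combination ((t - δ) ^ m / (m.factorial : ℝ) * ((∏ i, y (s i)) *
        listDeriv (List.ofFn s) η (z - t • y))) * h2
    simp only [e1]
    rw [integral_finsetSum]
    · simp only [integral_const_mul, Nat.add_sub_cancel]
    · intro s _
      refine IntegrableOn.mono_set ?_ Ioc_subset_Icc_self
      refine ContinuousOn.integrableOn_compact isCompact_Icc (Continuous.continuousOn ?_)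
      have := (hcs s).comp (show Continuous fun t : ℝ => t • y by fun_prop)
      simp only [Function.comp_def] at this
      fun_prop
  rw [hPhi δ hδ]
  have : ∀ i ∈ Finset.range k, lag k i δ * Phi k η z (nd i) =
      ∫ y in ball 0 1, lag k i δ * F (nd i) y := by
    intro i _
    rw [integral_const_mul, hPhi _ (nd_pos i)]
  rw [Finset.sum_congr rfl this, ← integral_finsetSum]
  · congr 1; funext y
    obtain ⟨P, hP, hE⟩ := hpoly y
    rw [hE δ hδ hδ1, lag_interp hP δ]
    refine Finset.sum_congr rfl fun i _ => ?_
    rw [hE _ (nd_pos i) (nd_le i)]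
  · intro i _
    exact (hI _ (nd_pos i)).const_mul _

/-- weak defect -/
noncomputable def Qf {n k : ℕ} (f : Euc n → ℝ) (G : (Fin k → Fin n) → Euc n → ℝ) (δ : ℝ)
    (x : Euc n) : ℝ :=
  (∫ u, ak n δ u * f (x + u)) - (-1) ^ k * ∑ s : Fin k → Fin n, ∫ u, kap s δ u * G s (x + u)

theorem Qf_continuous {n k : ℕ} (hk : 0 < k) {f : Euc n → ℝ} {G : (Fin k → Fin n) → Euc n → ℝ}
    (hf : LocallyIntegrable f) (hG : ∀ s, LocallyIntegrable (G s)) {δ : ℝ} (hδ : 0 < δ) :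
    Continuous (Qf f G δ) := by
  unfold Qf
  refine ((ak_ker n hδ).continuous (ak_cont n hδ) hf).sub (continuous_const.mul
    (continuous_finsetSum _ fun s _ => ?_))
  exact (kap_ker hk s hδ).continuous
    (Eventually.of_forall fun u => (kap_continuous hk s hδ).continuousAt) (hG s)

theorem Ker.int_left {n : ℕ} {K L G : Euc n → ℝ} (hK : Ker K) (hL : Ker L)
    (hG : LocallyIntegrable G) : Integrable fun w => G w * ∫ u, K u * L (w - u) := by
  have := (hK.prod hL hG).integral_prod_left
  simpa only [integral_const_mul] using this

theorem Phi_integrable {n k : ℕ} (hk : 0 < k) {f η : Euc n → ℝ} (h : ContDiff ℝ (⊤ : ℕ∞) η)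
    (hs : HasCompactSupport η) (hf : LocallyIntegrable f) {δ : ℝ} (hδ : 0 < δ) :
    Integrable fun w => f w * Phi k η w δ := by
  unfold Phi
  simp only [mul_sub, Finset.mul_sum]
  refine ((ak_ker n hδ).int_left (Ker.of_cont h.continuous hs) hf).sub
    (integrable_finsetSum _ fun s _ => ?_)
  exact (kap_ker hk s hδ).int_left
    (Ker.of_cont (listDeriv_contDiff _ h).continuous (listDeriv_supp _ hs)) hf

theorem Qf_test {n k : ℕ} (hk : 0 < k) {f : Euc n → ℝ} {G : (Fin k → Fin n) → Euc n → ℝ}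
    (hf : LocallyIntegrable f) (hG : ∀ s, LocallyIntegrable (G s))
    (hw : ∀ s, IsWeakDeriv (cnt s) f (G s)) {δ : ℝ} (hδ : 0 < δ)
    {η : Euc n → ℝ} (h : ContDiff ℝ (⊤ : ℕ∞) η) (hs : HasCompactSupport η) :
    ∫ x, η x * Qf f G δ x = ∫ w, f w * Phi k η w δ := by
  have hη : Ker η := Ker.of_cont h.continuous hs
  have hηs : ∀ s : Fin k → Fin n, Ker (listDeriv (List.ofFn s) η) := fun s =>
    Ker.of_cont (listDeriv_contDiff _ h).continuous (listDeriv_supp _ hs)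
  have hci : ∀ F : Euc n → ℝ, Continuous F → Integrable fun x => η x * F x := fun F hF =>
    (h.continuous.mul hF).integrable_of_hasCompactSupport hs.mul_right
  have hA := (ak_ker n hδ).continuous (ak_cont n hδ) hf
  have hB := fun s : Fin k → Fin n => (kap_ker hk s hδ).continuous
    (Eventually.of_forall fun u => (kap_continuous hk s hδ).continuousAt) (hG s)
  unfold Qf Phi
  simp only [mul_sub, Finset.mul_sum]
  rw [integral_sub (hci _ hA), integral_sub ((ak_ker n hδ).int_left hη hf),
    (ak_ker n hδ).swap1 hη hf, integral_finsetSum, integral_finsetSum]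
  · congr 1
    refine Finset.sum_congr rfl fun s _ => ?_
    have e1 : ∀ x, η x * ((-1) ^ k * ∫ u, kap s δ u * G s (x + u)) =
        (-1) ^ k * (η x * ∫ u, kap s δ u * G s (x + u)) := fun x => by ring
    simp only [e1]
    rw [integral_const_mul, (kap_ker hk s hδ).swap1 hη (hG s),
      (kap_ker hk s hδ).swap2 hη (hG s), (kap_ker hk s hδ).swap2 (hηs s) hf, ← integral_const_mul]
    congr 1; funext u
    have hη' : ContDiff ℝ (⊤ : ℕ∞) (fun w => η (w - u)) := h.comp (contDiff_id.sub contDiff_const)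
    have := hw s (fun w => η (w - u)) hη' (hs.comp_homeomorph (Homeomorph.subRight u))
    rw [mderiv_cnt s hη', listDeriv_translate, mdeg_cnt] at this
    rw [this]
    ring
  · exact fun s _ => (kap_ker hk s hδ).int_left (hηs s) hf
  · exact fun s _ => hci _ (continuous_const.mul (hB s))
  · exact integrable_finsetSum _ fun s _ => (kap_ker hk s hδ).int_left (hηs s) hf
  · exact integrable_finsetSum _ fun s _ => hci _ (continuous_const.mul (hB s))

theorem Qf_interp {n k : ℕ} (hk : 0 < k) {f : Euc n → ℝ} {G : (Fin k → Fin n) → Euc n → ℝ}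
    (hf : LocallyIntegrable f) (hG : ∀ s, LocallyIntegrable (G s))
    (hw : ∀ s, IsWeakDeriv (cnt s) f (G s)) {δ : ℝ} (hδ : 0 < δ) (hδ1 : δ ≤ 1) (x : Euc n) :
    Qf f G δ x = ∑ i ∈ Finset.range k, lag k i δ * Qf f G (nd i) x := by
  have hc1 : Continuous (Qf f G δ) := Qf_continuous hk hf hG hδ
  have hc2 : ∀ i, Continuous (Qf f G (nd i)) := fun i => Qf_continuous hk hf hG (nd_pos i)
  set D : Euc n → ℝ := fun x => Qf f G δ x - ∑ i ∈ Finset.range k, lag k i δ * Qf f G (nd i) x with hD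
  have hDc : Continuous D := by
    simp only [hD]; fun_prop
  have h0 : ∀ᵐ x, D x = 0 := by
    refine ae_eq_zero_of_integral_contDiff_smul_eq_zero hDc.locallyIntegrable fun η h hs => ?_
    have hci : ∀ F : Euc n → ℝ, Continuous F → Integrable fun x => η x * F x := fun F hF =>
      (h.continuous.mul hF).integrable_of_hasCompactSupport hs.mul_right
    simp only [hD, smul_eq_mul, mul_sub, Finset.mul_sum]
    have e1 : ∀ i x, η x * (lag k i δ * Qf f G (nd i) x) = lag k i δ * (η x * Qf f G (nd i) x) :=
      fun i x => by ring
    simp only [e1]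
    have hii : ∀ i ∈ Finset.range k, Integrable fun x => lag k i δ * (η x * Qf f G (nd i) x) :=
      fun i _ => (hci _ (hc2 i)).const_mul _
    rw [integral_sub (hci _ hc1) (integrable_finsetSum _ hii), integral_finsetSum _ hii]
    simp only [integral_const_mul]
    rw [Qf_test hk hf hG hw hδ h hs]
    simp only [fun i => Qf_test hk hf hG hw (nd_pos i) h hs]
    simp only [← integral_const_mul]
    rw [← integral_finsetSum _ fun i _ => (Phi_integrable hk h hs hf (nd_pos i)).const_mul _, sub_eq_zero]
    congr 1; funext w
    rw [Phi_interp hk h w hδ hδ1, Finset.mul_sum]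
    refine Finset.sum_congr rfl fun i _ => by ring
  have h1 : D = fun _ => 0 := (hDc.ae_eq_iff_eq volume continuous_const).1 h0
  have := congrFun h1 x
  simp only [hD] at this
  linarith

theorem average_eq {n : ℕ} (f : Euc n → ℝ) (x : Euc n) {δ : ℝ} (hδ : 0 < δ) :
    ⨍ y in ball x δ, f y = (volume.real (ball (0 : Euc n) 1))⁻¹ * ∫ u, ak n δ u * f (x + u) := by
  rw [setAverage_eq, Measure.real, Measure.addHaar_ball_of_pos _ _ hδ, ENNReal.toReal_mul,
    ENNReal.toReal_ofReal (by positivity), finrank_euclideanSpace_fin, smul_eq_mul, mul_inv,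
    mul_comm (δ ^ n)⁻¹, mul_assoc, Measure.real]
  congr 1
  rw [← integral_const_mul, ← integral_indicator measurableSet_ball,
    ← integral_add_left_eq_self _ x]
  congr 1; funext u
  by_cases h : ‖u‖ < δ
  · rw [indicator_of_mem (by simpa using h)]; simp [ak, h]
  · rw [indicator_of_notMem (by simpa using h)]; simp [ak, h]

theorem lim_main {n k : ℕ} (hk : 0 < k) (hn : n ≠ 0) {f : Euc n → ℝ}
    {G : (Fin k → Fin n) → Euc n → ℝ}
    (hf : LocallyIntegrable f) (hG : ∀ s, LocallyIntegrable (G s))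
    (hw : ∀ s, IsWeakDeriv (cnt s) f (G s)) {g : Euc n → ℝ}
    (hgm : AEStronglyMeasurable g) (hg : ∀ s y, |G s y| ≤ g y) (x : Euc n)
    (hx : ∫⁻ y, ENNReal.ofReal (g y) * ENNReal.ofReal (‖x - y‖ ^ ((k:ℝ) - (n : ℝ))) ≠ ∞) :
    ∃ L : ℝ, Tendsto (fun δ : ℝ => ⨍ y in ball x δ, f y) (𝓝[>] (0:ℝ)) (𝓝 L) := by
  have hn1 : Nontrivial (Euc n) := by
    have : Nonempty (Fin n) := ⟨⟨0, Nat.pos_of_ne_zero hn⟩⟩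
    infer_instance
  have mp := (measurePreserving_add_left (volume : Measure (Euc n)) x).quasiMeasurePreserving
  have hb : Integrable fun u : Euc n => g (x + u) * ‖u‖ ^ ((k:ℝ) - (n : ℝ)) := by
    refine ⟨(hgm.comp_quasiMeasurePreserving mp).mul
      (Measurable.aestronglyMeasurable (by fun_prop)), ?_⟩
    rw [hasFiniteIntegral_iff_norm]
    rw [← lintegral_add_left_eq_self _ x] at hx
    refine lt_of_le_of_lt (le_of_eq ?_) (lt_top_iff_ne_top.2 hx)
    refine lintegral_congr fun u => ?_
    by_cases hs : Nonempty (Fin k → Fin n)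
    · obtain ⟨s⟩ := hs
      have h0 : 0 ≤ g (x + u) := (abs_nonneg _).trans (hg s _)
      rw [← ENNReal.ofReal_mul h0]
      simp only [sub_add_cancel_left, norm_neg]
      rw [Real.norm_of_nonneg (by positivity)]
    · exact absurd ⟨fun _ => ⟨0, Nat.pos_of_ne_zero hn⟩⟩ hs
  have hne : ∀ᵐ u : Euc n, u ≠ 0 := by
    rw [ae_iff]; simp
  have hlim : ∀ s : Fin k → Fin n, Tendsto (fun δ => ∫ u, kap s δ u * G s (x + u)) (𝓝[>] 0)
      (𝓝 (∫ u, kap s 0 u * G s (x + u))) := by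
    intro s
    refine tendsto_integral_filter_of_dominated_convergence _ ?_ ?_ hb ?_
    · filter_upwards [self_mem_nhdsWithin] with δ hδ
      exact (kap_continuous hk s hδ).aestronglyMeasurable.mul
        ((hG s).aestronglyMeasurable.comp_quasiMeasurePreserving mp)
    · filter_upwards [self_mem_nhdsWithin] with δ hδ
      filter_upwards [hne] with u hu
      rw [norm_mul, mul_comm]
      exact mul_le_mul (hg s _) (kap_le hk s hδ hn hu) (norm_nonneg _)
        ((abs_nonneg _).trans (hg s _))
    · filter_upwards [hne] with u hu
      exact (kap_tendsto hk s hn hu).mul_const _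
  have hlag : ∀ i, Tendsto (fun δ => lag k i δ) (𝓝[>] 0) (𝓝 (lag k i 0)) := fun i =>
    ((Polynomial.continuous _).tendsto 0).mono_left nhdsWithin_le_nhds
  have key := ((tendsto_finsetSum (Finset.range k) fun i _ =>
    (hlag i).mul_const (Qf f G (nd i) x)).add
    ((tendsto_finsetSum Finset.univ fun s _ => hlim s).const_mul ((-1:ℝ) ^ k))).const_mul
      (volume.real (ball (0 : Euc n) 1))⁻¹
  refine ⟨_, key.congr' ?_⟩
  filter_upwards [Ioc_mem_nhdsGT one_pos] with δ hδ
  rw [average_eq f x hδ.1, ← Qf_interp hk hf hG hw hδ.1 hδ.2 x]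
  unfold Qf
  ring

theorem cap_main {n : ℕ} {a p : ℝ} (hp : 1 ≤ p) {g : Euc n → ℝ} (hg : MemLp g (ENNReal.ofReal p) volume)
    (h0 : ∀ x, 0 ≤ g x) : rieszCap a p {x | rieszPot a g x = ∞} = 0 := by
  have hp0 : 0 < p := by linarith
  set M := ∫⁻ y, ENNReal.ofReal (g y) ^ p with hM
  have hMt : M ≠ ∞ := by
    have := lintegral_rpow_enorm_lt_top_of_eLpNorm_lt_top (f := g) (μ := volume)
      (p := ENNReal.ofReal p) (by simpa using hp0) (by simp) hg.2
    rw [ENNReal.toReal_ofReal hp0.le] at this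
    refine ne_of_lt (lt_of_le_of_lt (le_of_eq ?_) this)
    refine lintegral_congr fun y => ?_
    rw [Real.enorm_eq_ofReal (h0 y)]
  have hle : ∀ ε : ℝ, 0 < ε → rieszCap a p {x | rieszPot a g x = ∞} ≤ ENNReal.ofReal ε ^ p * M := by
    intro ε hε
    refine (iInf₂_le (fun y => ε * g y) ⟨hg.const_mul ε, fun x => by have := h0 x; positivity, ?_⟩).trans ?_
    rotate_left
    · intro x hx
      have : rieszPot a (fun y => ε * g y) x = ENNReal.ofReal ε * rieszPot a g x := by
        unfold rieszPot
        rw [mul_left_comm, ← lintegral_const_mul' (ENNReal.ofReal ε) _ ENNReal.ofReal_ne_top]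
        congr 1
        refine lintegral_congr fun y => ?_
        rw [ENNReal.ofReal_mul hε.le, mul_assoc]
      rw [this, show rieszPot a g x = ∞ from hx, ENNReal.mul_top (by simpa using hε)]
      exact le_top
    · rw [hM, ← lintegral_const_mul' _ _ (by simp [hp0.le])]
      refine le_of_eq (lintegral_congr fun y => ?_)
      rw [ENNReal.ofReal_mul hε.le, ENNReal.mul_rpow_of_nonneg _ _ hp0.le]
  have ht : Tendsto (fun ε : ℝ => ENNReal.ofReal ε ^ p * M) (𝓝[>] 0) (𝓝 0) := by
    have h1 : Tendsto (fun ε : ℝ => ENNReal.ofReal ε ^ p) (𝓝[>] 0) (𝓝 (ENNReal.ofReal 0 ^ p)) :=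
      (((ENNReal.continuous_rpow_const).comp ENNReal.continuous_ofReal).tendsto 0).mono_left
        nhdsWithin_le_nhds
    have := ENNReal.Tendsto.mul_const h1 (Or.inr hMt)
    simpa [ENNReal.zero_rpow_of_pos hp0] using this
  refine le_antisymm (ge_of_tendsto ht ?_) bot_le
  filter_upwards [self_mem_nhdsWithin] with ε hε
  exact hle ε hε

/-- Theorem 3.5: Lebesgue points of Sobolev functions outside a set of
Riesz capacity zero. -/
theorem lebesgue_points_sobolev {n k : ℕ} {p : ℝ}
    (hk : 0 < k) (hp : 1 ≤ p) (hkpn : (k : ℝ) * p < n)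
    (f : Euc n → ℝ) (hf : MemLp f (ENNReal.ofReal p) volume)
    (Df : (Fin n → ℕ) → Euc n → ℝ)
    (hDf : ∀ α : Fin n → ℕ, mdeg α ≤ k →
      MemLp (Df α) (ENNReal.ofReal p) volume ∧ IsWeakDeriv α f (Df α))
    (g : Euc n → ℝ)
    (hg : g = fun y => ∑ β : Fin n → Fin (k + 1),
      if mdeg (fun i => (β i : ℕ)) = k then |Df (fun i => (β i : ℕ)) y| else 0)
    (E : Set (Euc n)) (hE : E = {x | rieszPot (k : ℝ) g x = ∞}) :
    rieszCap (k : ℝ) p E = 0 ∧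
    ∀ x ∉ E, ∃ L : ℝ,
      Tendsto (fun δ : ℝ => ⨍ y in ball x δ, f y) (𝓝[>] (0:ℝ)) (𝓝 L) := by
  have hp0 : 0 < p := by linarith
  have hn : n ≠ 0 := by
    rintro rfl
    have : (0:ℝ) ≤ k * p := by positivity
    simp at hkpn
    linarith
  have hp1 : (1 : ℝ≥0∞) ≤ ENNReal.ofReal p := by simpa using hp
  have hgL : MemLp g (ENNReal.ofReal p) volume := by
    rw [hg]
    refine memLp_finsetSum _ fun β _ => ?_
    by_cases h : mdeg (fun i => (β i : ℕ)) = k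
    · simp only [h, if_true]
      exact (hDf _ h.le).1.abs
    · simp only [h, if_false]
      exact MemLp.zero'
  have hg0 : ∀ x, 0 ≤ g x := by
    intro x
    rw [hg]
    refine Finset.sum_nonneg fun β _ => ?_
    split_ifs
    · exact abs_nonneg _
    · exact le_rfl
  subst hE
  refine ⟨cap_main hp hgL hg0, fun x hx => ?_⟩
  refine lim_main (G := fun s => Df (cnt s)) hk hn (hf.locallyIntegrable hp1)
    (fun s => (hDf _ (mdeg_cnt s).le).1.locallyIntegrable hp1)
    (fun s => (hDf _ (mdeg_cnt s).le).2) hgL.1 (fun s y => ?_) x (fun h => hx ?_)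
  · rw [hg]
    have := Finset.single_le_sum (f := fun β : Fin n → Fin (k + 1) =>
      if mdeg (fun i => (β i : ℕ)) = k then |Df (fun i => (β i : ℕ)) y| else 0) (s := Finset.univ)
      (fun β _ => by
        show 0 ≤ ite _ _ _
        split_ifs
        · exact abs_nonneg _
        · exact le_rfl)
      (Finset.mem_univ (fun i => (⟨cnt s i, Nat.lt_succ_of_le (cnt_le s i)⟩ : Fin (k + 1))))
    refine le_trans (le_of_eq ?_) this
    have h2 : mdeg (fun i => cnt s i) = k := mdeg_cnt s
    simp only [h2, if_true]
  · show rieszPot (k : ℝ) g x = ∞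
    unfold rieszPot
    rw [h, ENNReal.mul_top]
    simp
end

section
/- Let 1 < p < ∞ and α > 0 with αp < n, and set p* := np/(n − αp). There exists a constant C = C(n,p,α) such that for every set E ⊂ ℝⁿ and every non-negative f ∈ L^p(ℝⁿ) with (I_α * f)(x) ≥ 1 for all x ∈ E, one has |E|^{p/p*} ≤ C ‖f‖_{L^p(ℝⁿ)}^p, where |E| denotes the Lebesgue outer measure of E. Consequently, if R_{α,p}(E) = 0 then |E| = 0. -/
open MeasureTheory Filter Metric Set
open scoped ENNReal NNReal Topology

lemma rz_radial {n : ℕ} (hn : 0 < n) (b : ℝ) (S : Set ℝ) (hS : MeasurableSet S)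
    (hI : IntegrableOn (fun y : ℝ => y ^ (b + n - 1)) (Ioi 0 ∩ S)) :
    ∫⁻ z : Euc n, S.indicator (fun t => ENNReal.ofReal (t ^ b)) ‖z‖ =
      ENNReal.ofReal (n * (volume.real (ball (0 : Euc n) 1)) *
        ∫ y in Ioi 0 ∩ S, y ^ (b + n - 1)) := by
  have : Nonempty (Fin n) := ⟨⟨0, hn⟩⟩
  have key : ∀ y ∈ Ioi (0:ℝ), y ^ (Module.finrank ℝ (Euc n) - 1) • S.indicator (fun t => t ^ b) y
      = S.indicator (fun y : ℝ => y ^ (b + n - 1)) y := by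
    intro y hy
    have hy : 0 < y := hy
    by_cases h : y ∈ S
    · simp only [h, indicator_of_mem, smul_eq_mul, finrank_euclideanSpace, Fintype.card_fin]
      rw [← Real.rpow_natCast, ← Real.rpow_add hy, Nat.cast_sub hn]
      congr 1; push_cast; ring
    · simp [h]
  have hint : Integrable (fun z : Euc n => S.indicator (fun t : ℝ => t ^ b) ‖z‖) := by
    rw [integrable_fun_norm_addHaar volume (f := S.indicator (fun t : ℝ => t ^ b)),
      integrableOn_congr_fun key measurableSet_Ioi]
    rw [IntegrableOn, integrable_indicator_iff hS, IntegrableOn, Measure.restrict_restrict hS,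
      inter_comm]
    exact hI
  have h1 : ∀ z : Euc n, S.indicator (fun t => ENNReal.ofReal (t ^ b)) ‖z‖ =
      ENNReal.ofReal (S.indicator (fun t : ℝ => t ^ b) ‖z‖) := by
    intro z
    by_cases h : ‖z‖ ∈ S <;> simp [h]
  simp_rw [h1]
  rw [← ofReal_integral_eq_lintegral_ofReal hint]
  · rw [integral_fun_norm_addHaar volume (S.indicator (fun t : ℝ => t ^ b)),
      setIntegral_congr_fun measurableSet_Ioi key, setIntegral_indicator hS]
    simp [mul_assoc]
  · refine Eventually.of_forall fun z => ?_
    by_cases h : ‖z‖ ∈ S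
    · simp only [h, indicator_of_mem, Pi.zero_apply]; positivity
    · simp [h]

lemma rz_ballpos {n : ℕ} : 0 < volume.real (ball (0 : Euc n) 1) := by
  rw [Measure.real]
  exact ENNReal.toReal_pos (measure_ball_pos _ _ one_pos).ne' measure_ball_lt_top.ne

lemma rz_in {n : ℕ} (hn : 0 < n) (b : ℝ) (hb : 0 < b + n) :
    ∃ c : ℝ, 0 < c ∧ ∀ R : ℝ, 0 < R →
      ∫⁻ z : Euc n, (Iio R).indicator (fun t => ENNReal.ofReal (t ^ b)) ‖z‖ =
        ENNReal.ofReal (c * R ^ (b + n)) := by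
  have := rz_ballpos (n := n)
  have hn' : (0:ℝ) < n := by exact_mod_cast hn
  refine ⟨n * (volume.real (ball (0 : Euc n) 1)) / (b + n), by positivity, fun R hR => ?_⟩
  rw [rz_radial hn b _ measurableSet_Iio]
  · rw [Ioi_inter_Iio, ← integral_Ioc_eq_integral_Ioo, ← intervalIntegral.integral_of_le hR.le,
      integral_rpow (Or.inl (by linarith)), sub_add_cancel, Real.zero_rpow hb.ne']
    congr 1; ring
  · rw [Ioi_inter_Iio, intervalIntegral.integrableOn_Ioo_rpow_iff hR]; linarith

lemma rz_out {n : ℕ} (hn : 0 < n) (b : ℝ) (hb : b + n < 0) :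
    ∃ c : ℝ, 0 < c ∧ ∀ R : ℝ, 0 < R →
      ∫⁻ z : Euc n, (Ici R).indicator (fun t => ENNReal.ofReal (t ^ b)) ‖z‖ =
        ENNReal.ofReal (c * R ^ (b + n)) := by
  have := rz_ballpos (n := n)
  have hn' : (0:ℝ) < n := by exact_mod_cast hn
  refine ⟨n * (volume.real (ball (0 : Euc n) 1)) / (-(b + n)),
    div_pos (by positivity) (by linarith), fun R hR => ?_⟩
  have hs : Ioi (0:ℝ) ∩ Ici R = Ici R := inter_eq_right.2 fun y hy => lt_of_lt_of_le hR hy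
  rw [rz_radial hn b _ measurableSet_Ici]
  · rw [hs, integral_Ici_eq_integral_Ioi, integral_Ioi_rpow_of_lt (by linarith) hR, sub_add_cancel]
    congr 1; rw [neg_div, div_neg]; ring
  · rw [hs, integrableOn_Ici_iff_integrableOn_Ioi]
    exact integrableOn_Ioi_rpow_of_lt (by linarith) hR

lemma rz_young {n : ℕ} {p q : ℝ} (hpq : p.HolderConjugate q) (G k : Euc n → ℝ≥0∞)
    (hG : Measurable G) (hk : Measurable k) (x : Euc n) :
    (∫⁻ y, G y * k (x - y)) ^ p ≤ (∫⁻ y, G y ^ p * k (x - y)) * (∫⁻ z, k z) ^ (p - 1) := by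
  have hp := hpq.pos
  have hq := hpq.symm.pos
  have h := ENNReal.lintegral_mul_le_Lp_mul_Lq volume hpq
    (f := fun y => G y * k (x - y) ^ (1 / p)) (g := fun y => k (x - y) ^ (1 / q))
    (by fun_prop) (by fun_prop)
  have e1 : ∀ y, ((fun y => G y * k (x - y) ^ (1 / p)) * (fun y => k (x - y) ^ (1 / q))) y
      = G y * k (x - y) := by
    intro y
    simp only [Pi.mul_apply]
    rw [mul_assoc, ← ENNReal.rpow_add_of_nonneg _ _ (by positivity) (by positivity)]
    have : 1 / p + 1 / q = 1 := by simpa using hpq.inv_add_inv_eq_one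
    rw [this, ENNReal.rpow_one]
  have e2 : ∀ y, (G y * k (x - y) ^ (1 / p)) ^ p = G y ^ p * k (x - y) := by
    intro y
    rw [ENNReal.mul_rpow_of_nonneg _ _ hp.le, ← ENNReal.rpow_mul, one_div_mul_cancel hp.ne',
      ENNReal.rpow_one]
  have e3 : ∀ y, (k (x - y) ^ (1 / q)) ^ q = k (x - y) := by
    intro y
    rw [← ENNReal.rpow_mul, one_div_mul_cancel hq.ne', ENNReal.rpow_one]
  simp_rw [e1, e2, e3] at h
  rw [lintegral_sub_left_eq_self k x] at h
  refine (ENNReal.rpow_le_rpow h hp.le).trans_eq ?_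
  rw [ENNReal.mul_rpow_of_nonneg _ _ hp.le, ← ENNReal.rpow_mul, ← ENNReal.rpow_mul,
    one_div_mul_cancel hp.ne', ENNReal.rpow_one]
  congr 2
  have := hpq.sub_one_mul_conj
  field_simp
  linarith

lemma rz_tonelli {n : ℕ} (H k : Euc n → ℝ≥0∞) (hH : Measurable H) (hk : Measurable k) :
    ∫⁻ x, ∫⁻ y, H y * k (x - y) = (∫⁻ y, H y) * ∫⁻ z, k z := by
  rw [lintegral_lintegral_swap (by fun_prop)]
  have : ∀ y, ∫⁻ x, H y * k (x - y) = H y * ∫⁻ z, k z := by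
    intro y
    rw [lintegral_const_mul _ (by fun_prop), lintegral_sub_right_eq_self k y]
  simp_rw [this]
  rw [lintegral_mul_const _ hH]

/-- abstract splitting estimate -/
lemma rz_core {n : ℕ} {p q : ℝ} (hpq : p.HolderConjugate q) (G k1 k2 : Euc n → ℝ≥0∞)
    (hG : Measurable G) (hk1 : Measurable k1) (hk2 : Measurable k2) (c : ℝ≥0∞) (E : Set (Euc n))
    (hE : ∀ x ∈ E, 1 ≤ c * ∫⁻ y, G y * (k1 (x - y) + k2 (x - y)))
    (h2 : c * ((∫⁻ y, G y ^ p) ^ (1 / p) * (∫⁻ z, k2 z ^ q) ^ (1 / q)) ≤ 1 / 2) :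
    volume E ≤ (2 * c * ∫⁻ z, k1 z) ^ p * ∫⁻ y, G y ^ p := by
  have hp := hpq.pos
  set A := ∫⁻ z, k1 z with hA
  have hpt : ∀ x ∈ E, 1 ≤ (2 * c) ^ p * A ^ (p - 1) * ∫⁻ y, G y ^ p * k1 (x - y) := by
    intro x hx
    have h := hE x hx
    simp_rw [mul_add] at h
    rw [lintegral_add_left (by fun_prop), mul_add] at h
    have h3 : ∫⁻ y, G y * k2 (x - y) ≤ (∫⁻ y, G y ^ p) ^ (1 / p) * (∫⁻ z, k2 z ^ q) ^ (1 / q) := by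
      have h := ENNReal.lintegral_mul_le_Lp_mul_Lq volume hpq
        (f := G) (g := fun y => k2 (x - y)) (by fun_prop) (by fun_prop)
      rw [lintegral_sub_left_eq_self (fun z => k2 z ^ q) x] at h
      exact h
    have h4 : c * ∫⁻ y, G y * k2 (x - y) ≤ 1 / 2 := le_trans (by gcongr) h2
    have h5 : 1 / 2 ≤ c * ∫⁻ y, G y * k1 (x - y) := by
      have h6 := h.trans (add_le_add_right h4 _)
      have h7 : (1:ℝ≥0∞) / 2 + 1 / 2 = 1 := ENNReal.add_halves 1
      nth_rewrite 1 [← h7] at h6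
      exact (ENNReal.add_le_add_iff_right (by simp)).1 h6
    have h6 : 1 ≤ 2 * c * ∫⁻ y, G y * k1 (x - y) := by
      have := mul_le_mul_right h5 (2:ℝ≥0∞)
      rw [ENNReal.mul_div_cancel (by simp) (by simp)] at this
      rwa [mul_assoc]
    have h7 := ENNReal.rpow_le_rpow h6 hp.le
    rw [ENNReal.one_rpow, ENNReal.mul_rpow_of_nonneg _ _ hp.le] at h7
    refine h7.trans ?_
    rw [mul_assoc]
    gcongr
    rw [mul_comm]
    exact rz_young hpq G k1 hG hk1 x
  have hm : Measurable fun x => ∫⁻ y, G y ^ p * k1 (x - y) :=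
    Measurable.lintegral_prod_right' (f := fun z : Euc n × Euc n => G z.2 ^ p * k1 (z.1 - z.2))
      (by fun_prop)
  calc volume E ≤ volume {x | 1 ≤ (2 * c) ^ p * A ^ (p - 1) * ∫⁻ y, G y ^ p * k1 (x - y)} :=
        measure_mono hpt
    _ ≤ ∫⁻ x, (2 * c) ^ p * A ^ (p - 1) * ∫⁻ y, G y ^ p * k1 (x - y) := by
        simpa using mul_meas_ge_le_lintegral (μ := volume) (hm.const_mul ((2 * c) ^ p * A ^ (p - 1))) 1
    _ = (2 * c) ^ p * (A ^ (p - 1) * A) * ∫⁻ y, G y ^ p := by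
        rw [lintegral_const_mul _ hm, rz_tonelli _ _ (by fun_prop) hk1]
        ring
    _ = _ := by
        rw [ENNReal.mul_rpow_of_nonneg (2 * c) A hp.le]
        congr 2
        have := ENNReal.rpow_add_of_nonneg (x := A) (p - 1) 1 (by linarith [hpq.lt]) zero_le_one
        rw [sub_add_cancel, ENNReal.rpow_one] at this
        exact this.symm

/-- the real-number bookkeeping -/
lemma rz_real {n : ℕ} {a p q g c1 c2 N : ℝ} (hpq : p.HolderConjugate q)
    (hn : (0:ℝ) < n) (hd : 0 < n - a * p) (hg : 0 < g) (hc1 : 0 < c1) (hc2 : 0 < c2) (hN : 0 < N) :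
    ∃ R : ℝ, 0 < R ∧
      g * (N ^ (1 / p) * (c2 * R ^ ((a - n) * q + n)) ^ (1 / q)) = 1 / 2 ∧
      ((2 * g * (c1 * R ^ a)) ^ p * N) ^ ((n - a * p) / n) =
        ((2 * g * c1) ^ (p * ((n - a * p) / n)) * (2 * g * c2 ^ (1 / q)) ^ (p * (a * p / n))) * N := by
  have hp := hpq.pos
  have hq := hpq.symm.pos
  have hq1 : 1 / q = 1 - 1 / p := by
    have := hpq.inv_add_inv_eq_one
    rw [one_div, one_div]; linarith
  set D := 2 * g * c2 ^ (1 / q) with hD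
  have hDp : 0 < D := by positivity
  have hM : 0 < D ^ p * N := by positivity
  refine ⟨(D ^ p * N) ^ (1 / (n - a * p)), by positivity, ?_, ?_⟩
  · rw [Real.mul_rpow hc2.le (by positivity), ← Real.rpow_mul hM.le, ← Real.rpow_mul hM.le]
    have he : 1 / (n - a * p) * ((a - n) * q + n) * (1 / q) = -(1 / p) := by
      have : ((a - n) * q + n) * (1 / q) = -((n - a * p) / p) := by
        have h1 : ((a - n) * q + n) * (1 / q) = (a - n) + n * (1 / q) := by field_simp
        rw [h1, hq1]; field_simp; ring
      rw [mul_assoc, this]; field_simp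
    rw [he, Real.rpow_neg hM.le, Real.mul_rpow (by positivity) hN.le, ← Real.rpow_mul hDp.le,
      mul_one_div_cancel hp.ne', Real.rpow_one, hD]
    have h3 : 0 < c2 ^ (1 / q) := by positivity
    have h4 : 0 < N ^ (1 / p) := by positivity
    field_simp
  · set e := (n - a * p) / n with he
    have h1 : ((D ^ p * N) ^ (1 / (n - a * p))) ^ a = (D ^ p * N) ^ (a / (n - a * p)) := by
      rw [← Real.rpow_mul hM.le]; congr 1; ring
    rw [h1, ← mul_assoc, Real.mul_rpow (by positivity) (by positivity),
      Real.mul_rpow (by positivity) (by positivity), Real.mul_rpow (by positivity) (by positivity),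
      ← Real.rpow_mul hM.le, ← Real.rpow_mul (by positivity), ← Real.rpow_mul hM.le]
    have h2 : a / (n - a * p) * p * e = a * p / n := by rw [he]; field_simp
    rw [h2, Real.mul_rpow (by positivity) hN.le, ← Real.rpow_mul hDp.le]
    have h3 : N ^ (a * p / n) * N ^ e = N := by
      rw [← Real.rpow_add hN]
      have : a * p / n + e = 1 := by rw [he]; field_simp; ring
      rw [this, Real.rpow_one]
    calc _ = (2 * g * c1) ^ (p * e) * D ^ (p * (a * p / n)) * (N ^ (a * p / n) * N ^ e) := by ring
      _ = _ := by rw [h3]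

lemma rz_main {n : ℕ} {a p : ℝ}
    (ha : 0 < a) (hp : 1 < p) (hapn : a * p < n) :
    ∃ C : ℝ, 0 < C ∧
      (∀ (E : Set (Euc n)) (f : Euc n → ℝ),
        MemLp f (ENNReal.ofReal p) volume → (∀ x, 0 ≤ f x) →
        (∀ x ∈ E, 1 ≤ rieszPot a f x) →
        volume E ^ (((n : ℝ) - a * p) / n) ≤
          ENNReal.ofReal C * ∫⁻ y, ENNReal.ofReal (f y) ^ p) := by
  have hp0 : 0 < p := by linarith
  have hn' : (0:ℝ) < n := lt_trans (by positivity) hapn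
  have hn : 0 < n := by exact_mod_cast hn'
  have han : a < n := by nlinarith
  have hd : 0 < n - a * p := by linarith
  obtain ⟨q, hpq⟩ : ∃ q, p.HolderConjugate q := ⟨_, Real.HolderConjugate.conjExponent hp⟩
  have hq := hpq.symm.pos
  have hγ : 0 < rieszGamma n a := by
    unfold rieszGamma
    have h1 := Real.Gamma_pos_of_pos (half_pos ha)
    have h2 := Real.Gamma_pos_of_pos (s := ((n:ℝ) - a) / 2) (by linarith)
    have := Real.pi_pos
    positivity
  obtain ⟨c1, hc1, H1⟩ := rz_in hn (a - n) (by linarith)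
  obtain ⟨c2, hc2, H2⟩ := rz_out hn ((a - n) * q) (by
    have h1 : n * (p - 1) * q = n * p := by rw [mul_assoc, hpq.sub_one_mul_conj]
    have h2 : p * q = p + q := hpq.mul_eq_add
    nlinarith)
  set g := (rieszGamma n a)⁻¹ with hg
  have hgp : 0 < g := inv_pos.2 hγ
  refine ⟨(2 * g * c1) ^ (p * ((n - a * p) / n)) *
    (2 * g * c2 ^ (1 / q)) ^ (p * (a * p / n)), by positivity, ?_⟩
  intro E f hf hf0 hE
  have hfm : AEMeasurable (fun y => ENNReal.ofReal (f y)) :=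
    hf.1.aemeasurable.ennreal_ofReal
  set G := hfm.mk _ with hGd
  have hGm : Measurable G := hfm.measurable_mk
  have hGe : (fun y => ENNReal.ofReal (f y)) =ᵐ[volume] G := hfm.ae_eq_mk
  have hNe : ∫⁻ y, ENNReal.ofReal (f y) ^ p = ∫⁻ y, G y ^ p :=
    lintegral_congr_ae (hGe.mono fun y hy => by simp only at hy; simp only [hy])
  have hNtop : ∫⁻ y, ENNReal.ofReal (f y) ^ p ≠ ∞ := by
    have := lintegral_rpow_enorm_lt_top_of_eLpNorm_lt_top
      (by simpa using hp0) ENNReal.ofReal_ne_top hf.2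
    rw [ENNReal.toReal_ofReal hp0.le] at this
    convert this.ne using 4 with y
    rw [Real.enorm_eq_ofReal (hf0 _)]
  rw [hNe] at hNtop ⊢
  have hpot : ∀ x ∈ E, 1 ≤ ENNReal.ofReal g *
      ∫⁻ y, G y * ENNReal.ofReal (‖x - y‖ ^ (a - (n : ℝ))) := by
    intro x hx
    refine (hE x hx).trans_eq ?_
    unfold rieszPot
    rw [hg, ENNReal.ofReal_inv_of_pos hγ]
    congr 1
    exact lintegral_congr_ae (hGe.mono fun y hy => by simp only at hy; simp only [hy])
  by_cases hN0 : ∫⁻ y, G y ^ p = 0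
  · have hG0 : G =ᵐ[volume] 0 := by
      rw [lintegral_eq_zero_iff (by fun_prop)] at hN0
      filter_upwards [hN0] with y hy
      simpa [ENNReal.rpow_eq_zero_iff, hp0, hp0.le, not_lt.2 hp0.le] using hy
    have hE0 : E = ∅ := by
      refine eq_empty_of_forall_notMem fun x hx => ?_
      have h := hpot x hx
      rw [lintegral_congr_ae (g := fun _ => 0)
        (hG0.mono fun y hy => by simp only [hy, Pi.zero_apply, zero_mul])] at h
      simp at h
    rw [hE0, measure_empty, ENNReal.zero_rpow_of_pos (by positivity)]
    exact zero_le
  set N := (∫⁻ y, G y ^ p).toReal with hNd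
  have hN : 0 < N := ENNReal.toReal_pos hN0 hNtop
  have hNN : ∫⁻ y, G y ^ p = ENNReal.ofReal N := (ENNReal.ofReal_toReal hNtop).symm
  obtain ⟨R, hR, e1, e2⟩ := rz_real (n := n) (a := a) (c1 := c1) hpq hn' hd hgp hc1 hc2 hN
  have hm : ∀ (S : Set ℝ), MeasurableSet S → Measurable
      (fun z : Euc n => S.indicator (fun t => ENNReal.ofReal (t ^ (a - (n:ℝ)))) ‖z‖) := by
    intro S hS
    exact (Measurable.indicator (by fun_prop) hS).comp measurable_norm
  have key := rz_core hpq G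
    (fun z => (Iio R).indicator (fun t => ENNReal.ofReal (t ^ (a - (n:ℝ)))) ‖z‖)
    (fun z => (Ici R).indicator (fun t => ENNReal.ofReal (t ^ (a - (n:ℝ)))) ‖z‖)
    hGm (hm _ measurableSet_Iio) (hm _ measurableSet_Ici) (ENNReal.ofReal g) E ?_ ?_
  · rw [H1 R hR, sub_add_cancel, hNN] at key
    have k2 := ENNReal.rpow_le_rpow key (z := ((n : ℝ) - a * p) / n) (by positivity)
    refine k2.trans_eq ?_
    rw [hNN, ← ENNReal.ofReal_mul (by positivity), ← e2,
      show (2:ℝ≥0∞) = ENNReal.ofReal 2 by simp, ← ENNReal.ofReal_mul (by positivity),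
      ← ENNReal.ofReal_mul (by positivity), ENNReal.ofReal_rpow_of_nonneg (by positivity) hp0.le,
      ← ENNReal.ofReal_mul (by positivity),
      ENNReal.ofReal_rpow_of_nonneg (by positivity) (by positivity)]
  · intro x hx
    refine (hpot x hx).trans_eq ?_
    congr 2
    funext y
    congr 1
    by_cases h : ‖x - y‖ < R
    · simp [h, not_le.2 h]
    · simp [h, not_lt.1 h]
  · have h3 : ∀ z : Euc n,
        ((Ici R).indicator (fun t => ENNReal.ofReal (t ^ (a - (n:ℝ)))) ‖z‖) ^ q =
        (Ici R).indicator (fun t => ENNReal.ofReal (t ^ ((a - (n:ℝ)) * q))) ‖z‖ := by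
      intro z
      by_cases h : ‖z‖ ∈ Ici R
      · simp only [h, indicator_of_mem]
        rw [ENNReal.ofReal_rpow_of_nonneg (by positivity) hq.le, ← Real.rpow_mul (norm_nonneg z)]
      · simp [h, hq]
    simp_rw [h3]
    rw [H2 R hR, hNN, ENNReal.ofReal_rpow_of_nonneg hN.le (by positivity),
      ENNReal.ofReal_rpow_of_nonneg (by positivity) (by positivity),
      ← ENNReal.ofReal_mul (by positivity), ← ENNReal.ofReal_mul (by positivity), e1]
    rw [ENNReal.ofReal_div_of_pos (by norm_num)]
    simp

/-- capacitary estimate for Lebesgue measure, case `1 < p < ∞`, and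
absolute continuity of Lebesgue measure with respect to Riesz capacity. -/
theorem lebesgue_abs_cont_rieszCap {n : ℕ} {a p : ℝ}
    (ha : 0 < a) (hp : 1 < p) (hapn : a * p < n) :
    ∃ C : ℝ, 0 < C ∧
      (∀ (E : Set (Euc n)) (f : Euc n → ℝ),
        MemLp f (ENNReal.ofReal p) volume → (∀ x, 0 ≤ f x) →
        (∀ x ∈ E, 1 ≤ rieszPot a f x) →
        volume E ^ (p / ((n : ℝ) * p / ((n : ℝ) - a * p))) ≤
          ENNReal.ofReal C * ∫⁻ y, ENNReal.ofReal (f y) ^ p) ∧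
      ∀ E : Set (Euc n), rieszCap a p E = 0 → volume E = 0 := by
  obtain ⟨C, hC, H⟩ := rz_main ha hp hapn
  have hp0 : 0 < p := by linarith
  have hn' : (0:ℝ) < n := lt_trans (by positivity) hapn
  have hd : 0 < n - a * p := by linarith
  have he : p / ((n : ℝ) * p / ((n : ℝ) - a * p)) = ((n : ℝ) - a * p) / n := by field_simp
  refine ⟨C, hC, fun E f h1 h2 h3 => he ▸ H E f h1 h2 h3, fun E hE => ?_⟩
  have hC0 : ENNReal.ofReal C ≠ 0 := by simpa using hC
  have h : volume E ^ (((n : ℝ) - a * p) / n) / ENNReal.ofReal C ≤ rieszCap a p E := by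
    unfold rieszCap
    refine le_iInf fun f => le_iInf fun hf => ?_
    rw [ENNReal.div_le_iff hC0 ENNReal.ofReal_ne_top, mul_comm _ (ENNReal.ofReal C)]
    exact H E f hf.1 hf.2.1 hf.2.2
  rw [hE, ENNReal.div_le_iff hC0 ENNReal.ofReal_ne_top, zero_mul, nonpos_iff_eq_zero,
    ENNReal.rpow_eq_zero_iff_of_pos (by positivity)] at h
  exact h
end

section
/- Let α > 0 with α < n. There exists a constant C = C(n,α) such that for every set E ⊂ ℝⁿ and every non-negative f ∈ L¹(ℝⁿ) with (I_α * f)(x) ≥ 1 for all x ∈ E, one has |E|^{(n−α)/n} ≤ C ‖f‖_{L¹(ℝⁿ)}, where |E| denotes the Lebesgue outer measure of E. Consequently, if R_{α,1}(E) = 0 then |E| = 0. -/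
open MeasureTheory Filter Metric Set
open scoped ENNReal NNReal Topology

noncomputable def rK (n : ℕ) (a : ℝ) (x : Euc n) : ℝ≥0∞ := ENNReal.ofReal (‖x‖ ^ (a - (n : ℝ)))

lemma rK_meas (n : ℕ) (a : ℝ) : Measurable (rK n a) := by
  unfold rK; fun_prop

noncomputable def rKint (n : ℕ) (a : ℝ) : ℝ≥0∞ := ∫⁻ x, (ball (0 : Euc n) 1).indicator (rK n a) x

lemma rKint_lt_top {n : ℕ} {a : ℝ} (ha : 0 < a) (han : a < n) : rKint n a < ∞ := by
  have hn : 1 ≤ n := by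
    have : (0:ℝ) < n := ha.trans han
    exact_mod_cast this
  have h : IntegrableOn (fun x : Euc n => ‖x‖ ^ (a - (n:ℝ))) (ball 0 1) volume := by
    refine integrableOn_ball_of_norm_le_rpow (C := 1) (α := n - a) ?_ ?_ ?_ ?_
    · simpa using hn
    · simp [ha]
    · refine Eventually.of_forall fun x => ?_
      rw [Real.norm_of_nonneg (by positivity)]
      simp
    · have : Measurable (fun x : Euc n => ‖x‖ ^ (a - (n:ℝ))) := by fun_prop
      exact this.aestronglyMeasurable
  have h2 := h.lintegral_lt_top
  unfold rKint
  rw [lintegral_indicator measurableSet_ball]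
  exact h2

lemma rK_scale {n : ℕ} {a : ℝ} {r : ℝ} (hr : 0 < r) :
    ∫⁻ x, (ball (0 : Euc n) r).indicator (rK n a) x = ENNReal.ofReal (r ^ a) * rKint n a := by
  have hm : Measurable ((ball (0 : Euc n) 1).indicator (rK n a)) :=
    (rK_meas n a).indicator measurableSet_ball
  have h1 : ∀ x : Euc n, (ball (0 : Euc n) r).indicator (rK n a) x =
      ENNReal.ofReal (r ^ (a - (n:ℝ))) * (ball (0 : Euc n) 1).indicator (rK n a) (r⁻¹ • x) := by
    intro x
    have hiff : r⁻¹ • x ∈ ball (0 : Euc n) 1 ↔ x ∈ ball (0 : Euc n) r := by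
      simp only [mem_ball_zero_iff, norm_smul, norm_inv, Real.norm_of_nonneg hr.le]
      rw [inv_mul_lt_iff₀ hr, mul_one]
    by_cases hx : x ∈ ball (0 : Euc n) r
    · rw [indicator_of_mem hx, indicator_of_mem (hiff.2 hx)]
      unfold rK
      rw [← ENNReal.ofReal_mul (by positivity), norm_smul, norm_inv, Real.norm_of_nonneg hr.le,
        ← Real.mul_rpow hr.le (by positivity), mul_inv_cancel_left₀ hr.ne']
    · rw [indicator_of_notMem hx, indicator_of_notMem (fun h => hx (hiff.1 h)), mul_zero]
  have h2 : ∫⁻ x : Euc n, (ball (0 : Euc n) 1).indicator (rK n a) (r⁻¹ • x) =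
      ENNReal.ofReal (r ^ (n:ℝ)) * rKint n a := by
    have := Measure.map_addHaar_smul (volume : Measure (Euc n)) (inv_ne_zero hr.ne')
    rw [← lintegral_map hm (measurable_const_smul r⁻¹), this, lintegral_smul_measure]
    simp only [finrank_euclideanSpace, Fintype.card_fin, inv_pow, inv_inv, smul_eq_mul]
    rw [abs_of_nonneg (by positivity), Real.rpow_natCast]
    rfl
  simp_rw [h1]
  rw [lintegral_const_mul _ (by fun_prop), h2, ← mul_assoc,
    ← ENNReal.ofReal_mul (by positivity), ← Real.rpow_add hr]
  simp

lemma rK_set {n : ℕ} {a : ℝ} (ha : 0 < a) (han : a < n) {F : Set (Euc n)} (hF : MeasurableSet F)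
    (hfin : volume F ≠ ∞) (h0 : volume F ≠ 0) (y : Euc n) :
    ∫⁻ x in F, rK n a (x - y) ≤ (rKint n a + 1) * volume F ^ (a / (n:ℝ)) := by
  have hn : (0:ℝ) < n := ha.trans han
  set v := (volume F).toReal with hv
  have hv0 : 0 < v := ENNReal.toReal_pos h0 hfin
  have hvF : volume F = ENNReal.ofReal v := (ENNReal.ofReal_toReal hfin).symm
  set r := v ^ (1 / (n:ℝ)) with hr
  have hr0 : 0 < r := by positivity
  have hm : Measurable ((ball (0 : Euc n) r).indicator (rK n a)) :=
    (rK_meas n a).indicator measurableSet_ball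
  have hpt : ∀ x, rK n a (x - y) ≤
      (ball (0 : Euc n) r).indicator (rK n a) (x - y) + ENNReal.ofReal (r ^ (a - (n:ℝ))) := by
    intro x
    by_cases hx : x - y ∈ ball (0 : Euc n) r
    · rw [indicator_of_mem hx]; exact le_self_add
    · refine le_add_left ?_
      apply ENNReal.ofReal_le_ofReal
      apply Real.rpow_le_rpow_of_nonpos hr0 _ (by linarith)
      simpa using hx
  calc ∫⁻ x in F, rK n a (x - y)
      ≤ ∫⁻ x in F, ((ball (0 : Euc n) r).indicator (rK n a) (x - y)
          + ENNReal.ofReal (r ^ (a - (n:ℝ)))) := lintegral_mono hpt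
    _ = (∫⁻ x in F, (ball (0 : Euc n) r).indicator (rK n a) (x - y))
          + ENNReal.ofReal (r ^ (a - (n:ℝ))) * volume F := by
        rw [lintegral_add_right _ measurable_const, setLIntegral_const]
    _ ≤ (∫⁻ x, (ball (0 : Euc n) r).indicator (rK n a) (x - y))
          + ENNReal.ofReal (r ^ (a - (n:ℝ))) * volume F := by
        exact add_le_add_left (setLIntegral_le_lintegral _ _) _
    _ = ENNReal.ofReal (r ^ a) * rKint n a + ENNReal.ofReal (r ^ (a - (n:ℝ))) * volume F := by
        rw [lintegral_sub_right_eq_self (fun x => (ball (0 : Euc n) r).indicator (rK n a) x) y,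
          rK_scale hr0]
    _ = (rKint n a + 1) * volume F ^ (a / (n:ℝ)) := by
        have e1 : r ^ a = v ^ (a / (n:ℝ)) := by
          rw [hr, ← Real.rpow_mul hv0.le]; congr 1; field_simp
        have e2 : r ^ (a - (n:ℝ)) * v = v ^ (a / (n:ℝ)) := by
          rw [hr, ← Real.rpow_mul hv0.le]
          nth_rewrite 2 [← Real.rpow_one v]
          rw [← Real.rpow_add hv0]; congr 1; field_simp; ring
        rw [hvF, ← ENNReal.ofReal_mul (by positivity), e1, e2, ENNReal.ofReal_rpow_of_pos hv0]
        ring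

lemma rieszGamma_pos {n : ℕ} {a : ℝ} (ha : 0 < a) (han : a < n) : 0 < rieszGamma n a := by
  unfold rieszGamma
  have h1 : 0 < Real.Gamma (a / 2) := Real.Gamma_pos_of_pos (by linarith)
  have h2 : 0 < Real.Gamma (((n : ℝ) - a) / 2) := Real.Gamma_pos_of_pos (by linarith)
  have := Real.pi_pos
  positivity

lemma rK_main {n : ℕ} {a : ℝ} (ha : 0 < a) (han : a < n) {F : Set (Euc n)} (hF : MeasurableSet F)
    (hfin : volume F ≠ ∞) {g : Euc n → ℝ≥0∞} (hg : Measurable g) {c : ℝ≥0∞}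
    (h : ∀ x ∈ F, 1 ≤ c * ∫⁻ y, g y * rK n a (x - y)) :
    volume F ^ (((n:ℝ) - a) / (n:ℝ)) ≤ c * (rKint n a + 1) * ∫⁻ y, g y := by
  have hn : (0:ℝ) < n := ha.trans han
  by_cases h0 : volume F = 0
  · rw [h0, ENNReal.zero_rpow_of_pos (div_pos (by linarith) hn)]; exact zero_le
  have hm : Measurable (Function.uncurry fun (x y : Euc n) => g y * rK n a (x - y)) := by
    have := rK_meas n a
    unfold Function.uncurry
    fun_prop
  have hm1 : Measurable (fun x : Euc n => ∫⁻ y, g y * rK n a (x - y)) := hm.lintegral_prod_right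
  have key : volume F ≤ c * (rKint n a + 1) * (∫⁻ y, g y) * volume F ^ (a / (n:ℝ)) := by
    calc volume F = ∫⁻ x in F, 1 := by simp
      _ ≤ ∫⁻ x in F, c * ∫⁻ y, g y * rK n a (x - y) := setLIntegral_mono' hF h
      _ = c * ∫⁻ x in F, ∫⁻ y, g y * rK n a (x - y) := lintegral_const_mul _ hm1
      _ = c * ∫⁻ y, ∫⁻ x in F, g y * rK n a (x - y) := by
          rw [lintegral_lintegral_swap hm.aemeasurable]
      _ = c * ∫⁻ y, g y * ∫⁻ x in F, rK n a (x - y) := by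
          congr 1
          refine lintegral_congr fun y => ?_
          exact lintegral_const_mul _ ((rK_meas n a).comp (measurable_id.sub_const y))
      _ ≤ c * ∫⁻ y, g y * ((rKint n a + 1) * volume F ^ (a / (n:ℝ))) := by
          gcongr with y
          exact rK_set ha han hF hfin h0 y
      _ = _ := by
          rw [lintegral_mul_const _ hg]; ring
  have hp0 : volume F ^ (a / (n:ℝ)) ≠ 0 := by
    rw [Ne, ENNReal.rpow_eq_zero_iff]; simp [h0, hfin]
  have hp1 : volume F ^ (a / (n:ℝ)) ≠ ∞ := ENNReal.rpow_ne_top_of_nonneg (by positivity) hfin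
  have e : volume F = volume F ^ (((n:ℝ) - a) / (n:ℝ)) * volume F ^ (a / (n:ℝ)) := by
    rw [← ENNReal.rpow_add _ _ h0 hfin]
    have : ((n:ℝ) - a) / (n:ℝ) + a / (n:ℝ) = 1 := by field_simp; ring
    rw [this, ENNReal.rpow_one]
  rw [e] at key
  nth_rewrite 2 [← e] at key
  exact (ENNReal.mul_le_mul_iff_left hp0 hp1).1 key

lemma rK_main' {n : ℕ} {a : ℝ} (ha : 0 < a) (han : a < n) {E : Set (Euc n)}
    {g : Euc n → ℝ≥0∞} (hg : Measurable g) {c : ℝ≥0∞}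
    (h : ∀ x ∈ E, 1 ≤ c * ∫⁻ y, g y * rK n a (x - y)) :
    volume E ^ (((n:ℝ) - a) / (n:ℝ)) ≤ c * (rKint n a + 1) * ∫⁻ y, g y := by
  have hn : (0:ℝ) < n := ha.trans han
  have hs : 0 < ((n:ℝ) - a) / (n:ℝ) := div_pos (by linarith) hn
  have hm : Measurable (Function.uncurry fun (x y : Euc n) => g y * rK n a (x - y)) := by
    have := rK_meas n a
    unfold Function.uncurry
    fun_prop
  have hm1 : Measurable (fun x : Euc n => c * ∫⁻ y, g y * rK n a (x - y)) :=
    hm.lintegral_prod_right.const_mul c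
  set G := {x : Euc n | 1 ≤ c * ∫⁻ y, g y * rK n a (x - y)} with hG
  have hGm : MeasurableSet G := measurableSet_le measurable_const hm1
  have hb : ∀ k : ℕ, volume (G ∩ ball 0 k) ^ (((n:ℝ) - a) / (n:ℝ)) ≤
      c * (rKint n a + 1) * ∫⁻ y, g y := fun k =>
    rK_main ha han (hGm.inter measurableSet_ball)
      ((measure_mono inter_subset_right).trans_lt measure_ball_lt_top).ne hg (fun x hx => hx.1)
  have hE : volume E ≤ ⨆ k : ℕ, volume (G ∩ ball 0 k) := by
    rw [← Monotone.measure_iUnion]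
    · refine measure_mono fun x hx => ?_
      rw [← inter_iUnion, iUnion_ball_nat]
      exact ⟨h x hx, trivial⟩
    · intro i j hij
      exact inter_subset_inter_right _ (ball_subset_ball (by exact_mod_cast hij))
  rw [← ENNReal.le_rpow_inv_iff hs]
  refine hE.trans (iSup_le fun k => ?_)
  rw [ENNReal.le_rpow_inv_iff hs]
  exact hb k

/-- capacitary estimate for Lebesgue measure, case `p = 1`, and
absolute continuity of Lebesgue measure with respect to the capacity `R_{α,1}`. -/
theorem lebesgue_abs_cont_rieszCap_one {n : ℕ} {a : ℝ}
    (ha : 0 < a) (han : a < n) :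
    ∃ C : ℝ, 0 < C ∧
      (∀ (E : Set (Euc n)) (f : Euc n → ℝ),
        MemLp f 1 volume → (∀ x, 0 ≤ f x) →
        (∀ x ∈ E, 1 ≤ rieszPot a f x) →
        volume E ^ (((n : ℝ) - a) / (n : ℝ)) ≤
          ENNReal.ofReal C * ∫⁻ y, ENNReal.ofReal (f y)) ∧
      ∀ E : Set (Euc n), rieszCap a 1 E = 0 → volume E = 0 := by
  have hn : (0:ℝ) < n := ha.trans han
  have hs : 0 < ((n:ℝ) - a) / (n:ℝ) := div_pos (by linarith) hn
  have hγ := rieszGamma_pos ha han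
  have hK := rKint_lt_top ha han
  have main : ∀ (E : Set (Euc n)) (f : Euc n → ℝ),
        MemLp f 1 volume → (∀ x, 0 ≤ f x) →
        (∀ x ∈ E, 1 ≤ rieszPot a f x) →
        volume E ^ (((n : ℝ) - a) / (n : ℝ)) ≤
          ENNReal.ofReal ((rieszGamma n a)⁻¹ * ((rKint n a).toReal + 1)) *
            ∫⁻ y, ENNReal.ofReal (f y) := by
    intro E f hf _ hE
    have hfm : AEMeasurable (fun y => ENNReal.ofReal (f y)) volume :=
      hf.1.aemeasurable.ennreal_ofReal
    have hae := hfm.ae_eq_mk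
    have e : ENNReal.ofReal ((rieszGamma n a)⁻¹ * ((rKint n a).toReal + 1)) =
        (ENNReal.ofReal (rieszGamma n a))⁻¹ * (rKint n a + 1) := by
      rw [ENNReal.ofReal_mul (by positivity), ENNReal.ofReal_inv_of_pos hγ,
        ENNReal.ofReal_add (by positivity) (by positivity), ENNReal.ofReal_toReal hK.ne,
        ENNReal.ofReal_one]
    rw [e, lintegral_congr_ae hae]
    refine rK_main' ha han hfm.measurable_mk fun x hx => (hE x hx).trans_eq ?_
    unfold rieszPot
    congr 1
    refine lintegral_congr_ae ?_
    filter_upwards [hae] with y hy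
    rw [← hy]
    rfl
  refine ⟨(rieszGamma n a)⁻¹ * ((rKint n a).toReal + 1), by positivity, main, ?_⟩
  intro E hE
  set C := (rieszGamma n a)⁻¹ * ((rKint n a).toReal + 1)
  have hle : volume E ^ (((n : ℝ) - a) / (n : ℝ)) ≤ ENNReal.ofReal C * rieszCap a 1 E := by
    unfold rieszCap
    rw [ENNReal.mul_iInf_of_ne (by simp; positivity) (by simp)]
    refine le_iInf fun g => ?_
    rw [ENNReal.mul_iInf_of_ne (by simp; positivity) (by simp)]
    refine le_iInf fun hg => ?_
    simp only [ENNReal.rpow_one]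
    exact main E g (by simpa using hg.1) hg.2.1 hg.2.2
  rw [hE, mul_zero, nonpos_iff_eq_zero, ENNReal.rpow_eq_zero_iff] at hle
  rcases hle with h | h
  · exact h.1
  · linarith [h.2]
end
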